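/- Assume q > 2* = 2n/(n-2) and K₁ < 0 < K₂. Then there is a strictly increasing sequence (D_k)_{k≥0} of positive numbers converging to a finite limit D_∞ such that: (i) u(·,D₀) is defined and positive on (0,∞) and lim_{r→∞} u(r,D₀) r^{n-2} = L for some L ∈ (0,∞) (a ground state with fast decay); (ii) for every k ≥ 1, u(·,D_k) is defined on (0,∞), has exactly k zeros in (0,∞), all nondegenerate, and lim_{r→∞} u(r,D_k) r^{n-2} exists, finite and nonzero; (iii) for every d ∈ (0,D₀), u(·,d) is defined and positive on (0,∞), lim_{r→∞} u(r,d) = 0 and lim_{r→∞} u(r,d) r^{n-2} = +∞ (a ground state with slow decay); (iv) for every k ≥ 1 and every d ∈ (D_{k-1},D_k), u(·,d) is defined on (0,∞), has exactly k zeros in (0,∞), all nondegenerate, and lim_{r→∞} |u(r,d)| r^{n-2} = +∞. -/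

import Mathlib

/-!
The Fowler transformation `u(r) = r^{-α} x(log r)` with `α = 2/(q-2)` and `β = n - 2 - α` makes the
equation autonomous on each side of `r = 1`. In the outer region, `t > 0`, it becomes the
oscillator `x'' + A x' - B x + K₂ x|x|^(q-2) = 0` with `A = β - α` and `B = αβ`. The exponent `q` is
supercritical exactly when `A > 0`, so the energy `En` is a Lyapunov function. Fast decay of `u`
means `x ~ L exp(-βt)`, and slow decay means that `x` stays away from zero.

**The outer flow.** An orbit starting in `x ≥ 0`, `y = x' > 0` is of one of three types
(`Sol.trichotomy`): it exits `x > 0` through the negative `y`-axis (Z); or it stays in `x > 0` and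
its energy becomes negative, which keeps it away from the origin (S); or it stays in `x > 0` with
nonnegative energy (F). In the last case it tends to the origin at the rate `exp(-βt)`
(`Sol.F_fast`), and there is only one such orbit up to time translation (`Sol.F_meet`). Orbits of
small energy leaving the `y`-axis are of type S (`Sol.drop`), and orbits of high energy are of type
Z and exit with high energy (`Sol.large`).

**Sections.** Consider a curve of initial data, transversal in the sense that orbits do not return
to it, joining the S region to infinite energy (`Section`). Types S and Z are open and F occurs for
at most one parameter, so there is a threshold `σ` with S below, F at `σ` and Z above; the
exit point moves strictly monotonically from `0` to infinity (`Section.main`). Applied to the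
positive `y`-axis, and combined with the symmetry `x ↦ -x`, this gives inductively the heights `η k`
at which orbits have `k` further zeros and decay fast (`exists_ladder`). Every section inherits such
a ladder of parameters (`Section.ladder`).

**The inner region.** For `r < 1`, where `k = K₁ < 0`, the regular solutions sweep out a single curve
`y = x h(log x)`, whose slope `h` is an ancient solution of a scalar equation squeezed between two
barriers (`ancient`, `exists_slope`). The value at the origin of the solution reaching `x = e^s` at
`r = 1` is `exp(ψ s)` with `ψ' = α/h`; since `h` grows exponentially, `ψ` is bounded above, and this
is why the limit of the `D k` is finite. The curve is a section for the outer flow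
(`exists_gamma`): the sign change of `k` makes every outer orbit cross it in the same direction.

The heights of the ladder on this section are the `D k = exp(ψ(s k))`. The regular solution is
unique by a Gronwall argument (`regSol_unique`), so the statements hold for every regular solution.
-/

open Real Filter Topology Set

noncomputable section

/-- A solution of (Lr): C¹ on (0,∞), C² away from r = 1, satisfying the equation for r ≠ 1. -/
def IsSolLr (n : ℕ) (q K₁ K₂ : ℝ) (u : ℝ → ℝ) : Prop :=
  ContDiffOn ℝ 1 u (Ioi 0) ∧ ContDiffOn ℝ 2 u (Ioo 0 1) ∧ ContDiffOn ℝ 2 u (Ioi 1) ∧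
  ∀ r ∈ Ioi (0:ℝ), r ≠ 1 →
    deriv (deriv u) r + ((n:ℝ) - 1) / r * deriv u r +
      (if r ≤ 1 then K₁ else K₂) * u r * |u r| ^ (q - 2) = 0

/-- The regular solution with u(0) = d, u'(0) = 0. -/
def IsRegSol (n : ℕ) (q K₁ K₂ d : ℝ) (u : ℝ → ℝ) : Prop :=
  IsSolLr n q K₁ K₂ u ∧ Tendsto u (𝓝[>] 0) (𝓝 d) ∧ Tendsto (deriv u) (𝓝[>] 0) (𝓝 0)

/-- u has exactly k zeros in (0,∞), all nondegenerate. -/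
def ExactZeros (u : ℝ → ℝ) (k : ℕ) : Prop :=
  ∃ Z : Finset ℝ, Z.card = k ∧ (∀ r ∈ Z, 0 < r ∧ u r = 0 ∧ deriv u r ≠ 0) ∧
    ∀ r : ℝ, 0 < r → u r = 0 → r ∈ Z

/-! ### Elementary tools: barriers and global solvability -/

/-- A barrier principle: a function that can only cross the level `0` downwards stays below it. -/
lemma stay_neg {g g' : ℝ → ℝ} {a b : ℝ} (hg : ∀ t ∈ Icc a b, HasDerivAt g (g' t) t)
    (ha : g a ≤ 0) (hz : ∀ t ∈ Icc a b, g t = 0 → g' t < 0) :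
    ∀ t ∈ Ioc a b, g t < 0 := by
  have hle : ∀ t ∈ Icc a b, g t ≤ 0 := by
    intro t ht
    refine image_le_of_deriv_right_lt_deriv_boundary (f := g) (f' := g') (B := fun _ => (0:ℝ))
      (B' := fun _ => (0:ℝ)) (fun s hs => (hg s hs).continuousAt.continuousWithinAt)
      (fun s hs => (hg s (Ico_subset_Icc_self hs)).hasDerivWithinAt) ha
      (fun s => hasDerivAt_const s 0) (fun s hs h => hz s (Ico_subset_Icc_self hs) h) ht
  intro t ht
  have htI := Ioc_subset_Icc_self ht
  rcases (hle t htI).lt_or_eq with h | h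
  · exact h
  exfalso
  have hd := hz t htI h
  have hsl := (hg t htI).hasDerivWithinAt (s := Iio t)
  rw [hasDerivWithinAt_iff_tendsto_slope' (by simp)] at hsl
  have h1 := hsl.eventually (gt_mem_nhds hd)
  have h2 : ∀ᶠ s in 𝓝[<] t, s ∈ Ioo a t := Ioo_mem_nhdsLT ht.1
  obtain ⟨s, hs1, hs2⟩ := (h1.and h2).exists
  rw [slope_def_field, h] at hs1
  have h3 := hle s ⟨hs2.1.le, hs2.2.le.trans ht.2⟩
  have : 0 ≤ (g s - 0) / (s - t) :=
    div_nonneg_of_nonpos (by linarith) (by linarith [hs2.2])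
  linarith

/-- A bounded vector field, continuous in time and locally uniformly Lipschitz in space, has a
global integral curve through every point. -/
lemma ode_global {E : Type*} [NormedAddCommGroup E] [NormedSpace ℝ E] [CompleteSpace E]
    (v : ℝ → E → E)
    (hl : ∀ T : ℝ, ∃ K : NNReal, ∀ t ∈ Icc (-T) T, LipschitzWith K (v t))
    (hc : ∀ x, Continuous (fun t => v t x))
    (hb : ∀ T : ℝ, ∃ L : NNReal, ∀ t ∈ Icc (-T) T, ∀ x, ‖v t x‖ ≤ L) (x₀ : E) :
    ∃ f : ℝ → E, f 0 = x₀ ∧ ∀ t, HasDerivAt f (v t (f t)) t := by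
  have loc : ∀ N : ℕ, ∃ f : ℝ → E, f 0 = x₀ ∧ ∀ t ∈ Ioo (-((N:ℝ)+1)) ((N:ℝ)+1),
      HasDerivAt f (v t (f t)) t := by
    intro N
    obtain ⟨K, hK⟩ := hl ((N:ℝ)+1)
    obtain ⟨L, hL⟩ := hb ((N:ℝ)+1)
    have hN : (0:ℝ) < (N:ℝ)+1 := by positivity
    have pl : IsPicardLindelof v (tmin := -((N:ℝ)+1)) (tmax := (N:ℝ)+1)
        ⟨0, by constructor <;> linarith⟩ x₀ (L * ((N:NNReal)+1)) 0 L K :=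
      { lipschitzOnWith := fun t ht => (hK t ht).lipschitzOnWith
        continuousOn := fun x _ => (hc x).continuousOn
        norm_le := fun t ht x _ => hL t ht x
        mul_max_le := by simp }
    obtain ⟨f, hf0, hf⟩ := pl.exists_eq_forall_mem_Icc_hasDerivWithinAt₀
    exact ⟨f, hf0, fun t ht => (hf t (Ioo_subset_Icc_self ht)).hasDerivAt (Icc_mem_nhds ht.1 ht.2)⟩
  choose f hf0 hf using loc
  have agree : ∀ N M : ℕ, N ≤ M → ∀ t ∈ Ioo (-((N:ℝ)+1)) ((N:ℝ)+1), f N t = f M t := by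
    intro N M hNM t ht
    obtain ⟨K, hK⟩ := hl ((N:ℝ)+1)
    have hN : (0:ℝ) < (N:ℝ)+1 := by positivity
    have hNM' : (N:ℝ) ≤ M := by exact_mod_cast hNM
    exact ODE_solution_unique_of_mem_Ioo (s := fun _ => univ) (t₀ := 0)
      (fun s hs => (hK s (Ioo_subset_Icc_self hs)).lipschitzOnWith)
      ⟨by linarith, hN⟩ (fun s hs => ⟨hf N s hs, trivial⟩)
      (fun s hs => ⟨hf M s ⟨by linarith [hs.1], by linarith [hs.2]⟩, trivial⟩)
      (by rw [hf0, hf0]) ht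
  refine ⟨fun t => f ⌈|t|⌉₊ t, by simp [hf0], fun t => ?_⟩
  set M := ⌈|t|⌉₊ + 1 with hM
  have hMt : |t| < M := by
    have := Nat.le_ceil |t|
    push_cast [hM]; linarith
  have hmem : ∀ s : ℝ, |s| ≤ M → f ⌈|s|⌉₊ s = f M s := by
    intro s hs
    apply agree _ _ (Nat.ceil_le.2 hs)
    have := Nat.le_ceil |s|
    have h2 := abs_lt.1 (show |s| < (⌈|s|⌉₊:ℝ) + 1 by linarith)
    exact ⟨h2.1, h2.2⟩
  have h1 : HasDerivAt (f M) (v t (f M t)) t := by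
    apply hf
    have h2 := abs_lt.1 hMt
    constructor <;> linarith [h2.1, h2.2]
  rw [← hmem t hMt.le] at h1
  refine h1.congr_of_eventuallyEq ?_
  have : ∀ᶠ s : ℝ in 𝓝 t, |s| < (M:ℝ) := continuous_abs.continuousAt.eventually (gt_mem_nhds hMt)
  filter_upwards [this] with s hs using hmem s hs.le

/-! ### The autonomous system in the outer region -/

/-- The signed power `x |x|^(q-2)`. -/
def gq (q x : ℝ) : ℝ := x * |x| ^ (q - 2)

/-- Coefficients of the damped oscillator `x'' + A x' - B x + K x |x|^(q-2) = 0`. -/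
structure Par where
  A : ℝ
  B : ℝ
  K : ℝ
  q : ℝ
  hA : 0 < A
  hB : 0 < B
  hK : 0 < K
  hq : 2 < q

lemma gq_hasDerivAt {q : ℝ} (hq : 2 < q) (x : ℝ) :
    HasDerivAt (gq q) ((q - 1) * |x| ^ (q - 2)) x := by
  rcases eq_or_ne x 0 with rfl | hx
  · rw [hasDerivAt_iff_tendsto_slope]
    have h1 : Tendsto (fun x : ℝ => |x| ^ (q - 2)) (𝓝[≠] 0) (𝓝 (|(0:ℝ)| ^ (q - 2))) := by
      have : ContinuousAt (fun x : ℝ => |x| ^ (q - 2)) 0 :=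
        (continuous_abs.rpow_const (fun _ => Or.inr (by linarith))).continuousAt
      exact this.tendsto.mono_left nhdsWithin_le_nhds
    have h0 : |(0:ℝ)| ^ (q - 2) = 0 := by rw [abs_zero, zero_rpow (by linarith)]
    rw [h0] at h1 ⊢
    rw [mul_zero]
    refine h1.congr' ?_
    filter_upwards [self_mem_nhdsWithin] with y hy
    have hy : y ≠ 0 := hy
    rw [slope_def_field, gq, gq]; field_simp; simp
  · have h1 := ((hasDerivAt_abs hx).rpow_const (p := q - 2) (Or.inl (abs_ne_zero.2 hx)))
    have h2 := (hasDerivAt_id x).mul h1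
    refine h2.congr_deriv ?_
    have h3 : |x| ^ (q - 2) = |x| ^ (q - 2 - 1) * |x| := by
      rw [rpow_sub_one (abs_ne_zero.2 hx)]; field_simp
    have h4 : x * (SignType.sign x : ℝ) = |x| := by
      rw [mul_comm]; exact sign_mul_self x
    simp only [id]
    linear_combination (q - 2) * |x| ^ (q - 2 - 1) * h4 - (q-2) * h3

lemma gq_neg (q x : ℝ) : gq q (-x) = - gq q x := by simp [gq]

@[simp] lemma gq_zero (q : ℝ) : gq q 0 = 0 := by simp [gq]

lemma gq_pos_eq {q x : ℝ} (hx : 0 < x) : gq q x = x ^ (q - 1) := by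
  rw [gq, abs_of_pos hx, show q - 1 = 1 + (q - 2) by ring, rpow_add hx, rpow_one]

lemma gq_contDiff {q : ℝ} (hq : 2 < q) : ContDiff ℝ 1 (gq q) := by
  rw [contDiff_one_iff_deriv]
  refine ⟨fun x => (gq_hasDerivAt hq x).differentiableAt, ?_⟩
  have : deriv (gq q) = fun x => (q - 1) * |x| ^ (q - 2) := by
    ext x; exact (gq_hasDerivAt hq x).deriv
  rw [this]
  exact continuous_const.mul (continuous_abs.rpow_const (fun _ => Or.inr (by linarith)))

namespace Par

/-- The vector field of the first-order system. -/
def fld (p : Par) (z : ℝ × ℝ) : ℝ × ℝ := (z.2, p.B * z.1 - p.A * z.2 - p.K * gq p.q z.1)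

/-- The energy, a Lyapunov function. -/
def En (p : Par) (x y : ℝ) : ℝ := y ^ 2 / 2 - p.B * x ^ 2 / 2 + p.K / p.q * |x| ^ p.q

/-- `(x, y)` solves the system on `[0, ∞)`. -/
def Sol (p : Par) (x y : ℝ → ℝ) : Prop :=
  ∀ t, 0 ≤ t → HasDerivAt x (y t) t ∧
    HasDerivAt y (p.B * x t - p.A * y t - p.K * gq p.q (x t)) t

lemma fld_contDiff (p : Par) : ContDiff ℝ 1 p.fld := by
  unfold fld
  have := (gq_contDiff p.hq).comp (contDiff_fst (𝕜 := ℝ) (E := ℝ) (F := ℝ))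
  have h2 : ContDiff ℝ 1 (fun z : ℝ × ℝ => gq p.q z.1) := this
  fun_prop

lemma fld_lip (p : Par) (R : ℝ) : ∃ L, LipschitzOnWith L p.fld (Metric.closedBall 0 R) :=
  p.fld_contDiff.contDiffOn.exists_lipschitzOnWith (by norm_num) (convex_closedBall 0 R)
    (isCompact_closedBall 0 R)

lemma mem_box {R x y : ℝ} (hx : |x| ≤ R) (hy : |y| ≤ R) :
    ((x, y) : ℝ × ℝ) ∈ Metric.closedBall (0 : ℝ × ℝ) R := by
  rw [mem_closedBall_zero_iff, Prod.norm_def]; simp [hx, hy]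

lemma En_deriv (p : Par) {x y : ℝ → ℝ} {t : ℝ} (hx : HasDerivAt x (y t) t)
    (hy : HasDerivAt y (p.B * x t - p.A * y t - p.K * gq p.q (x t)) t) :
    HasDerivAt (fun s => p.En (x s) (y s)) (-p.A * y t ^ 2) t := by
  have h1 := (hasDerivAt_abs_rpow (x t) (p := p.q) (by linarith [p.hq])).comp t hx
  have h2 := (((hy.pow 2).div_const 2).sub (((hx.pow 2).const_mul p.B).div_const 2)).add
    (h1.const_mul (p.K / p.q))
  refine h2.congr_deriv ?_
  have := p.hq
  have hq0 : p.q ≠ 0 := by linarith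
  simp only [gq]
  field_simp
  ring

/-- Sublevel sets of the energy are bounded. -/
lemma box (p : Par) (e : ℝ) : ∃ R > 0, ∀ x y, p.En x y ≤ e → |x| < R ∧ |y| < R := by
  set X := (p.q / p.K * (p.B / 2 + 1)) ^ (1 / (p.q - 2)) with hX
  have hq := p.hq
  have hK := p.hK
  have hB := p.hB
  have hc : 0 < p.q / p.K * (p.B / 2 + 1) := by
    have : 0 < p.q := by linarith
    positivity
  have hX0 : 0 < X := rpow_pos_of_pos hc _
  set R1 := X + |e| + 1 with hR1
  have hx1 : ∀ x y, p.En x y ≤ e → |x| ≤ R1 := by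
    intro x y h
    by_contra hcon
    push Not at hcon
    have he := abs_nonneg e
    have h1 : X ≤ |x| := by linarith
    have h2 : p.q / p.K * (p.B / 2 + 1) ≤ |x| ^ (p.q - 2) := by
      have := rpow_le_rpow hX0.le h1 (show 0 ≤ p.q - 2 by linarith)
      rwa [hX, ← rpow_mul hc.le, one_div_mul_cancel (by linarith), rpow_one] at this
    have h3 : |x| ^ p.q = |x| ^ 2 * |x| ^ (p.q - 2) := by
      rw [← rpow_natCast, ← rpow_add (by linarith)]; norm_num
    have h4 : (p.B / 2 + 1) ≤ p.K / p.q * |x| ^ (p.q - 2) := by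
      have : 0 < p.q := by linarith
      calc p.B / 2 + 1 = p.K / p.q * (p.q / p.K * (p.B / 2 + 1)) := by field_simp
        _ ≤ _ := by gcongr
    unfold En at h
    rw [h3, ← sq_abs x] at h
    have h5 : |x| ^ 2 * (p.B / 2 + 1) ≤ |x| ^ 2 * (p.K / p.q * |x| ^ (p.q - 2)) := by gcongr
    have := le_abs_self e
    nlinarith [sq_nonneg y]
  have hR1p : 0 < R1 := by positivity
  refine ⟨R1 + 2 + 2 * |e| + p.B * R1 ^ 2, by positivity, fun x y h => ?_⟩
  have h1 := hx1 x y h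
  have h0 : (0:ℝ) ≤ |x| := abs_nonneg x
  have h2 : |x| ^ 2 ≤ R1 ^ 2 := by gcongr
  have h3 : 0 ≤ p.B * R1 ^ 2 := by positivity
  refine ⟨by linarith [abs_nonneg e], ?_⟩
  unfold En at h
  have h4 : 0 ≤ p.K / p.q * |x| ^ p.q := by
    have : 0 < p.q := by linarith
    positivity
  rw [← sq_abs x, ← sq_abs y] at h
  have h5 : p.B * |x| ^ 2 ≤ p.B * R1 ^ 2 := by gcongr
  nlinarith [sq_nonneg (|y| - 1), le_abs_self e]

/-- Clamping to `[-R, R]`. -/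
def cl (R s : ℝ) : ℝ := max (-R) (min R s)

lemma cl_lip (R : ℝ) : LipschitzWith 1 (cl R) := (LipschitzWith.id.const_min R).const_max (-R)

lemma cl_abs {R : ℝ} (hR : 0 ≤ R) (s : ℝ) : |cl R s| ≤ R := by
  rw [abs_le]; exact ⟨le_max_left _ _, max_le (by linarith) (min_le_left _ _)⟩

lemma cl_eq {R s : ℝ} (h : |s| ≤ R) : cl R s = s := by
  rw [abs_le] at h; rw [cl, min_eq_right h.2, max_eq_right h.1]

/-- Every initial value starts a solution on `[0, ∞)`: the energy confines orbits to a box, so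
truncating the field outside that box changes nothing. -/
lemma exists_sol (p : Par) (x0 y0 : ℝ) : ∃ x y, p.Sol x y ∧ x 0 = x0 ∧ y 0 = y0 := by
  obtain ⟨R, hR, hbox⟩ := p.box (p.En x0 y0)
  obtain ⟨L, hL⟩ := p.fld_lip R
  set pr : ℝ × ℝ → ℝ × ℝ := fun z => (cl R z.1, cl R z.2) with hpr
  have hprl : LipschitzWith 1 pr := by
    have h1 : LipschitzWith (1 * 1) (fun z : ℝ × ℝ => cl R z.1) :=
      (cl_lip R).comp LipschitzWith.prod_fst
    have h2 : LipschitzWith (1 * 1) (fun z : ℝ × ℝ => cl R z.2) :=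
      (cl_lip R).comp LipschitzWith.prod_snd
    simpa using h1.prodMk h2
  have hprm : ∀ z, pr z ∈ Metric.closedBall (0 : ℝ × ℝ) R := fun z =>
    mem_box (cl_abs hR.le _) (cl_abs hR.le _)
  have hv : LipschitzWith (L * 1) (fun z => p.fld (pr z)) := by
    rw [← lipschitzOnWith_univ]
    exact hL.comp hprl.lipschitzOnWith (fun z _ => hprm z)
  obtain ⟨M, hM⟩ := (isCompact_closedBall (0 : ℝ × ℝ) R).exists_bound_of_continuousOn
    p.fld_contDiff.continuous.continuousOn
  obtain ⟨f, hf0, hf⟩ := ode_global (fun _ z => p.fld (pr z)) (fun _ => ⟨_, fun _ _ => hv⟩)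
    (fun _ => continuous_const)
    (fun _ => ⟨M.toNNReal, fun _ _ z => (hM _ (hprm z)).trans (le_coe_toNNReal M)⟩) (x0, y0)
  have hfc : Continuous f := continuous_iff_continuousAt.2 fun t => (hf t).continuousAt
  have real : ∀ t, |(f t).1| ≤ R → |(f t).2| ≤ R →
      HasDerivAt (fun s => (f s).1) (f t).2 t ∧ HasDerivAt (fun s => (f s).2)
      (p.B * (f t).1 - p.A * (f t).2 - p.K * gq p.q (f t).1) t := by
    intro t h1 h2
    have h := hf t
    have h3 : pr (f t) = f t := by rw [hpr]; simp only [cl_eq h1, cl_eq h2]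
    simp only [h3] at h
    have ha : HasDerivAt (fun s => (f s).1) (p.fld (f t)).1 t :=
      (hasFDerivAt_fst (𝕜 := ℝ) (E := ℝ) (F := ℝ) (p := f t)).comp_hasDerivAt t h
    have hb : HasDerivAt (fun s => (f s).2) (p.fld (f t)).2 t :=
      (hasFDerivAt_snd (𝕜 := ℝ) (E := ℝ) (F := ℝ) (p := f t)).comp_hasDerivAt t h
    exact ⟨ha, hb⟩
  have inside : ∀ t, 0 ≤ t → max |(f t).1| |(f t).2| < R := by
    by_contra hcon
    push Not at hcon
    set S := {t | 0 ≤ t ∧ R ≤ max |(f t).1| |(f t).2|} with hS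
    have hSc : IsClosed S := by
      refine IsClosed.and (isClosed_le continuous_const continuous_id)
        (isClosed_le continuous_const (by fun_prop))
    have hSb : BddBelow S := ⟨0, fun t ht => ht.1⟩
    have hT := hSc.csInf_mem hcon hSb
    set T := sInf S
    have hlt : ∀ t ∈ Ico 0 T, max |(f t).1| |(f t).2| < R := by
      intro t ht
      by_contra h
      push Not at h
      exact absurd (csInf_le hSb (show t ∈ S from ⟨ht.1, h⟩)) (not_le.2 ht.2)
    have hle : max |(f T).1| |(f T).2| ≤ R := by
      by_contra h
      push Not at h
      have hev : ∀ᶠ s in 𝓝 T, R < max |(f s).1| |(f s).2| :=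
        (show ContinuousAt (fun s => max |(f s).1| |(f s).2|) T by fun_prop).eventually
          (lt_mem_nhds h)
      rcases hT.1.eq_or_lt with h0 | h0
      · rw [← h0, hf0] at h
        have h2 := hbox _ _ le_rfl
        exact absurd h (not_lt.2 (max_lt h2.1 h2.2).le)
      · obtain ⟨s, hs1, hs2⟩ :=
          ((hev.filter_mono nhdsWithin_le_nhds).and (Ioo_mem_nhdsLT h0)).exists
        exact absurd hs1 (not_lt.2 (hlt s ⟨hs2.1.le, hs2.2⟩).le)
    have hle' : ∀ t ∈ Icc 0 T, max |(f t).1| |(f t).2| ≤ R := by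
      intro t ht
      rcases ht.2.lt_or_eq with h | h
      · exact (hlt t ⟨ht.1, h⟩).le
      · rw [h]; exact hle
    have hd : ∀ t ∈ Icc 0 T, HasDerivAt (fun s => p.En (f s).1 (f s).2) (-p.A * (f t).2 ^ 2) t := by
      intro t ht
      have h := max_le_iff.1 (hle' t ht)
      have h2 := real t h.1 h.2
      exact p.En_deriv (x := fun s => (f s).1) (y := fun s => (f s).2) h2.1 h2.2
    have hanti : AntitoneOn (fun s => p.En (f s).1 (f s).2) (Icc 0 T) := by
      apply antitoneOn_of_deriv_nonpos (convex_Icc 0 T)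
      · exact fun t ht => (hd t ht).continuousAt.continuousWithinAt
      · exact fun t ht => (hd t (interior_subset ht)).differentiableAt.differentiableWithinAt
      · intro t ht
        rw [(hd t (interior_subset ht)).deriv]
        have := p.hA
        have := sq_nonneg (f t).2
        nlinarith
    have h1 := hanti ⟨le_rfl, hT.1⟩ ⟨hT.1, le_rfl⟩ hT.1
    simp only [hf0] at h1
    have h2 := hbox _ _ h1
    exact absurd hT.2 (not_le.2 (max_lt h2.1 h2.2))
  refine ⟨fun s => (f s).1, fun s => (f s).2, fun t ht => ?_, by simp [hf0], by simp [hf0]⟩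
  have h := max_lt_iff.1 (inside t ht)
  exact real t h.1.le h.2.le

namespace Sol
variable {p : Par} {x y x' y' : ℝ → ℝ}

lemma dx (h : p.Sol x y) {t : ℝ} (ht : 0 ≤ t) : HasDerivAt x (y t) t := (h t ht).1

lemma dy (h : p.Sol x y) {t : ℝ} (ht : 0 ≤ t) :
    HasDerivAt y (p.B * x t - p.A * y t - p.K * gq p.q (x t)) t := (h t ht).2

lemma cx (h : p.Sol x y) : ContinuousOn x (Ici 0) :=
  fun _ ht => (h.dx ht).continuousAt.continuousWithinAt

lemma cy (h : p.Sol x y) : ContinuousOn y (Ici 0) :=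
  fun _ ht => (h.dy ht).continuousAt.continuousWithinAt

lemma dE (h : p.Sol x y) {t : ℝ} (ht : 0 ≤ t) :
    HasDerivAt (fun s => p.En (x s) (y s)) (-p.A * y t ^ 2) t := p.En_deriv (h.dx ht) (h.dy ht)

lemma cE (h : p.Sol x y) : ContinuousOn (fun s => p.En (x s) (y s)) (Ici 0) :=
  fun _ ht => (h.dE ht).continuousAt.continuousWithinAt

lemma antiE (h : p.Sol x y) : AntitoneOn (fun s => p.En (x s) (y s)) (Ici 0) := by
  apply antitoneOn_of_deriv_nonpos (convex_Ici 0) h.cE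
  · exact fun t ht => (h.dE (interior_subset ht)).differentiableAt.differentiableWithinAt
  · intro t ht
    rw [(h.dE (interior_subset ht)).deriv]
    have := p.hA
    have := sq_nonneg (y t)
    nlinarith

lemma shift (h : p.Sol x y) {T : ℝ} (hT : 0 ≤ T) :
    p.Sol (fun t => x (T + t)) (fun t => y (T + t)) := fun t ht =>
  ⟨(h.dx (add_nonneg hT ht)).comp_const_add T t, (h.dy (add_nonneg hT ht)).comp_const_add T t⟩

lemma neg (h : p.Sol x y) : p.Sol (fun t => -x t) (fun t => -y t) := fun t ht =>
  ⟨(h.dx ht).neg, (h.dy ht).neg.congr_deriv (by rw [gq_neg]; ring)⟩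

lemma zero (p : Par) : p.Sol (fun _ => 0) (fun _ => 0) := fun t _ =>
  ⟨hasDerivAt_const t 0, (hasDerivAt_const t 0).congr_deriv (by simp)⟩

lemma dz (h : p.Sol x y) {t : ℝ} (ht : 0 ≤ t) :
    HasDerivAt (fun s => (x s, y s)) (p.fld (x t, y t)) t := (h.dx ht).prodMk (h.dy ht)

/-- Lipschitz dependence on the initial value, locally uniformly in time and data. -/
lemma dep (p : Par) (e : ℝ) : ∃ C, 0 ≤ C ∧ ∀ x y x' y' : ℝ → ℝ, p.Sol x y → p.Sol x' y' →
    p.En (x 0) (y 0) ≤ e → p.En (x' 0) (y' 0) ≤ e → ∀ t, 0 ≤ t →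
    dist (x t, y t) (x' t, y' t) ≤ dist (x 0, y 0) (x' 0, y' 0) * exp (C * t) := by
  obtain ⟨R, hR, hbox⟩ := p.box e
  obtain ⟨L, hL⟩ := p.fld_lip R
  refine ⟨L, L.2, fun x y x' y' h h' he he' t ht => ?_⟩
  have key : ∀ {x y : ℝ → ℝ}, p.Sol x y → p.En (x 0) (y 0) ≤ e → ∀ s, 0 ≤ s →
      (x s, y s) ∈ Metric.closedBall (0 : ℝ × ℝ) R := by
    intro x y h he s hs
    have := hbox _ _ ((h.antiE (mem_Ici.2 le_rfl) (mem_Ici.2 hs) hs).trans he)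
    exact mem_box this.1.le this.2.le
  have := dist_le_of_trajectories_ODE_of_mem (v := fun _ => p.fld) (K := L)
    (s := fun _ => Metric.closedBall (0 : ℝ × ℝ) R) (a := 0) (b := t)
    (f := fun s => (x s, y s)) (g := fun s => (x' s, y' s))
    (fun _ _ => hL) (fun s hs => (h.dz hs.1).continuousAt.continuousWithinAt)
    (fun s hs => (h.dz hs.1).hasDerivWithinAt) (fun s hs => key h he s hs.1)
    (fun s hs => (h'.dz hs.1).continuousAt.continuousWithinAt)
    (fun s hs => (h'.dz hs.1).hasDerivWithinAt) (fun s hs => key h' he' s hs.1) le_rfl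
    t ⟨ht, le_rfl⟩
  simpa using this

lemma unique (h : p.Sol x y) (h' : p.Sol x' y') (hx : x 0 = x' 0) (hy : y 0 = y' 0) :
    ∀ t, 0 ≤ t → x t = x' t ∧ y t = y' t := by
  intro t ht
  obtain ⟨C, _, hC⟩ := dep p (p.En (x 0) (y 0))
  have := hC x y x' y' h h' le_rfl (by rw [hx, hy]) t ht
  rw [hx, hy, dist_self, zero_mul] at this
  have := dist_le_zero.1 this
  exact Prod.ext_iff.1 this

lemma unique_back (h : p.Sol x y) (h' : p.Sol x' y') {T : ℝ} (hT : 0 ≤ T)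
    (hx : x T = x' T) (hy : y T = y' T) : x 0 = x' 0 ∧ y 0 = y' 0 := by
  obtain ⟨R, hR, hbox⟩ := p.box (max (p.En (x 0) (y 0)) (p.En (x' 0) (y' 0)))
  obtain ⟨L, hL⟩ := p.fld_lip R
  have key : ∀ {x1 y1 : ℝ → ℝ}, p.Sol x1 y1 →
      p.En (x1 0) (y1 0) ≤ max (p.En (x 0) (y 0)) (p.En (x' 0) (y' 0)) → ∀ s, 0 ≤ s →
      (x1 s, y1 s) ∈ Metric.closedBall (0 : ℝ × ℝ) R := by
    intro x y h he s hs
    have := hbox _ _ ((h.antiE (mem_Ici.2 le_rfl) (mem_Ici.2 hs) hs).trans he)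
    exact mem_box this.1.le this.2.le
  have := ODE_solution_unique_of_mem_Icc_left (v := fun _ => p.fld) (K := L)
    (s := fun _ => Metric.closedBall (0 : ℝ × ℝ) R) (a := 0) (b := T)
    (f := fun s => (x s, y s)) (g := fun s => (x' s, y' s))
    (fun _ _ => hL) (fun s hs => (h.dz hs.1).continuousAt.continuousWithinAt)
    (fun s hs => (h.dz hs.1.le).hasDerivWithinAt) (fun s hs => key h (le_max_left _ _) s hs.1.le)
    (fun s hs => (h'.dz hs.1).continuousAt.continuousWithinAt)
    (fun s hs => (h'.dz hs.1.le).hasDerivWithinAt)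
    (fun s hs => key h' (le_max_right _ _) s hs.1.le) (by simp [hx, hy])
  exact Prod.ext_iff.1 (this ⟨le_rfl, hT⟩)

/-- If two orbits meet, the one that needs less time starts on the other. -/
lemma unique_back' (h : p.Sol x y) (h' : p.Sol x' y') {T T' : ℝ} (hT : 0 ≤ T) (hTT : T ≤ T')
    (hx : x T = x' T') (hy : y T = y' T') : x 0 = x' (T' - T) ∧ y 0 = y' (T' - T) := by
  have := h.unique_back (h'.shift (sub_nonneg.2 hTT)) hT (by simpa using hx) (by simpa using hy)
  simpa using this

/-- A nontrivial orbit never reaches the origin. -/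
lemma ne_zero (h : p.Sol x y) (h0 : x 0 ≠ 0 ∨ y 0 ≠ 0) {t : ℝ} (ht : 0 ≤ t) (hx : x t = 0) :
    y t ≠ 0 := by
  intro hy
  have := h.unique_back (Sol.zero p) ht hx hy
  tauto

end Sol
end Par

/-! ### Types of orbits and their asymptotics -/

lemma first_zero {f : ℝ → ℝ} {a b : ℝ} (hf : ContinuousOn f (Icc a b)) (ha : 0 < f a)
    (hab : a ≤ b) (hb : f b ≤ 0) : ∃ z ∈ Ioc a b, f z = 0 ∧ ∀ t ∈ Ico a z, 0 < f t := by
  set S := {t | t ∈ Icc a b ∧ f t ≤ 0} with hS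
  have hSc : IsClosed S := by
    have : S = Icc a b ∩ f ⁻¹' Iic 0 := rfl
    rw [this]; exact hf.preimage_isClosed_of_isClosed isClosed_Icc isClosed_Iic
  have hSb : BddBelow S := ⟨a, fun t ht => ht.1.1⟩
  have hT := hSc.csInf_mem ⟨b, ⟨hab, le_rfl⟩, hb⟩ hSb
  set z := sInf S
  have hlt : ∀ t ∈ Ico a z, 0 < f t := by
    intro t ht
    by_contra h
    push Not at h
    exact absurd (csInf_le hSb (show t ∈ S from ⟨⟨ht.1, ht.2.le.trans hT.1.2⟩, h⟩))
      (not_le.2 ht.2)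
  have haz : a < z := by
    rcases hT.1.1.eq_or_lt with h | h
    · rw [← h] at hT; exact absurd hT.2 (not_le.2 ha)
    · exact h
  refine ⟨z, ⟨haz, hT.1.2⟩, le_antisymm hT.2 ?_, hlt⟩
  have hcw : Tendsto f (𝓝[<] z) (𝓝 (f z)) :=
    (hf z hT.1).mono_left (nhdsWithin_le_of_mem (mem_of_superset (Ioo_mem_nhdsLT haz)
      (fun t ht => ⟨ht.1.le, ht.2.le.trans hT.1.2⟩)))
  refine ge_of_tendsto hcw ?_
  filter_upwards [Ioo_mem_nhdsLT haz] with t ht using (hlt t ⟨ht.1.le, ht.2⟩).le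

lemma mono_of_deriv {f f' : ℝ → ℝ} {s : Set ℝ} (hs : Convex ℝ s)
    (hf : ∀ t ∈ s, HasDerivAt f (f' t) t) (h : ∀ t ∈ s, 0 ≤ f' t) : MonotoneOn f s := by
  apply monotoneOn_of_deriv_nonneg hs
  · exact fun t ht => (hf t ht).continuousAt.continuousWithinAt
  · exact fun t ht => (hf t (interior_subset ht)).differentiableAt.differentiableWithinAt
  · intro t ht
    rw [(hf t (interior_subset ht)).deriv]
    exact h t (interior_subset ht)

lemma smono_of_deriv {f f' : ℝ → ℝ} {s : Set ℝ} (hs : Convex ℝ s)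
    (hf : ∀ t ∈ s, HasDerivAt f (f' t) t) (h : ∀ t ∈ s, 0 < f' t) : StrictMonoOn f s := by
  apply strictMonoOn_of_deriv_pos hs
  · exact fun t ht => (hf t ht).continuousAt.continuousWithinAt
  · intro t ht
    rw [(hf t (interior_subset ht)).deriv]
    exact h t (interior_subset ht)

lemma anti_of_deriv {f f' : ℝ → ℝ} {s : Set ℝ} (hs : Convex ℝ s)
    (hf : ∀ t ∈ s, HasDerivAt f (f' t) t) (h : ∀ t ∈ s, f' t ≤ 0) : AntitoneOn f s := by
  have := mono_of_deriv (f := fun t => - f t) hs (fun t ht => (hf t ht).neg)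
    (fun t ht => by linarith [h t ht])
  intro a ha b hb hab
  have := this ha hb hab
  simp only at this
  linarith

lemma mono_lim {f : ℝ → ℝ} {T M : ℝ} (hf : MonotoneOn f (Ici T)) (hM : ∀ t, T ≤ t → f t ≤ M) :
    ∃ l, Tendsto f atTop (𝓝 l) ∧ ∀ t, T ≤ t → f t ≤ l := by
  have h1 : Monotone (fun t => f (max T t)) := fun a b hab =>
    hf (mem_Ici.2 (le_max_left _ _)) (mem_Ici.2 (le_max_left _ _)) (max_le_max le_rfl hab)
  have hb : BddAbove (range (fun t => f (max T t))) :=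
    ⟨M, by rintro _ ⟨t, rfl⟩; exact hM _ (le_max_left _ _)⟩
  have h2 := tendsto_atTop_ciSup h1 hb
  refine ⟨_, h2.congr' ?_, fun t ht => ?_⟩
  · filter_upwards [eventually_ge_atTop T] with t ht
    rw [max_eq_right ht]
  · have := le_ciSup hb t
    simpa only [max_eq_right ht] using this

lemma anti_lim {f : ℝ → ℝ} {T M : ℝ} (hf : AntitoneOn f (Ici T)) (hM : ∀ t, T ≤ t → M ≤ f t) :
    ∃ l, Tendsto f atTop (𝓝 l) ∧ ∀ t, T ≤ t → l ≤ f t := by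
  obtain ⟨l, h1, h2⟩ := mono_lim (f := fun t => - f t) (M := -M)
    (fun a ha b hb hab => neg_le_neg (hf ha hb hab)) (fun t ht => neg_le_neg (hM t ht))
  exact ⟨-l, by simpa using h1.neg, fun t ht => by linarith [h2 t ht]⟩

/-- If `f → l` then `f'` tends to `0` along times tending to infinity. -/
lemma deriv_seq {f f' : ℝ → ℝ} {l T : ℝ} (hf : ∀ t, T ≤ t → HasDerivAt f (f' t) t)
    (hl : Tendsto f atTop (𝓝 l)) :
    ∃ s : ℕ → ℝ, Tendsto s atTop atTop ∧ Tendsto (fun n => f' (s n)) atTop (𝓝 0) := by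
  have : ∀ n : ℕ, ∃ c ∈ Ioo (T + n) (T + n + 1), f' c = f (T + n + 1) - f (T + n) := by
    intro n
    have hn : (0:ℝ) ≤ n := Nat.cast_nonneg n
    obtain ⟨c, hc, h⟩ := exists_hasDerivAt_eq_slope f f' (show T + n < T + n + 1 by linarith)
      (fun t ht => (hf t (by linarith [ht.1])).continuousAt.continuousWithinAt)
      (fun t ht => hf t (by linarith [ht.1]))
    exact ⟨c, hc, by rw [h]; simp⟩
  choose s hs h using this
  have h1 : Tendsto (fun n : ℕ => T + (n:ℝ)) atTop atTop :=
    tendsto_atTop_add_const_left _ _ tendsto_natCast_atTop_atTop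
  refine ⟨s, tendsto_atTop_mono (fun n => (hs n).1.le) h1, ?_⟩
  simp only [h]
  have h2 := (hl.comp (tendsto_atTop_add_const_right _ 1 h1)).sub (hl.comp h1)
  simpa using h2

namespace Par
variable {p : Par}

/-- The orbit leaves the half plane `x > 0` in finite time. -/
def ZT (x : ℝ → ℝ) : Prop := ∃ z > 0, x z = 0 ∧ ∀ t ∈ Ioo 0 z, 0 < x t

/-- The orbit stays in the half plane `x > 0` and its energy becomes negative. -/
def ST (p : Par) (x y : ℝ → ℝ) : Prop := (∀ t > 0, 0 < x t) ∧ ∃ t ≥ 0, p.En (x t) (y t) < 0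

/-- The orbit stays in the half plane `x > 0` with nonnegative energy. -/
def FT (p : Par) (x y : ℝ → ℝ) : Prop := (∀ t > 0, 0 < x t) ∧ ∀ t ≥ 0, 0 ≤ p.En (x t) (y t)

/-- `|x|` is eventually bounded above and away from zero. -/
def SlowEnd (x : ℝ → ℝ) : Prop := ∃ T c C : ℝ, 0 < c ∧ ∀ t ≥ T, c ≤ |x t| ∧ |x t| ≤ C

/-- `x` decays exactly like `exp (-β t)`. -/
def FastEnd (β : ℝ) (x : ℝ → ℝ) : Prop := ∃ L ≠ 0, Tendsto (fun t => x t * exp (β * t)) atTop (𝓝 L)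

lemma En_zero_left (p : Par) (y : ℝ) : p.En 0 y = y ^ 2 / 2 := by
  have : p.q ≠ 0 := by linarith [p.hq]
  simp [En, zero_rpow this]

lemma ne_of_En_neg {x y : ℝ} (h : p.En x y < 0) : x ≠ 0 := by
  rintro rfl
  rw [En_zero_left] at h
  nlinarith [sq_nonneg y]

namespace Sol
variable {x y : ℝ → ℝ}

lemma bdd (h : p.Sol x y) : ∃ R > 0, ∀ t, 0 ≤ t → |x t| < R ∧ |y t| < R := by
  obtain ⟨R, hR, hb⟩ := p.box (p.En (x 0) (y 0))
  exact ⟨R, hR, fun t ht => hb _ _ (h.antiE (mem_Ici.2 le_rfl) (mem_Ici.2 ht) ht)⟩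

lemma pos_near (h : p.Sol x y) (hx : 0 ≤ x 0) (hy : 0 < y 0) :
    ∃ ε > 0, ∀ t ∈ Ioc 0 ε, 0 < x t := by
  have h1 := (h.dy le_rfl).continuousAt.eventually (lt_mem_nhds hy)
  obtain ⟨ε, hε, h2⟩ := Metric.eventually_nhds_iff.1 h1
  refine ⟨ε / 2, by positivity, fun t ht => ?_⟩
  have := smono_of_deriv (convex_Icc 0 (ε/2)) (f := x) (f' := y) (fun s hs => h.dx hs.1)
    (fun s hs => h2 (by rw [dist_zero_right, norm_eq_abs, abs_of_nonneg hs.1]; linarith [hs.2]))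
    ⟨le_rfl, by positivity⟩ ⟨ht.1.le, ht.2⟩ ht.1
  linarith

lemma exit_of_nonpos (h : p.Sol x y) (hx : 0 ≤ x 0) (hy : 0 < y 0) {b : ℝ} (hb : 0 < b)
    (hb' : x b ≤ 0) : ∃ z ∈ Ioc 0 b, x z = 0 ∧ ∀ t ∈ Ioo 0 z, 0 < x t := by
  obtain ⟨ε, hε, hpos⟩ := h.pos_near hx hy
  have hεb : ε ≤ b := by
    by_contra hc
    push Not at hc
    exact absurd (hpos b ⟨hb, hc.le⟩) (not_lt.2 hb')
  obtain ⟨z, hz, hz0, hzp⟩ := first_zero (h.cx.mono (fun t ht => hε.le.trans ht.1))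
    (hpos ε ⟨hε, le_rfl⟩) hεb hb'
  refine ⟨z, ⟨hε.trans hz.1, hz.2⟩, hz0, fun t ht => ?_⟩
  rcases le_total t ε with h1 | h1
  · exact hpos t ⟨ht.1, h1⟩
  · exact hzp t ⟨h1, ht.2⟩

/-- An orbit starting in the quadrant `x ≥ 0`, `y > 0` exits the half plane `x > 0`, or stays in it
with energy becoming negative, or stays in it with nonnegative energy. -/
lemma trichotomy (h : p.Sol x y) (hx : 0 ≤ x 0) (hy : 0 < y 0) :
    ZT x ∨ p.ST x y ∨ p.FT x y := by
  by_cases hn : ∀ t > 0, 0 < x t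
  · by_cases hE : ∃ t ≥ 0, p.En (x t) (y t) < 0
    · exact Or.inr (Or.inl ⟨hn, hE⟩)
    · push Not at hE
      exact Or.inr (Or.inr ⟨hn, hE⟩)
  · left
    push Not at hn
    obtain ⟨b, hb, hb'⟩ := hn
    obtain ⟨z, hz, h1⟩ := h.exit_of_nonpos hx hy hb hb'
    exact ⟨z, hz.1, h1⟩

lemma En_pos_of_zero (h : p.Sol x y) (hy : 0 < y 0) {z : ℝ} (hz : 0 ≤ z) (hxz : x z = 0) :
    ∀ t ∈ Icc 0 z, 0 < p.En (x t) (y t) := by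
  intro t ht
  have h1 := h.ne_zero (Or.inr hy.ne') hz hxz
  have h2 := h.antiE (mem_Ici.2 ht.1) (mem_Ici.2 hz) ht.2
  simp only [hxz, En_zero_left] at h2
  have : 0 < y z ^ 2 / 2 := by positivity
  linarith

lemma ne_zero_of_En_neg (h : p.Sol x y) {t0 : ℝ} (ht0 : 0 ≤ t0) (hE : p.En (x t0) (y t0) < 0) :
    ∀ t, t0 ≤ t → x t ≠ 0 := fun t ht =>
  ne_of_En_neg (y := y t)
    ((h.antiE (mem_Ici.2 ht0) (mem_Ici.2 (ht0.trans ht)) ht).trans_lt hE)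

/-- Negative energy keeps `|x|` away from zero. -/
lemma slowEnd (h : p.Sol x y) {t0 : ℝ} (ht0 : 0 ≤ t0) (hE : p.En (x t0) (y t0) < 0) :
    SlowEnd x := by
  obtain ⟨R, hR, hb⟩ := h.bdd
  have hB := p.hB
  set e := -p.En (x t0) (y t0) with he
  refine ⟨t0, √(2 * e / p.B), R, sqrt_pos.2 (by have : 0 < e := by linarith
                                                positivity), fun t ht => ⟨?_, ?_⟩⟩
  · have h1 := h.antiE (mem_Ici.2 ht0) (mem_Ici.2 (ht0.trans ht)) ht
    simp only at h1
    rw [sqrt_le_left (abs_nonneg _), sq_abs, div_le_iff₀ hB]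
    have h2 : 0 ≤ p.K / p.q * |x t| ^ p.q := by
      have := p.hK
      have : 0 < p.q := by linarith [p.hq]
      positivity
    unfold En at h1 he
    nlinarith [sq_nonneg (y t)]
  · exact (hb t (ht0.trans ht)).1.le

/-- With nonnegative energy, `y` can only change sign from plus to minus while `x > 0`. -/
lemma dy_neg (p : Par) {a b : ℝ} (hE : 0 ≤ p.En a b) (ha : 0 < a) (hb : b = 0) :
    p.B * a - p.A * b - p.K * gq p.q a < 0 := by
  subst hb
  unfold En at hE
  have hq := p.hq
  have hB := p.hB
  have hK := p.hK
  rw [abs_of_pos ha] at hE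
  have h1 : a ^ p.q = a * gq p.q a := by
    rw [gq_pos_eq ha, show p.q = 1 + (p.q - 1) by ring, rpow_add ha, rpow_one]; ring_nf
  rw [h1] at hE
  set g := gq p.q a
  have hq0 : 0 < p.q := by linarith
  have h2 : 0 ≤ a * (p.K * g / p.q - p.B * a / 2) := by
    have : a * (p.K * g / p.q - p.B * a / 2) =
      0 ^ 2 / 2 - p.B * a ^ 2 / 2 + p.K / p.q * (a * g) := by ring
    rwa [this]
  have h3 : p.B * a / 2 ≤ p.K * g / p.q := by
    have := nonneg_of_mul_nonneg_right h2 ha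
    linarith
  rw [le_div_iff₀ hq0] at h3
  have : 0 < p.B * a * (p.q - 2) := by
    have : 0 < p.q - 2 := by linarith
    positivity
  linarith

/-- Orbits of type F tend to the origin, from below the `x`-axis. -/
lemma F_lim (h : p.Sol x y) (hF : p.FT x y) :
    Tendsto x atTop (𝓝 0) ∧ Tendsto y atTop (𝓝 0) ∧
    Tendsto (fun t => p.En (x t) (y t)) atTop (𝓝 0) ∧ ∃ T > 0, ∀ t, T ≤ t → y t < 0 := by
  obtain ⟨R, hR, hb⟩ := h.bdd
  have hsign : (∀ t, 1 ≤ t → 0 ≤ y t) ∨ ∃ T > 0, ∀ t, T ≤ t → y t < 0 := by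
    by_cases hc : ∀ t, 1 ≤ t → 0 ≤ y t
    · exact Or.inl hc
    · right
      push Not at hc
      obtain ⟨T, hT, hy⟩ := hc
      refine ⟨T, by linarith, fun t ht => ?_⟩
      rcases ht.eq_or_lt with h1 | h1
      · rwa [← h1]
      · exact stay_neg (fun s hs => h.dy (by linarith [hs.1])) hy.le
          (fun s hs h0 => dy_neg p (hF.2 s (by linarith [hs.1])) (hF.1 s (by linarith [hs.1])) h0)
          t ⟨h1, le_rfl⟩
  have hlim : ∃ l, Tendsto x atTop (𝓝 l) := by
    rcases hsign with hs | ⟨T, hT, hs⟩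
    · obtain ⟨l, hl, _⟩ := mono_lim (mono_of_deriv (convex_Ici (1:ℝ)) (f := x) (f' := y)
        (fun t ht => h.dx (by linarith [mem_Ici.1 ht])) hs)
        (fun t ht => (abs_lt.1 (hb t (by linarith)).1).2.le)
      exact ⟨l, hl⟩
    · obtain ⟨l, hl, _⟩ := anti_lim (anti_of_deriv (convex_Ici T) (f := x) (f' := y)
        (fun t ht => h.dx (by linarith [mem_Ici.1 ht])) (fun t ht => (hs t ht).le))
        (fun t ht => (abs_lt.1 (hb t (by linarith)).1).1.le)
      exact ⟨l, hl⟩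
  obtain ⟨l, hl⟩ := hlim
  obtain ⟨e, he, _⟩ := anti_lim h.antiE (fun t ht => hF.2 t ht)
  have hq := p.hq
  have hq0 : 0 < p.q := by linarith
  -- the squared velocity has a limit, which vanishes because `x` converges
  have hy2 : Tendsto (fun t => y t ^ 2) atTop
      (𝓝 (2 * (e + p.B * l ^ 2 / 2 - p.K / p.q * |l| ^ p.q))) := by
    have h1 := ((he.add (((hl.pow 2).const_mul p.B).div_const 2)).sub
      ((hl.abs.rpow_const (p := p.q) (Or.inr hq0.le)).const_mul (p.K / p.q))).const_mul 2
    refine h1.congr (fun t => ?_)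
    simp only [En]; ring
  obtain ⟨s, hs, hs0⟩ := deriv_seq (T := 0) (fun t ht => h.dx ht) hl
  have hY : 2 * (e + p.B * l ^ 2 / 2 - p.K / p.q * |l| ^ p.q) = 0 :=
    tendsto_nhds_unique (hy2.comp hs) (by simpa [Function.comp_def] using hs0.pow 2)
  rw [hY] at hy2
  have hy : Tendsto y atTop (𝓝 0) := by
    have := hy2.sqrt
    simp only [sqrt_sq_eq_abs, sqrt_zero] at this
    exact (tendsto_zero_iff_abs_tendsto_zero _).2 this
  obtain ⟨s', hs', hs0'⟩ := deriv_seq (T := 0) (fun t ht => h.dy ht) hy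
  have heq : p.B * l - p.A * 0 - p.K * gq p.q l = 0 := by
    refine tendsto_nhds_unique ?_ hs0'
    have hg : Tendsto (fun t => gq p.q (x t)) atTop (𝓝 (gq p.q l)) :=
      ((gq_contDiff hq).continuous.tendsto l).comp hl
    exact (((hl.const_mul p.B).sub (hy.const_mul p.A)).sub (hg.const_mul p.K)).comp hs'
  have hl0 : 0 ≤ l := ge_of_tendsto hl (by
    filter_upwards [eventually_gt_atTop 0] with t ht using (hF.1 t ht).le)
  have he0 : 0 ≤ e := ge_of_tendsto he (by
    filter_upwards [eventually_ge_atTop 0] with t ht using hF.2 t ht)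
  have hlz : l = 0 := by
    by_contra hne
    have hlp : 0 < l := lt_of_le_of_ne hl0 (Ne.symm hne)
    have hE : 0 ≤ p.En l 0 := by unfold En; linarith
    exact absurd heq (dy_neg p hE hlp rfl).ne
  subst hlz
  have he1 : e = 0 := by
    rw [abs_zero, zero_rpow hq0.ne'] at hY; linarith
  subst he1
  refine ⟨hl, hy, he, ?_⟩
  rcases hsign with hs | hs
  · exfalso
    have h1 := mono_of_deriv (convex_Ici (1:ℝ)) (f := x) (f' := y)
        (fun t ht => h.dx (by linarith [mem_Ici.1 ht])) hs
    have h2 : x 1 ≤ 0 := ge_of_tendsto hl (by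
      filter_upwards [eventually_ge_atTop 1] with t ht using h1 (mem_Ici.2 le_rfl) ht ht)
    linarith [hF.1 1 one_pos]
  · exact hs

end Sol
end Par

/-! ### Fast decay and uniqueness of the orbit of type F -/

lemma gq_pos {q x : ℝ} (hx : 0 < x) : 0 < gq q x := mul_pos hx (rpow_pos_of_pos (abs_pos.2 hx.ne') _)

namespace Par
variable {p : Par}
namespace Sol
variable {x y x' y' : ℝ → ℝ}

/-- The exponential decay rate of F orbits: `x exp (β t)` is increasing, and becomes decreasing
after multiplication by the bounded factor `exp (c x^(q-2))`. -/
lemma F_fast (h : p.Sol x y) (hF : p.FT x y) {α β : ℝ} (hα : 0 < α) (hβ : 0 < β)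
    (hA : p.A = β - α) (hB : p.B = α * β) : FastEnd β x := by
  obtain ⟨hx0, hy0, _, T0, hT0, hyneg⟩ := h.F_lim hF
  have hq := p.hq
  have hK := p.hK
  have hpw : Tendsto (fun t => |x t| ^ (p.q - 2)) atTop (𝓝 0) := by
    have := (hx0.abs.rpow_const (p := p.q - 2) (Or.inr (by linarith)))
    rwa [abs_zero, zero_rpow (by linarith)] at this
  set c := p.K / α with hc
  have hcp : 0 < c := by positivity
  have hsm : ∀ᶠ t in atTop, |x t| ^ (p.q - 2) < β / (2 * c) :=
    hpw.eventually (gt_mem_nhds (by positivity))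
  obtain ⟨T1, hT1⟩ := eventually_atTop.1 hsm
  set T := max T0 T1 with hT
  have hTT0 : T0 ≤ T := le_max_left _ _
  have hTT1 : T1 ≤ T := le_max_right _ _
  have hTp : 0 < T := hT0.trans_le hTT0
  have xp : ∀ t, T ≤ t → 0 < x t := fun t ht => hF.1 t (by linarith)
  have dexp : ∀ (a t : ℝ), HasDerivAt (fun s => exp (a * s)) (exp (a * t) * a) t := by
    intro a t
    simpa using ((hasDerivAt_id t).const_mul a).exp
  have hexp : Tendsto (fun t => exp (-α * t)) atTop (𝓝 0) := by
    apply tendsto_exp_atBot.comp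
    exact tendsto_id.const_mul_atTop_of_neg (by linarith)
  have hgq : Tendsto (fun t => gq p.q (x t)) atTop (𝓝 0) := by
    have := ((gq_contDiff hq).continuous.tendsto 0).comp hx0
    simpa [Function.comp_def] using this
  -- `(y + β x) exp (-α t)` is decreasing and tends to zero, since `-β` is a root of the
  -- characteristic polynomial of the linear part
  have hv0 : ∀ t, T ≤ t → 0 ≤ y t + β * x t := by
    have hmono := anti_of_deriv (convex_Ici T) (f := fun t => (y t + β * x t) * exp (-α * t))
      (f' := fun t => - p.K * gq p.q (x t) * exp (-α * t))
      (fun t ht => by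
        have ht0 : 0 ≤ t := by linarith [mem_Ici.1 ht]
        refine (((h.dy ht0).add ((h.dx ht0).const_mul β)).mul (dexp (-α) t)).congr_deriv ?_
        rw [hA, hB]
        simp only [Pi.add_apply]
        ring)
      (fun t ht => by
        have := gq_pos (q := p.q) (xp t ht)
        have := exp_pos (-α * t)
        have : 0 < p.K * gq p.q (x t) * exp (-α * t) := by positivity
        linarith)
    intro t ht
    have hlim : Tendsto (fun t => (y t + β * x t) * exp (-α * t)) atTop (𝓝 0) := by
      simpa using (hy0.add (hx0.const_mul β)).mul hexp
    have h1 : 0 ≤ (y t + β * x t) * exp (-α * t) := le_of_tendsto hlim (by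
      filter_upwards [eventually_ge_atTop t] with s hs
      exact hmono (mem_Ici.2 ht) (mem_Ici.2 (ht.trans hs)) hs)
    exact nonneg_of_mul_nonneg_left h1 (exp_pos _)
  -- the same argument bounds `y + β x` above by a higher order term in `x`
  have hv1 : ∀ t, T ≤ t → y t + β * x t ≤ c * gq p.q (x t) := by
    have hmono := mono_of_deriv (convex_Ici T)
      (f := fun t => (y t + β * x t - c * gq p.q (x t)) * exp (-α * t))
      (f' := fun t => - c * ((p.q - 1) * |x t| ^ (p.q - 2)) * y t * exp (-α * t))
      (fun t ht => by
        have ht0 : 0 ≤ t := by linarith [mem_Ici.1 ht]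
        have hg := (gq_hasDerivAt hq (x t)).comp t (h.dx ht0)
        refine ((((h.dy ht0).add ((h.dx ht0).const_mul β)).sub (hg.const_mul c)).mul
          (dexp (-α) t)).congr_deriv ?_
        rw [hA, hB, hc]
        simp only [Function.comp_def, Pi.add_apply, Pi.sub_apply]
        field_simp
        ring)
      (fun t ht => by
        have h1 := hyneg t (hTT0.trans ht)
        have h2 : 0 ≤ c * ((p.q - 1) * |x t| ^ (p.q - 2)) * (-y t) * exp (-α * t) := by
          have : 0 ≤ p.q - 1 := by linarith
          have : 0 ≤ - y t := by linarith
          positivity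
        linarith)
    intro t ht
    have hlim : Tendsto (fun t => (y t + β * x t - c * gq p.q (x t)) * exp (-α * t)) atTop
        (𝓝 0) := by
      simpa using ((hy0.add (hx0.const_mul β)).sub (hgq.const_mul c)).mul hexp
    have h1 : (y t + β * x t - c * gq p.q (x t)) * exp (-α * t) ≤ 0 := ge_of_tendsto hlim (by
      filter_upwards [eventually_ge_atTop t] with s hs
      exact hmono (mem_Ici.2 ht) (mem_Ici.2 (ht.trans hs)) hs)
    have h2 : y t + β * x t - c * gq p.q (x t) ≤ 0 :=
      nonpos_of_mul_nonpos_left h1 (exp_pos _)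
    linarith
  have hy1 : ∀ t, T ≤ t → y t ≤ -(β / 2) * x t := by
    intro t ht
    have h1 := hv1 t ht
    have h2 := (hT1 t (hTT1.trans ht)).le
    have h3 := xp t ht
    have h4 : c * gq p.q (x t) ≤ β / 2 * x t := by
      calc c * gq p.q (x t) = c * (x t * |x t| ^ (p.q - 2)) := rfl
        _ ≤ c * (x t * (β / (2 * c))) := by gcongr
        _ = β / 2 * x t := by field_simp
    linarith
  have hmono := mono_of_deriv (convex_Ici T) (f := fun t => x t * exp (β * t))
      (f' := fun t => (y t + β * x t) * exp (β * t))
      (fun t ht => by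
        have ht0 : 0 ≤ t := by linarith [mem_Ici.1 ht]
        refine ((h.dx ht0).mul (dexp β t)).congr_deriv ?_
        ring)
      (fun t ht => mul_nonneg (hv0 t ht) (exp_pos _).le)
  set k := 2 * c / ((p.q - 2) * β) with hk
  have hq2 : 0 < p.q - 2 := by linarith
  have hkp : 0 < k := by positivity
  have hanti := anti_of_deriv (convex_Ici T)
      (f := fun t => x t * exp (β * t) * exp (k * x t ^ (p.q - 2)))
      (f' := fun t => ((y t + β * x t) + x t * (k * ((p.q - 2) * x t ^ (p.q - 2 - 1) * y t)))
        * (exp (β * t) * exp (k * x t ^ (p.q - 2))))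
      (fun t ht => by
        have ht0 : 0 ≤ t := by linarith [mem_Ici.1 ht]
        have h1 := ((((h.dx ht0).rpow_const (p := p.q - 2) (Or.inl (xp t ht).ne')).const_mul k).exp)
        refine (((h.dx ht0).mul (dexp β t)).mul h1).congr_deriv ?_
        simp only [Pi.mul_apply]
        ring)
      (fun t ht => by
        apply mul_nonpos_of_nonpos_of_nonneg _ (by positivity)
        have hxp := xp t ht
        have h1 := hv1 t ht
        have h2 := hy1 t ht
        rw [gq, abs_of_pos hxp] at h1
        have h3 : x t * (k * ((p.q - 2) * x t ^ (p.q - 2 - 1) * y t)) =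
            k * (p.q - 2) * x t ^ (p.q - 2) * y t := by
          rw [rpow_sub_one hxp.ne']; field_simp
        rw [h3]
        have h4 : k * (p.q - 2) * x t ^ (p.q - 2) * y t ≤
            k * (p.q - 2) * x t ^ (p.q - 2) * (-(β / 2) * x t) := by gcongr
        have h5 : k * (p.q - 2) * x t ^ (p.q - 2) * (-(β / 2) * x t) =
            - (c * (x t * x t ^ (p.q - 2))) := by rw [hk]; field_simp
        linarith)
  obtain ⟨L, hL, hL'⟩ := mono_lim hmono (M := x T * exp (β * T) * exp (k * x T ^ (p.q - 2)))
    (fun t ht => by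
      have h1 := hanti (mem_Ici.2 le_rfl) (mem_Ici.2 ht) ht
      refine le_trans ?_ h1
      have : 1 ≤ exp (k * x t ^ (p.q - 2)) := by
        apply one_le_exp
        have := xp t ht
        positivity
      have h2 : 0 ≤ x t * exp (β * t) := by have := xp t ht; positivity
      simpa using mul_le_mul_of_nonneg_left this h2)
  refine ⟨L, ?_, hL⟩
  have := hL' T le_rfl
  have h2 : 0 < x T * exp (β * T) := by have := xp T le_rfl; positivity
  linarith

/-- Two orbits tending to the origin cannot be at the same small abscissa with different
ordinates: their difference would be a positive, increasing function. -/
lemma F_meet_aux (h : p.Sol x y) (h' : p.Sol x' y') {δ : ℝ}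
    (hδ : p.K * ((p.q - 1) * δ ^ (p.q - 2)) ≤ p.B) (hx : ∀ t, 0 ≤ t → 0 < x t ∧ x t ≤ δ)
    (hx' : ∀ t, 0 ≤ t → 0 < x' t ∧ x' t ≤ δ) (h0 : x 0 = x' 0)
    (hl : Tendsto x atTop (𝓝 0)) (hl' : Tendsto x' atTop (𝓝 0)) : y 0 ≤ y' 0 := by
  by_contra hcon
  push Not at hcon
  have hq := p.hq
  have hK := p.hK
  have gdiff : ∀ t, 0 ≤ t → x' t ≤ x t →
      p.K * (gq p.q (x t) - gq p.q (x' t)) ≤ p.B * (x t - x' t) := by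
    intro t ht hle
    have h1 : gq p.q (x t) - gq p.q (x' t) ≤ (p.q - 1) * δ ^ (p.q - 2) * (x t - x' t) := by
      refine Convex.image_sub_le_mul_sub_of_deriv_le (convex_Icc (x' t) (x t)) (f := gq p.q)
        (gq_contDiff hq).continuous.continuousOn
        ((gq_contDiff hq).differentiable (by norm_num)).differentiableOn ?_ _ ⟨le_rfl, hle⟩ _
        ⟨hle, le_rfl⟩ hle
      intro s hs
      have hs := interior_subset hs
      rw [(gq_hasDerivAt hq s).deriv]
      have h2 := (hx' t ht).1
      have h3 := (hx t ht).2
      have h4 : 0 < s := h2.trans_le hs.1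
      rw [abs_of_pos h4]
      have : 0 ≤ p.q - 1 := by linarith
      have : s ≤ δ := hs.2.trans h3
      have : 0 ≤ p.q - 2 := by linarith
      gcongr
    calc _ ≤ p.K * ((p.q - 1) * δ ^ (p.q - 2) * (x t - x' t)) := by gcongr
      _ = p.K * ((p.q - 1) * δ ^ (p.q - 2)) * (x t - x' t) := by ring
      _ ≤ _ := by have : 0 ≤ x t - x' t := by linarith
                  gcongr
  have hV : ∀ t, 0 ≤ t → 0 < y t - y' t := by
    by_contra hc
    push Not at hc
    obtain ⟨b, hb, hb'⟩ := hc
    obtain ⟨z, hz, hz0, hzp⟩ := first_zero (f := fun t => y t - y' t)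
      ((h.cy.sub h'.cy).mono (fun t ht => ht.1)) (by simpa using hcon) hb hb'
    have hD : MonotoneOn (fun t => x t - x' t) (Icc 0 z) :=
      mono_of_deriv (convex_Icc 0 z) (f' := fun t => y t - y' t)
        (fun t ht => (h.dx ht.1).sub (h'.dx ht.1)) (fun t ht => by
          rcases ht.2.lt_or_eq with h1 | h1
          · exact (hzp t ⟨ht.1, h1⟩).le
          · rw [h1]; exact hz0.ge)
    have hm := mono_of_deriv (convex_Icc 0 z) (f := fun t => (y t - y' t) * exp (p.A * t))
      (f' := fun t => (p.B * (x t - x' t) - p.K * (gq p.q (x t) - gq p.q (x' t)))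
        * exp (p.A * t))
      (fun t ht => by
        have h1 : HasDerivAt (fun s => exp (p.A * s)) (exp (p.A * t) * p.A) t := by
          simpa using ((hasDerivAt_id t).const_mul p.A).exp
        refine (((h.dy ht.1).sub (h'.dy ht.1)).mul h1).congr_deriv ?_
        simp only [Pi.sub_apply]
        ring)
      (fun t ht => by
        have h1 := hD ⟨le_rfl, hz.1.le⟩ ht ht.1
        simp only [h0, sub_self] at h1
        have := gdiff t ht.1 (by linarith)
        exact mul_nonneg (by linarith) (exp_pos _).le)
      ⟨le_rfl, hz.1.le⟩ ⟨hz.1.le, le_rfl⟩ hz.1.le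
    simp only [mul_zero, exp_zero, mul_one] at hm
    rw [hz0, zero_mul] at hm
    linarith
  have hD : StrictMonoOn (fun t => x t - x' t) (Ici 0) :=
    smono_of_deriv (convex_Ici 0) (f' := fun t => y t - y' t)
      (fun t ht => (h.dx ht).sub (h'.dx ht)) hV
  have h1 := hD (mem_Ici.2 le_rfl) (mem_Ici.2 zero_le_one) one_pos
  simp only [h0, sub_self] at h1
  have h2 : x 1 - x' 1 ≤ 0 - 0 := ge_of_tendsto (hl.sub hl') (by
    filter_upwards [eventually_ge_atTop 1] with t ht
    exact hD.monotoneOn (mem_Ici.2 zero_le_one) (mem_Ici.2 (zero_le_one.trans ht)) ht)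
  simp only [sub_self] at h2
  linarith

/-- Any two F orbits run into each other: there is only one orbit of type F. -/
lemma F_meet (h : p.Sol x y) (h' : p.Sol x' y') (hF : p.FT x y) (hF' : p.FT x' y') :
    ∃ S ≥ 0, ∃ S' ≥ 0, x S = x' S' ∧ y S = y' S' := by
  obtain ⟨hl, -, -, T, hT, hy⟩ := h.F_lim hF
  obtain ⟨hl', -, -, T', hT', hy'⟩ := h'.F_lim hF'
  have hq := p.hq
  have hK := p.hK
  have hB := p.hB
  have hq2 : 0 < p.q - 2 := by linarith
  have hq1 : 0 < p.q - 1 := by linarith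
  -- `δ` is a level below which the linear term dominates
  set δ := (p.B / (p.K * (p.q - 1))) ^ (1 / (p.q - 2)) with hδ
  have hδp : 0 < δ := by positivity
  have hδ1 : p.K * ((p.q - 1) * δ ^ (p.q - 2)) ≤ p.B := by
    rw [hδ, ← rpow_mul (by positivity), one_div_mul_cancel hq2.ne', rpow_one]
    apply le_of_eq; field_simp
  set ε := min (min (x T) (x' T')) δ with hε
  have hεp : 0 < ε := lt_min (lt_min (hF.1 T hT) (hF'.1 T' hT')) hδp
  have reach : ∀ {x y : ℝ → ℝ} {T : ℝ}, p.Sol x y → 0 < T → Tendsto x atTop (𝓝 0) → ε ≤ x T →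
      ∃ S, T ≤ S ∧ x S = ε := by
    intro x y T h hT hl hle
    obtain ⟨b, hb, hb'⟩ := ((hl.eventually (gt_mem_nhds hεp)).and (eventually_ge_atTop T)).exists
    obtain ⟨S, hS, hS'⟩ := intermediate_value_Icc' hb' (f := x)
      (h.cx.mono (fun t ht => hT.le.trans ht.1)) ⟨hb.le, hle⟩
    exact ⟨S, hS.1, hS'⟩
  obtain ⟨S, hS, hxS⟩ := reach h hT hl ((min_le_left _ _).trans (min_le_left _ _))
  obtain ⟨S', hS', hxS'⟩ := reach h' hT' hl' ((min_le_left _ _).trans (min_le_right _ _))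
  have hS0 : 0 ≤ S := by linarith
  have hS0' : 0 ≤ S' := by linarith
  have small : ∀ {x y : ℝ → ℝ} {T S : ℝ}, p.Sol x y → p.FT x y → 0 < T → T ≤ S →
      (∀ t, T ≤ t → y t < 0) → x S = ε → ∀ t, 0 ≤ t → 0 < x (S + t) ∧ x (S + t) ≤ δ := by
    intro x y T S h hF hT hS hy hxS t ht
    refine ⟨hF.1 _ (by linarith), ?_⟩
    have := anti_of_deriv (convex_Ici T) (fun t ht => h.dx (by linarith [mem_Ici.1 ht]))
      (fun t ht => (hy t ht).le) (mem_Ici.2 hS) (mem_Ici.2 (show T ≤ S + t by linarith))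
      (by linarith)
    rw [hxS] at this
    exact this.trans (min_le_right _ _)
  have hsh : Tendsto (fun t => x (S + t)) atTop (𝓝 0) :=
    hl.comp (tendsto_atTop_add_const_left _ _ tendsto_id)
  have hsh' : Tendsto (fun t => x' (S' + t)) atTop (𝓝 0) :=
    hl'.comp (tendsto_atTop_add_const_left _ _ tendsto_id)
  have e1 := F_meet_aux (h.shift hS0) (h'.shift hS0') hδ1 (small h hF hT hS hy hxS)
    (small h' hF' hT' hS' hy' hxS') (by simp [hxS, hxS']) hsh hsh'
  have e2 := F_meet_aux (h'.shift hS0') (h.shift hS0) hδ1 (small h' hF' hT' hS' hy' hxS')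
    (small h hF hT hS hy hxS) (by simp [hxS, hxS']) hsh' hsh
  simp only [add_zero] at e1 e2
  exact ⟨S, hS0, S', hS0', by rw [hxS, hxS'], le_antisymm e1 e2⟩

end Sol
end Par

/-! ### Orbits with small and with large initial energy -/

namespace Par
variable {p : Par}
namespace Sol
variable {x y x' y' : ℝ → ℝ}

/-- An orbit leaving the `y`-axis with small speed loses its energy before turning back. -/
lemma drop (p : Par) : ∃ δ > 0, ∀ x y : ℝ → ℝ, p.Sol x y → x 0 = 0 → 0 < y 0 → y 0 < δ →
    p.ST x y := by
  have hq := p.hq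
  have hK := p.hK
  have hB := p.hB
  have hA := p.hA
  have hq2 : 0 < p.q - 2 := by linarith
  have hq0 : 0 < p.q := by linarith
  set x1 := (p.B * p.q / (4 * p.K)) ^ (1 / (p.q - 2)) with hx1
  have hx1p : 0 < x1 := by positivity
  have hx1e : p.K / p.q * x1 ^ (p.q - 2) = p.B / 4 := by
    rw [hx1, ← rpow_mul (by positivity), one_div_mul_cancel hq2.ne', rpow_one]
    field_simp
  set c := √(p.B / 2) with hc
  have hcp : 0 < c := sqrt_pos.2 (by positivity)
  have hc2 : c ^ 2 = p.B / 2 := sq_sqrt (by positivity)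
  -- below the level `x1`, nonnegative energy forces `|y| ≥ c x`
  have slope : ∀ a b, 0 ≤ a → a ≤ x1 → 0 ≤ p.En a b → (c * a) ^ 2 ≤ b ^ 2 := by
    intro a b ha ha1 hE
    rcases ha.eq_or_lt with h0 | h0
    · rw [← h0]; simpa using sq_nonneg b
    unfold En at hE
    have h1 : |a| ^ p.q = a ^ 2 * a ^ (p.q - 2) := by
      rw [abs_of_pos h0, ← rpow_natCast, ← rpow_add h0]; norm_num
    have h2 : p.K / p.q * a ^ (p.q - 2) ≤ p.B / 4 := by
      rw [← hx1e]; gcongr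
    rw [h1] at hE
    have h3 : a ^ 2 * (p.K / p.q * a ^ (p.q - 2)) ≤ a ^ 2 * (p.B / 4) := by gcongr
    rw [mul_pow, hc2]
    nlinarith
  -- to turn back with nonnegative energy an orbit has to rise to the level `x1` with `y ≥ c x`,
  -- which dissipates a fixed amount of energy
  have main : ∀ x y : ℝ → ℝ, p.Sol x y → x 0 = 0 → 0 < y 0 → ∀ b > 0, (∀ t ∈ Ioc 0 b, 0 < x t) →
      (∀ t ∈ Icc 0 b, 0 ≤ p.En (x t) (y t)) → y b ≤ 0 → p.A * c * x1 ^ 2 ≤ y 0 ^ 2 := by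
    intro x y h hx0 hy0 b hb hxp hE hyb
    obtain ⟨z, hz, hz0, hzp⟩ := first_zero (h.cy.mono (fun t ht => ht.1)) hy0 hb.le hyb
    have hxz : x1 < x z := by
      by_contra hcon
      push Not at hcon
      have h1 := hxp z hz
      have := slope _ _ h1.le hcon (hE z (Ioc_subset_Icc_self hz))
      rw [hz0] at this
      have : 0 < (c * x z) ^ 2 := by positivity
      linarith
    have hmono : MonotoneOn x (Icc 0 z) := mono_of_deriv (convex_Icc 0 z)
      (fun t ht => h.dx ht.1) (fun t ht => by
        rcases ht.2.lt_or_eq with h1 | h1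
        · exact (hzp t ⟨ht.1, h1⟩).le
        · rw [h1]; exact hz0.ge)
    obtain ⟨τ, hτ, hxτ⟩ := intermediate_value_Icc hz.1.le (f := x)
      (h.cx.mono (fun t ht => ht.1)) (show x1 ∈ Icc (x 0) (x z) by rw [hx0]; exact ⟨hx1p.le, hxz.le⟩)
    have hτz : τ < z := by
      rcases hτ.2.lt_or_eq with h1 | h1
      · exact h1
      · rw [h1] at hxτ; linarith
    have hanti := anti_of_deriv (convex_Icc 0 τ)
      (f := fun t => p.En (x t) (y t) + p.A * c * (x t ^ 2 / 2))
      (f' := fun t => -p.A * y t * (y t - c * x t))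
      (fun t ht => by
        refine ((h.dE ht.1).add ((((h.dx ht.1).pow 2).div_const 2).const_mul
          (p.A * c))).congr_deriv ?_
        simp only [Nat.cast_ofNat]; ring)
      (fun t ht => by
        have htz : t < z := ht.2.trans_lt hτz
        have hxt : x t ≤ x1 := by rw [← hxτ]; exact hmono ⟨ht.1, htz.le⟩ hτ ht.2
        have hx0t : 0 ≤ x t := by rw [← hx0]; exact hmono ⟨le_rfl, hz.1.le⟩ ⟨ht.1, htz.le⟩ ht.1
        have hyt := hzp t ⟨ht.1, htz⟩
        have h1 := slope _ _ hx0t hxt (hE t ⟨ht.1, htz.le.trans hz.2⟩)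
        have h2 : c * x t ≤ y t := abs_le_of_sq_le_sq' h1 hyt.le |>.2
        have : 0 ≤ p.A * y t * (y t - c * x t) := mul_nonneg (by positivity) (by linarith)
        linarith)
      ⟨le_rfl, hτ.1⟩ ⟨hτ.1, le_rfl⟩ hτ.1
    simp only [hx0, hxτ, En_zero_left] at hanti
    have := hE τ ⟨hτ.1, hτ.2.trans hz.2⟩
    rw [hxτ] at this
    nlinarith
  refine ⟨√(p.A * c * x1 ^ 2), sqrt_pos.2 (by positivity), fun x y h hx0 hy0 hyδ => ?_⟩
  have hlt : y 0 ^ 2 < p.A * c * x1 ^ 2 := (lt_sqrt hy0.le).1 hyδ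
  rcases h.trichotomy hx0.ge hy0 with hZ | hS | hF
  · exfalso
    obtain ⟨z, hz, hz0, hzp⟩ := hZ
    obtain ⟨b, hb, hb'⟩ := exists_hasDerivAt_eq_slope x y hz
      (h.cx.mono (fun t ht => ht.1)) (fun t ht => h.dx ht.1.le)
    have := main x y h hx0 hy0 b hb.1 (fun t ht => hzp t ⟨ht.1, ht.2.trans_lt hb.2⟩)
      (fun t ht => (h.En_pos_of_zero hy0 hz.le hz0 t ⟨ht.1, ht.2.trans hb.2.le⟩).le)
      (by rw [hb', hz0, hx0]; simp)
    linarith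
  · exact hS
  · exfalso
    obtain ⟨_, _, _, T, hT, hyT⟩ := h.F_lim hF
    have := main x y h hx0 hy0 T hT (fun t ht => hF.1 t ht.1) (fun t ht => hF.2 t ht.1)
      (hyT T le_rfl).le
    linarith

/-- Sturm comparison with `sin`: where the restoring force dominates, an orbit cannot stay at
`x ≥ X0` for a time `π`. -/
lemma sturm (h : p.Sol x y) {X0 : ℝ} (hX0 : 0 < X0)
    (hX : p.A ^ 2 / 4 + 1 + p.B ≤ p.K * X0 ^ (p.q - 2)) {a : ℝ} (ha : 0 ≤ a) :
    ∃ t ∈ Icc a (a + π), x t < X0 := by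
  by_contra hcon
  push Not at hcon
  have hK := p.hK
  have hq := p.hq
  have hd : ∀ t ∈ Icc a (a + π), HasDerivAt
      (fun t => exp (p.A / 2 * t) * ((y t + p.A / 2 * x t) * sin (t - a) - x t * cos (t - a)))
      (exp (p.A / 2 * t) * (sin (t - a) *
        ((p.A ^ 2 / 4 + 1 + p.B) * x t - p.K * gq p.q (x t)))) t := by
    intro t ht
    have ht0 : 0 ≤ t := ha.trans ht.1
    have h1 : HasDerivAt (fun s => exp (p.A / 2 * s)) (exp (p.A / 2 * t) * (p.A / 2)) t := by
      simpa using ((hasDerivAt_id t).const_mul (p.A / 2)).exp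
    have h2 : HasDerivAt (fun s => sin (s - a)) (cos (t - a)) t := by
      simpa using ((hasDerivAt_id t).sub_const a).sin
    have h3 : HasDerivAt (fun s => cos (s - a)) (- sin (t - a)) t := by
      simpa using ((hasDerivAt_id t).sub_const a).cos
    refine (h1.mul ((((h.dy ht0).add ((h.dx ht0).const_mul (p.A / 2))).mul h2).sub
      ((h.dx ht0).mul h3))).congr_deriv ?_
    simp only [Pi.add_apply, Pi.sub_apply, Pi.mul_apply]
    ring
  have hanti := anti_of_deriv (convex_Icc a (a + π)) hd (fun t ht => by
    have hx := hcon t ht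
    have hxp : 0 < x t := hX0.trans_le hx
    have hs : 0 ≤ sin (t - a) := sin_nonneg_of_nonneg_of_le_pi (by linarith [ht.1])
      (by linarith [ht.2])
    have h1 : p.K * X0 ^ (p.q - 2) ≤ p.K * x t ^ (p.q - 2) := by
      have : 0 ≤ p.q - 2 := by linarith
      gcongr
    have h2 : (p.A ^ 2 / 4 + 1 + p.B) * x t ≤ p.K * gq p.q (x t) := by
      rw [gq, abs_of_pos hxp]
      nlinarith
    have := exp_pos (p.A / 2 * t)
    exact mul_nonpos_of_nonneg_of_nonpos this.le
      (mul_nonpos_of_nonneg_of_nonpos hs (by linarith)))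
    ⟨le_rfl, by linarith [pi_pos]⟩ ⟨by linarith [pi_pos], le_rfl⟩
    (show a ≤ a + π by linarith [pi_pos])
  simp only [add_sub_cancel_left, sub_self, sin_pi, cos_pi, sin_zero, cos_zero] at hanti
  have e1 := hcon a ⟨le_rfl, by linarith [pi_pos]⟩
  have e2 := hcon (a + π) ⟨by linarith [pi_pos], le_rfl⟩
  have e3 : 0 < exp (p.A / 2 * (a + π)) * x (a + π) :=
    mul_pos (exp_pos _) (by linarith)
  have e4 : 0 < exp (p.A / 2 * a) * x a := mul_pos (exp_pos _) (by linarith)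
  nlinarith

/-- The potential energy is bounded below. -/
lemma En_lower (p : Par) : ∃ V ≥ 0, ∀ a b, b ^ 2 / 2 ≤ p.En a b + V := by
  obtain ⟨R, hR, hb⟩ := p.box 0
  have hB := p.hB
  refine ⟨p.B * R ^ 2 / 2, by positivity, fun a b => ?_⟩
  have hE : p.En a b = b ^ 2 / 2 + p.En a 0 := by simp only [En]; ring
  rcases le_total (p.En a 0) 0 with h | h
  · have h1 := (hb a 0 h).1
    have h2 : a ^ 2 ≤ R ^ 2 := by rw [← sq_abs]; gcongr
    have h3 : 0 ≤ p.K / p.q * |a| ^ p.q := by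
      have := p.hK
      have : 0 < p.q := by linarith [p.hq]
      positivity
    unfold En
    nlinarith
  · rw [hE]
    have : 0 ≤ p.B * R ^ 2 / 2 := by positivity
    linarith

/-- Energy decays at most exponentially. -/
lemma En_decay (h : p.Sol x y) {V : ℝ} (hV : ∀ a b, b ^ 2 / 2 ≤ p.En a b + V) {t : ℝ}
    (ht : 0 ≤ t) : (p.En (x 0) (y 0) + V) * exp (-(2 * p.A * t)) ≤ p.En (x t) (y t) + V := by
  have hA := p.hA
  have hm := mono_of_deriv (convex_Ici (0:ℝ))
    (f := fun t => (p.En (x t) (y t) + V) * exp (2 * p.A * t))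
    (f' := fun t => (2 * p.A) * (p.En (x t) (y t) + V - y t ^ 2 / 2) * exp (2 * p.A * t))
    (fun t ht => by
      have h1 : HasDerivAt (fun s => exp (2 * p.A * s)) (exp (2 * p.A * t) * (2 * p.A)) t := by
        simpa using ((hasDerivAt_id t).const_mul (2 * p.A)).exp
      refine (((h.dE ht).add_const V).mul h1).congr_deriv ?_
      ring)
    (fun t ht => by
      have := hV (x t) (y t)
      have h2 : 0 ≤ p.En (x t) (y t) + V - y t ^ 2 / 2 := by linarith
      positivity)
    (mem_Ici.2 le_rfl) (mem_Ici.2 ht) ht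
  simp only [mul_zero, exp_zero, mul_one] at hm
  rw [exp_neg, ← div_eq_mul_inv, div_le_iff₀ (exp_pos _)]
  exact hm

/-- High energy orbits cross the `y`-axis within a bounded time, still with high energy. -/
lemma large (p : Par) (M : ℝ) : ∃ N, ∀ x y : ℝ → ℝ, p.Sol x y → 0 ≤ x 0 → 0 < y 0 →
    N ≤ p.En (x 0) (y 0) → ∃ z > 0, x z = 0 ∧ (∀ t ∈ Ioo 0 z, 0 < x t) ∧ M ≤ y z ^ 2 / 2 := by
  obtain ⟨V, hV0, hV⟩ := En_lower p
  have hA := p.hA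
  have hB := p.hB
  have hK := p.hK
  have hq := p.hq
  have hq2 : 0 < p.q - 2 := by linarith
  have hq0 : 0 < p.q := by linarith
  set X0 := ((p.A ^ 2 / 4 + 1 + p.B) / p.K) ^ (1 / (p.q - 2)) with hX0
  have hX0p : 0 < X0 := by positivity
  have hX : p.A ^ 2 / 4 + 1 + p.B ≤ p.K * X0 ^ (p.q - 2) := by
    rw [hX0, ← rpow_mul (by positivity), one_div_mul_cancel hq2.ne', rpow_one]
    apply le_of_eq; field_simp
  set Y := X0 + 1 with hY
  set E1 := |M| + Y ^ 2 / 2 + p.K / p.q * X0 ^ p.q with hE1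
  have hE1p : 0 < E1 := by positivity
  set T := 2 * π + 2 with hT
  have hTp : 0 < T := by positivity
  refine ⟨(E1 + V) * exp (2 * p.A * T) - V, fun x y h hx0 hy0 hN => ?_⟩
  -- the energy stays above `E1` on the whole interval `[0, T]`
  have hE : ∀ t ∈ Icc 0 T, E1 ≤ p.En (x t) (y t) := by
    intro t ht
    have h1 := h.En_decay hV ht.1
    have h2 : (E1 + V) * exp (2 * p.A * T) * exp (-(2 * p.A * t)) ≤
        (p.En (x 0) (y 0) + V) * exp (-(2 * p.A * t)) := by
      have : (E1 + V) * exp (2 * p.A * T) ≤ p.En (x 0) (y 0) + V := by linarith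
      gcongr
    have h3 : (E1 + V) ≤ (E1 + V) * exp (2 * p.A * T) * exp (-(2 * p.A * t)) := by
      rw [mul_assoc, ← exp_add]
      have : 1 ≤ exp (2 * p.A * T + -(2 * p.A * t)) := by
        apply one_le_exp
        have := ht.2
        have : p.A * t ≤ p.A * T := by gcongr
        linarith
      have h4 : 0 ≤ E1 + V := by positivity
      simpa using mul_le_mul_of_nonneg_left this h4
    linarith
  -- the speed in the strip `0 ≤ x ≤ X0` exceeds its width, so the strip is crossed in unit time
  have fast : ∀ t ∈ Icc 0 T, 0 ≤ x t → x t ≤ X0 → Y ^ 2 ≤ y t ^ 2 := by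
    intro t ht h0 h1
    have h2 := hE t ht
    unfold En at h2
    have h3 : p.K / p.q * |x t| ^ p.q ≤ p.K / p.q * X0 ^ p.q := by
      rw [abs_of_nonneg h0]; gcongr
    have h4 : 0 ≤ p.B * x t ^ 2 / 2 := by positivity
    have := abs_nonneg M
    linarith
  suffices hex : ∃ b ∈ Ioc 0 T, x b ≤ 0 by
    obtain ⟨b, hb, hb'⟩ := hex
    obtain ⟨z, hz, hz0, hzp⟩ := h.exit_of_nonpos hx0 hy0 hb.1 hb'
    refine ⟨z, hz.1, hz0, hzp, ?_⟩
    have := hE z ⟨hz.1.le, hz.2.trans hb.2⟩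
    rw [hz0, En_zero_left] at this
    have h1 := le_abs_self M
    have h2 : 0 ≤ Y ^ 2 / 2 + p.K / p.q * X0 ^ p.q := by positivity
    linarith
  by_contra hcon
  push Not at hcon
  have hpos : ∀ t ∈ Icc 0 T, 0 ≤ x t := by
    intro t ht
    rcases ht.1.eq_or_lt with h1 | h1
    · rw [← h1]; exact hx0
    · exact (hcon t ⟨h1, ht.2⟩).le
  have hpi := pi_pos
  -- the orbit turns around
  have turn : ∃ t ∈ Ioc 0 (1 + π), y t < 0 := by
    by_contra hc
    push Not at hc
    have hyn : ∀ t ∈ Icc 0 (1 + π), 0 ≤ y t := by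
      intro t ht
      rcases ht.1.eq_or_lt with h1 | h1
      · rw [← h1]; exact hy0.le
      · exact hc t ⟨h1, ht.2⟩
    have hm := mono_of_deriv (convex_Icc 0 (1 + π)) (f := x) (fun t ht => h.dx ht.1) hyn
    have hx1 : X0 ≤ x 1 := by
      by_contra hlt
      push Not at hlt
      have hm2 := mono_of_deriv (convex_Icc (0:ℝ) 1) (f := fun t => x t - Y * t)
        (f' := fun t => y t - Y)
        (fun t ht => ((h.dx ht.1).sub ((hasDerivAt_id t).const_mul Y)).congr_deriv (by simp))
        (fun t ht => by
          have htp : t ≤ 1 + π := by linarith [ht.2]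
          have h1 : x t ≤ X0 :=
            (hm ⟨ht.1, htp⟩ ⟨by linarith, by linarith⟩ ht.2).trans hlt.le
          have htT : t ∈ Icc 0 T := ⟨ht.1, by linarith [ht.2]⟩
          have h2 := fast t htT (hpos t htT) h1
          have := abs_le_of_sq_le_sq' h2 (hyn t ⟨ht.1, htp⟩)
          linarith [this.2])
        ⟨le_rfl, zero_le_one⟩ ⟨zero_le_one, le_rfl⟩ zero_le_one
      simp only [mul_zero, mul_one, sub_zero] at hm2
      linarith
    obtain ⟨t, ht, htX⟩ := h.sturm hX0p hX (a := 1) zero_le_one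
    have := hm ⟨zero_le_one, by linarith⟩ ⟨by linarith [ht.1], ht.2⟩ ht.1
    linarith
  obtain ⟨a, ha, hya⟩ := turn
  have hneg : ∀ t ∈ Icc a T, y t < 0 := by
    intro t ht
    rcases ht.1.eq_or_lt with h1 | h1
    · rwa [← h1]
    · refine stay_neg (a := a) (b := T) (fun s hs => h.dy (ha.1.le.trans hs.1)) hya.le
        (fun s hs h0 => dy_neg p ?_ (hcon s ⟨ha.1.trans_le hs.1, hs.2⟩) h0) t ⟨h1, ht.2⟩
      exact hE1p.le.trans (hE s ⟨ha.1.le.trans hs.1, hs.2⟩)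
  obtain ⟨b, hb, hbX⟩ := h.sturm hX0p hX ha.1.le
  have hbT : b + 1 ≤ T := by linarith [hb.2, ha.2]
  have hb0 : 0 < b := ha.1.trans_le hb.1
  have hanti := anti_of_deriv (convex_Icc b (b + 1)) (f := x)
    (fun t ht => h.dx (by linarith [ht.1]))
    (fun t ht => (hneg t ⟨by linarith [ht.1, hb.1], by linarith [ht.2]⟩).le)
  have hfall := anti_of_deriv (convex_Icc b (b + 1)) (f := fun t => x t + Y * t)
    (f' := fun t => y t + Y)
    (fun t ht => ((h.dx (by linarith [ht.1])).add
      ((hasDerivAt_id t).const_mul Y)).congr_deriv (by simp))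
    (fun t ht => by
      have h1 := hanti ⟨le_rfl, by linarith⟩ ht ht.1
      have htT : t ∈ Icc 0 T := ⟨by linarith [ht.1], by linarith [ht.2]⟩
      have h2 := fast t htT (hpos t htT) (by linarith)
      have h3 := hneg t ⟨by linarith [ht.1, hb.1], by linarith [ht.2]⟩
      have : Y ^ 2 ≤ (-y t) ^ 2 := by rwa [neg_sq]
      have := abs_le_of_sq_le_sq' this (by linarith)
      linarith [this.2])
    ⟨le_rfl, by linarith⟩ ⟨by linarith, le_rfl⟩ (show b ≤ b + 1 by linarith)
  simp only at hfall
  have := hpos (b + 1) ⟨by linarith, hbT⟩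
  linarith

end Sol
end Par

/-! ### Orbits issued from a curve of initial data -/

namespace Par
variable {p : Par}

/-- The orbit first leaves the half plane `x > 0` at the point `(0, -P)`. -/
def ExitAt (x y : ℝ → ℝ) (P : ℝ) : Prop :=
  ∃ z > 0, x z = 0 ∧ (∀ t ∈ Ioo 0 z, 0 < x t) ∧ y z = -P

/-- A continuous curve of initial data in the quadrant `x ≥ 0`, `y > 0`, together with the orbits
it generates; no orbit meets the curve again before leaving `x > 0`. The curve comes from the
region of type S and goes to infinite energy. -/
structure Section (p : Par) where
  X : ℝ → ℝ → ℝ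
  Y : ℝ → ℝ → ℝ
  sol : ∀ s, p.Sol (X s) (Y s)
  cx : Continuous fun s => X s 0
  cy : Continuous fun s => Y s 0
  hx : ∀ s, 0 ≤ X s 0
  hy : ∀ s, 0 < Y s 0
  inj : ∀ s s', X s 0 = X s' 0 → Y s 0 = Y s' 0 → s = s'
  ret : ∀ s s' t, 0 < t → (∀ r ∈ Ioc 0 t, 0 < X s r) → X s t = X s' 0 → Y s t = Y s' 0 → False
  lowev : ∃ s0, ∀ s ≤ s0, p.ST (X s) (Y s)
  high : Tendsto (fun s => p.En (X s 0) (Y s 0)) atTop atTop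

namespace Section
variable (c : p.Section)

lemma En_cont (p : Par) : Continuous fun z : ℝ × ℝ => p.En z.1 z.2 := by
  unfold En
  have : Continuous fun z : ℝ × ℝ => |z.1| ^ p.q :=
    (continuous_fst.abs).rpow_const (fun _ => Or.inr (by linarith [p.hq]))
  fun_prop

lemma near (s0 T : ℝ) {ε : ℝ} (hε : 0 < ε) : ∀ᶠ s in 𝓝 s0, ∀ t ∈ Icc 0 T,
    |c.X s t - c.X s0 t| < ε ∧ |c.Y s t - c.Y s0 t| < ε := by
  obtain ⟨C, hC0, hC⟩ := Sol.dep p (p.En (c.X s0 0) (c.Y s0 0) + 1)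
  have hcc : Continuous fun s => (c.X s 0, c.Y s 0) := c.cx.prodMk c.cy
  have h1 : ∀ᶠ s in 𝓝 s0, p.En (c.X s 0) (c.Y s 0) < p.En (c.X s0 0) (c.Y s0 0) + 1 :=
    ((En_cont p).comp hcc).continuousAt.eventually (gt_mem_nhds (by simp))
  have h2 : ∀ᶠ s in 𝓝 s0, dist (c.X s 0, c.Y s 0) (c.X s0 0, c.Y s0 0) < ε * exp (-(C * T)) :=
    hcc.continuousAt.eventually (Metric.ball_mem_nhds _ (by positivity))
  filter_upwards [h1, h2] with s hs1 hs2 t ht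
  have h3 := hC _ _ _ _ (c.sol s) (c.sol s0) hs1.le (by linarith) t ht.1
  have h4 : dist (c.X s t, c.Y s t) (c.X s0 t, c.Y s0 t) < ε := by
    refine h3.trans_lt ?_
    calc _ < ε * exp (-(C * T)) * exp (C * t) := by gcongr
      _ = ε * exp (-(C * T) + C * t) := by rw [mul_assoc, exp_add]
      _ ≤ ε * 1 := by
        have : exp (-(C * T) + C * t) ≤ 1 := exp_le_one_iff.2 (by
          have := mul_le_mul_of_nonneg_left ht.2 hC0
          linarith)
        gcongr
      _ = ε := mul_one _
  rw [Prod.dist_eq, max_lt_iff, Real.dist_eq, Real.dist_eq] at h4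
  exact h4

lemma pos_stable (s0 : ℝ) {T : ℝ} (hT : 0 < T) (hp : ∀ t ∈ Ioc 0 T, 0 < c.X s0 t) :
    ∀ᶠ s in 𝓝 s0, ∀ t ∈ Ioc 0 T, 0 < c.X s t := by
  have hy := c.hy s0
  have h1 := ((c.sol s0).dy le_rfl).continuousAt.eventually
    (lt_mem_nhds (show c.Y s0 0 / 2 < c.Y s0 0 by linarith))
  obtain ⟨ε, hε, h2⟩ := Metric.eventually_nhds_iff.1 h1
  set δ := min (ε / 2) T with hδ
  have hδp : 0 < δ := lt_min (by positivity) hT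
  obtain ⟨τ, hτ, hmin⟩ := (isCompact_Icc (a := δ) (b := T)).exists_isMinOn
    ⟨δ, le_rfl, min_le_right _ _⟩ ((c.sol s0).cx.mono (fun t ht => hδp.le.trans ht.1))
  have hm : 0 < c.X s0 τ := hp τ ⟨hδp.trans_le hτ.1, hτ.2⟩
  filter_upwards [c.near s0 T (show 0 < c.Y s0 0 / 2 by linarith), c.near s0 T hm]
    with s hs1 hs2 t ht
  rcases le_total t δ with h | h
  · have := smono_of_deriv (convex_Icc 0 δ) (f := c.X s) (f' := c.Y s)
      (fun r hr => (c.sol s).dx hr.1) (fun r hr => by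
        have h3 := (abs_lt.1 (hs1 r ⟨hr.1, hr.2.trans (min_le_right _ _)⟩).2).1
        have h4 : c.Y s0 0 / 2 < c.Y s0 r := h2 (by
          rw [dist_zero_right, norm_eq_abs, abs_of_nonneg hr.1]
          have : δ ≤ ε / 2 := min_le_left _ _
          linarith [hr.2])
        linarith)
      ⟨le_rfl, hδp.le⟩ ⟨ht.1.le, h⟩ ht.1
    linarith [c.hx s]
  · have h3 := (abs_lt.1 (hs2 t ⟨ht.1.le, ht.2⟩).1).1
    have h4 : c.X s0 τ ≤ c.X s0 t := hmin (show t ∈ Icc δ T from ⟨h, ht.2⟩)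
    linarith

lemma isOpen_S : IsOpen {s | p.ST (c.X s) (c.Y s)} := by
  rw [isOpen_iff_mem_nhds]
  rintro s0 ⟨hpos, t0, ht0, hE⟩
  have hcont : ContinuousAt (fun z : ℝ × ℝ => p.En z.1 z.2) (c.X s0 t0, c.Y s0 t0) :=
    (En_cont p).continuousAt
  obtain ⟨ε, hε, h1⟩ := Metric.eventually_nhds_iff.1 (hcont.eventually (gt_mem_nhds hE))
  filter_upwards [c.near s0 t0 hε, c.pos_stable s0 (T := t0 + 1) (by linarith)
    (fun t ht => hpos t ht.1)] with s hs1 hs2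
  have hE' : p.En (c.X s t0) (c.Y s t0) < 0 := h1 (y := (c.X s t0, c.Y s t0)) (by
    rw [Prod.dist_eq, max_lt_iff, Real.dist_eq, Real.dist_eq]
    exact hs1 t0 ⟨ht0, le_rfl⟩)
  rcases (c.sol s).trichotomy (c.hx s) (c.hy s) with hZ | hS | hF
  · exfalso
    obtain ⟨z, hz, hz0, _⟩ := hZ
    rcases le_total t0 z with h | h
    · exact absurd ((c.sol s).En_pos_of_zero (c.hy s) hz.le hz0 t0 ⟨ht0, h⟩) (not_lt.2 hE'.le)
    · exact absurd (hs2 z ⟨hz, by linarith⟩) (by rw [hz0]; exact lt_irrefl _)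
  · exact hS
  · exact absurd (hF.2 t0 ht0) (not_le.2 hE')

/-- Exit times depend continuously on the parameter. -/
lemma exit_near {s0 z : ℝ} (hz : 0 < z) (hz0 : c.X s0 z = 0)
    (hp : ∀ t ∈ Ioo 0 z, 0 < c.X s0 t) {ε : ℝ} (hε : 0 < ε) :
    ∀ᶠ s in 𝓝 s0, ∃ z' > 0, |z' - z| < ε ∧ c.X s z' = 0 ∧ ∀ t ∈ Ioo 0 z', 0 < c.X s t := by
  set η := min (ε / 2) (z / 2) with hη
  have hηp : 0 < η := lt_min (by positivity) (by positivity)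
  have hηz : η ≤ z / 2 := min_le_right _ _
  have hηε : η ≤ ε / 2 := min_le_left _ _
  have hyz : c.Y s0 z < 0 := by
    rcases lt_trichotomy (c.Y s0 z) 0 with h | h | h
    · exact h
    · exact absurd h ((c.sol s0).ne_zero (Or.inr (c.hy s0).ne') hz.le hz0)
    · exfalso
      have hs := ((c.sol s0).dx hz.le).hasDerivWithinAt (s := Iio z)
      rw [hasDerivWithinAt_iff_tendsto_slope' (by simp)] at hs
      obtain ⟨t, ht1, ht2⟩ := ((hs.eventually (lt_mem_nhds h)).and (Ioo_mem_nhdsLT hz)).exists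
      rw [slope_def_field, hz0] at ht1
      have : (c.X s0 t - 0) / (t - z) ≤ 0 :=
        div_nonpos_of_nonneg_of_nonpos (by linarith [hp t ht2]) (by linarith [ht2.2])
      linarith
  -- a time slightly after `z` at which the reference orbit is in `x < 0`
  have hafter : ∃ b ∈ Ioo z (z + η), c.X s0 b < 0 := by
    have hs := ((c.sol s0).dx hz.le).hasDerivWithinAt (s := Ioi z)
    rw [hasDerivWithinAt_iff_tendsto_slope' (by simp)] at hs
    obtain ⟨t, ht1, ht2⟩ := ((hs.eventually (gt_mem_nhds hyz)).and
      (Ioo_mem_nhdsGT (show z < z + η by linarith))).exists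
    refine ⟨t, ht2, ?_⟩
    rw [slope_def_field, hz0, div_neg_iff] at ht1
    rcases ht1 with h | h
    · linarith [ht2.1, h.2]
    · linarith [h.1]
  obtain ⟨b, hb, hxb⟩ := hafter
  filter_upwards [c.near s0 b (show 0 < -c.X s0 b by linarith),
    c.pos_stable s0 (T := z - η) (by linarith) (fun t ht => hp t ⟨ht.1, by linarith [ht.2]⟩)]
    with s hs1 hs2
  have hb0 : 0 < b := hz.trans hb.1
  have h1 := (abs_lt.1 (hs1 b ⟨hb0.le, le_rfl⟩).1).2
  obtain ⟨z', hz', hz0', hp'⟩ := (c.sol s).exit_of_nonpos (c.hx s) (c.hy s) hb0 (by linarith)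
  refine ⟨z', hz'.1, ?_, hz0', hp'⟩
  have h2 : z - η < z' := by
    by_contra hc
    push Not at hc
    exact absurd (hs2 z' ⟨hz'.1, hc⟩) (by rw [hz0']; exact lt_irrefl _)
  rw [abs_lt]
  constructor <;> linarith [hz'.2, hb.2]

lemma isOpen_Z : IsOpen {s | ZT (c.X s)} := by
  rw [isOpen_iff_mem_nhds]
  rintro s0 ⟨z, hz, hz0, hp⟩
  filter_upwards [c.exit_near hz hz0 hp one_pos] with s hs
  obtain ⟨z', h1, _, h2, h3⟩ := hs
  exact ⟨z', h1, h2, h3⟩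

/-- Orbits of a section that meet before leaving `x > 0`, or at the exit point, coincide: followed
backwards from the meeting point, one of them starts on the other, which does not return to the
curve. -/
lemma meet {s s' T T' : ℝ} (hT : 0 ≤ T) (hT' : 0 ≤ T')
    (hp : ∀ t ∈ Ioo 0 T, 0 < c.X s t) (hp' : ∀ t ∈ Ioo 0 T', 0 < c.X s' t)
    (hpT : 0 < T) (hpT' : 0 < T')
    (hx : c.X s T = c.X s' T') (hy : c.Y s T = c.Y s' T') : s = s' := by
  wlog hle : T ≤ T' generalizing s s' T T'
  · exact (this hT' hT hp' hp hpT' hpT hx.symm hy.symm (le_of_not_ge hle)).symm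
  obtain ⟨h1, h2⟩ := (c.sol s).unique_back' (c.sol s') hT hle hx hy
  rcases hle.eq_or_lt with h | h
  · rw [h, sub_self] at h1 h2
    exact c.inj _ _ h1 h2
  · exact (c.ret s' s (T' - T) (by linarith)
      (fun r hr => hp' r ⟨hr.1, by linarith [hr.2]⟩) h1.symm h2.symm).elim

lemma F_unique {s s' : ℝ} (h : p.FT (c.X s) (c.Y s)) (h' : p.FT (c.X s') (c.Y s')) : s = s' := by
  obtain ⟨T, hT, T', hT', hx, hy⟩ := (c.sol s).F_meet (c.sol s') h h'
  have e1 := ((c.sol s).shift hT).unique ((c.sol s').shift hT') (by simpa using hx)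
    (by simpa using hy) 1 zero_le_one
  exact c.meet (T := T + 1) (T' := T' + 1) (by linarith) (by linarith)
    (fun t ht => h.1 t ht.1) (fun t ht => h'.1 t ht.1) (by linarith) (by linarith) e1.1 e1.2

/-- The structure of the family of orbits issued from a section: below a threshold `σ` they are
of type S, at `σ` of type F, and above `σ` they exit through the negative `y`-axis, at a point
that moves continuously and strictly monotonically from `0` to infinity. -/
theorem main : ∃ (σ : ℝ) (P : ℝ → ℝ), (∀ s < σ, p.ST (c.X s) (c.Y s)) ∧
    p.FT (c.X σ) (c.Y σ) ∧ (∀ s > σ, 0 < P s ∧ ExitAt (c.X s) (c.Y s) (P s)) ∧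
    StrictMonoOn P (Ioi σ) ∧ ∀ r > 0, ∃ s > σ, P s = r := by
  set S := {s | p.ST (c.X s) (c.Y s)} with hS
  set Z := {s | ZT (c.X s)} with hZ
  have hSo : IsOpen S := c.isOpen_S
  have hZo : IsOpen Z := c.isOpen_Z
  have hdisj : Disjoint S Z := by
    rw [Set.disjoint_left]
    rintro s hs ⟨z, hz, hz0, _⟩
    exact absurd (hs.1 z hz) (by rw [hz0]; exact lt_irrefl _)
  have htri : ∀ s, s ∈ S ∨ s ∈ Z ∨ p.FT (c.X s) (c.Y s) := by
    intro s
    rcases (c.sol s).trichotomy (c.hx s) (c.hy s) with h | h | h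
    · exact Or.inr (Or.inl h)
    · exact Or.inl h
    · exact Or.inr (Or.inr h)
  have hlarge : ∀ M, ∃ s1, ∀ s ≥ s1, ∃ z > 0, c.X s z = 0 ∧ (∀ t ∈ Ioo 0 z, 0 < c.X s t) ∧
      M ≤ c.Y s z ^ 2 / 2 := by
    intro M
    obtain ⟨N, hN⟩ := Sol.large p M
    obtain ⟨s1, hs1⟩ := eventually_atTop.1 (c.high.eventually_ge_atTop N)
    exact ⟨s1, fun s hs => hN _ _ (c.sol s) (c.hx s) (c.hy s) (hs1 s hs)⟩
  have hZne : ∃ s1, ∀ s ≥ s1, s ∈ Z := by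
    obtain ⟨s1, h⟩ := hlarge 0
    refine ⟨s1, fun s hs => ?_⟩
    obtain ⟨z, h1, h2, h3, _⟩ := h s hs
    exact ⟨z, h1, h2, h3⟩
  obtain ⟨s1, hs1⟩ := hZne
  obtain ⟨s0, hs0⟩ := c.lowev
  -- types S and Z are open and both occur, so connectedness leaves a parameter of type F
  have hF : ∃ σ, p.FT (c.X σ) (c.Y σ) := by
    by_contra hc
    push Not at hc
    have := isPreconnected_univ.subset_left_of_subset_union hSo hZo hdisj
      (fun s _ => by have := htri s; have := hc s; simp only [mem_union]; tauto)
      ⟨s0, mem_univ s0, hs0 s0 le_rfl⟩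
    exact (Set.disjoint_left.1 hdisj) (this (mem_univ s1)) (hs1 s1 le_rfl)
  obtain ⟨σ, hσ⟩ := hF
  have hcov : ∀ s, s ≠ σ → s ∈ S ∪ Z := by
    intro s hs
    rcases htri s with h | h | h
    · exact Or.inl h
    · exact Or.inr h
    · exact absurd (c.F_unique h hσ) hs
  have hSlow : Iio σ ⊆ S := isPreconnected_Iio.subset_left_of_subset_union hSo hZo hdisj
    (fun s hs => hcov s (ne_of_lt hs))
    ⟨min s0 (σ - 1), lt_of_le_of_lt (min_le_right _ _) (show σ - 1 < σ by linarith), hs0 _ (min_le_left _ _)⟩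
  have hZhigh : Ioi σ ⊆ Z := isPreconnected_Ioi.subset_left_of_subset_union hZo hSo hdisj.symm
    (fun s hs => (hcov s (ne_of_gt hs)).symm)
    ⟨max s1 (σ + 1), lt_of_lt_of_le (show σ < σ + 1 by linarith) (le_max_right _ _), hs1 _ (le_max_left _ _)⟩
  have hex : ∀ s, ∃ z, s > σ → 0 < z ∧ c.X s z = 0 ∧ ∀ t ∈ Ioo 0 z, 0 < c.X s t := by
    intro s
    by_cases h : s > σ
    · obtain ⟨z, h1, h2, h3⟩ := hZhigh h
      exact ⟨z, fun _ => ⟨h1, h2, h3⟩⟩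
    · exact ⟨0, fun h' => absurd h' h⟩
  choose z hz using hex
  have zuniq : ∀ s > σ, ∀ z' > 0, c.X s z' = 0 → (∀ t ∈ Ioo 0 z', 0 < c.X s t) → z' = z s := by
    intro s hs z' hz' h0 hp
    obtain ⟨h1, h2, h3⟩ := hz s hs
    rcases lt_trichotomy z' (z s) with h | h | h
    · exact absurd (h3 z' ⟨hz', h⟩) (by rw [h0]; exact lt_irrefl _)
    · exact h
    · exact absurd (hp (z s) ⟨h1, h⟩) (by rw [h2]; exact lt_irrefl _)
  set P : ℝ → ℝ := fun s => - c.Y s (z s) with hP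
  have hPpos : ∀ s > σ, 0 < P s := by
    intro s hs
    obtain ⟨h1, h2, h3⟩ := hz s hs
    have hne := (c.sol s).ne_zero (Or.inr (c.hy s).ne') h1.le h2
    have hle : c.Y s (z s) ≤ 0 := by
      have hd := ((c.sol s).dx h1.le).hasDerivWithinAt (s := Iio (z s))
      rw [hasDerivWithinAt_iff_tendsto_slope' (by simp)] at hd
      refine le_of_tendsto hd ?_
      filter_upwards [Ioo_mem_nhdsLT h1] with t ht
      rw [slope_def_field, h2]
      exact div_nonpos_of_nonneg_of_nonpos (by linarith [h3 t ht]) (by linarith [ht.2])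
    have := lt_of_le_of_ne hle hne
    simp only [hP]; linarith
  have hPc : ContinuousOn P (Ioi σ) := by
    intro s hs
    obtain ⟨h1, h2, h3⟩ := hz s hs
    apply ContinuousAt.continuousWithinAt
    rw [Metric.continuousAt_iff']
    intro ε hε
    have hyc := ((c.sol s).dy h1.le).continuousAt
    obtain ⟨δ, hδ, hd⟩ := Metric.continuousAt_iff.1 hyc (ε / 2) (by positivity)
    filter_upwards [c.exit_near h1 h2 h3 (lt_min hδ one_pos),
      c.near s (z s + 1) (show 0 < ε / 2 by positivity), Ioi_mem_nhds hs] with s' hs1 hs2 hs3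
    obtain ⟨z', e1, e2, e3, e4⟩ := hs1
    have e5 := zuniq s' hs3 z' e1 e3 e4
    rw [lt_min_iff] at e2
    have e6 := (hs2 z' ⟨e1.le, by linarith [(abs_lt.1 e2.2).2]⟩).2
    have e7 := hd (x := z') (by rw [Real.dist_eq]; exact e2.1)
    rw [Real.dist_eq] at e7 ⊢
    simp only [hP, ← e5]
    rw [abs_lt] at e6 e7 ⊢
    constructor <;> linarith [e6.1, e6.2, e7.1, e7.2]
  have hPinj : InjOn P (Ioi σ) := by
    intro s hs s' hs' heq
    obtain ⟨h1, h2, h3⟩ := hz s hs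
    obtain ⟨h1', h2', h3'⟩ := hz s' hs'
    exact c.meet h1.le h1'.le h3 h3' h1 h1' (by rw [h2, h2'])
      (by simp only [hP] at heq; linarith)
  have hPlarge : ∀ M, ∃ s2, ∀ s ≥ s2, s > σ → M ≤ P s := by
    intro M
    obtain ⟨s2, h⟩ := hlarge (M ^ 2 / 2)
    refine ⟨s2, fun s hs hσs => ?_⟩
    obtain ⟨z', e1, e2, e3, e4⟩ := h s hs
    rw [zuniq s hσs z' e1 e2 e3] at e4
    have h5 : M ^ 2 ≤ P s ^ 2 := by simp only [hP, neg_sq]; linarith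
    exact (abs_le_of_sq_le_sq' h5 (hPpos s hσs).le).2
  -- near `σ` the orbits follow the orbit of type F until their energy is small, and the energy
  -- at the exit point is `P ^ 2 / 2`
  have hPsmall : ∀ r > 0, ∃ s > σ, P s < r := by
    intro r hr
    have hEl := ((c.sol σ).F_lim hσ).2.2.1
    obtain ⟨T, hT, hT0⟩ := ((hEl.eventually (gt_mem_nhds (show 0 < r ^ 2 / 2 by positivity))).and
      (eventually_gt_atTop 0)).exists
    have hcont : ContinuousAt (fun z : ℝ × ℝ => p.En z.1 z.2) (c.X σ T, c.Y σ T) :=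
      (En_cont p).continuousAt
    obtain ⟨ε, hε, h1⟩ := Metric.eventually_nhds_iff.1 (hcont.eventually (gt_mem_nhds hT))
    have hev := (c.near σ T hε).and (c.pos_stable σ hT0 (fun t ht => hσ.1 t ht.1))
    obtain ⟨s, ⟨hs1, hs2⟩, hs3⟩ :=
      ((hev.filter_mono nhdsWithin_le_nhds).and (self_mem_nhdsWithin (s := Ioi σ))).exists
    refine ⟨s, hs3, ?_⟩
    obtain ⟨e1, e2, e3⟩ := hz s hs3
    have hE' : p.En (c.X s T) (c.Y s T) < r ^ 2 / 2 := h1 (y := (c.X s T, c.Y s T)) (by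
      rw [Prod.dist_eq, max_lt_iff, Real.dist_eq, Real.dist_eq]
      exact hs1 T ⟨hT0.le, le_rfl⟩)
    have hTz : T ≤ z s := by
      by_contra hc
      push Not at hc
      exact absurd (hs2 (z s) ⟨e1, hc.le⟩) (by rw [e2]; exact lt_irrefl _)
    have h5 := (c.sol s).antiE (mem_Ici.2 hT0.le) (mem_Ici.2 e1.le) hTz
    simp only [e2, En_zero_left] at h5
    have h6 : P s ^ 2 < r ^ 2 := by simp only [hP, neg_sq]; linarith
    exact lt_of_pow_lt_pow_left₀ 2 hr.le h6
  refine ⟨σ, P, hSlow, hσ, fun s hs => ⟨hPpos s hs, ?_⟩, ?_, ?_⟩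
  · obtain ⟨e1, e2, e3⟩ := hz s hs
    exact ⟨z s, e1, e2, e3, by simp [hP]⟩
  · intro a ha b hb hab
    obtain ⟨s2, h2⟩ := hPlarge (P a)
    have hbm : b ≤ max b s2 := le_max_left _ _
    have hsub : Icc a (max b s2) ⊆ Ioi σ := fun t ht => lt_of_lt_of_le ha ht.1
    have := ContinuousOn.strictMonoOn_of_injOn_Icc (hab.le.trans hbm)
      (h2 _ (le_max_right _ _) (lt_of_lt_of_le hb hbm)) (hPc.mono hsub) (hPinj.mono hsub)
    exact this ⟨le_rfl, hab.le.trans hbm⟩ ⟨hab.le, hbm⟩ hab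
  · intro r hr
    obtain ⟨a, ha, hPa⟩ := hPsmall r hr
    obtain ⟨s2, h2⟩ := hPlarge r
    have hb : max a s2 > σ := lt_of_lt_of_le ha (le_max_left _ _)
    obtain ⟨s, hs, hs'⟩ := isPreconnected_Ioi.intermediate_value (s := Ioi σ) ha hb hPc
      ⟨hPa.le, h2 _ (le_max_right _ _) hb⟩
    exact ⟨s, hs, hs'⟩

end Section
end Par

/-! ### Counting zeros along orbits issued from the `y`-axis -/

namespace Par
variable {p : Par}

/-- The set of positive zeros of `x` is finite, with `k` elements. -/
def Cnt (k : ℕ) (x : ℝ → ℝ) : Prop :=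
  ∃ Z : Finset ℝ, Z.card = k ∧ ∀ t, t ∈ Z ↔ 0 < t ∧ x t = 0

lemma Cnt_zero {x : ℝ → ℝ} (h : ∀ t > 0, 0 < x t) : Cnt 0 x :=
  ⟨∅, rfl, fun t => by
    simp only [Finset.notMem_empty, false_iff, not_and]
    exact fun ht h0 => absurd (h t ht) (by rw [h0]; exact lt_irrefl _)⟩

lemma Cnt_congr {k : ℕ} {x x' : ℝ → ℝ} (h : ∀ t, 0 ≤ t → x t = x' t) (hc : Cnt k x') :
    Cnt k x := by
  obtain ⟨Z, h1, h2⟩ := hc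
  refine ⟨Z, h1, fun t => ?_⟩
  rw [h2]
  exact and_congr_right fun ht => by rw [h t ht.le]

lemma Cnt_neg {k : ℕ} {x : ℝ → ℝ} (hc : Cnt k fun t => -x t) : Cnt k x := by
  simpa [Cnt] using hc

lemma Cnt_succ {k : ℕ} {x : ℝ → ℝ} {z : ℝ} (hz : 0 < z) (h0 : x z = 0)
    (hp : ∀ t ∈ Ioo 0 z, 0 < x t) (hc : Cnt k fun t => x (z + t)) : Cnt (k + 1) x := by
  classical
  obtain ⟨Z, h1, h2⟩ := hc
  have hn : z ∉ Z.map (addLeftEmbedding z) := by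
    simp only [Finset.mem_map, addLeftEmbedding_apply, not_exists, not_and]
    intro a ha hh
    have := ((h2 a).1 ha).1
    linarith
  refine ⟨insert z (Z.map (addLeftEmbedding z)), ?_, fun t => ?_⟩
  · rw [Finset.card_insert_of_notMem hn, Finset.card_map, h1]
  · simp only [Finset.mem_insert, Finset.mem_map, addLeftEmbedding_apply]
    constructor
    · rintro (rfl | ⟨a, ha, rfl⟩)
      · exact ⟨hz, h0⟩
      · have := (h2 a).1 ha
        exact ⟨by linarith [this.1], this.2⟩
    · rintro ⟨ht, hx⟩
      rcases lt_trichotomy t z with h | h | h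
      · exact absurd (hp t ⟨ht, h⟩) (by rw [hx]; exact lt_irrefl _)
      · exact Or.inl h
      · exact Or.inr ⟨t - z, (h2 _).2 ⟨by linarith, by simpa using hx⟩, by ring⟩

lemma SlowEnd_shift {x : ℝ → ℝ} {z : ℝ} (h : SlowEnd fun t => x (z + t)) : SlowEnd x := by
  obtain ⟨T, c, C, hc, h⟩ := h
  refine ⟨z + T, c, C, hc, fun t ht => ?_⟩
  simpa using h (t - z) (by linarith)

lemma FastEnd_shift {β : ℝ} {x : ℝ → ℝ} {z : ℝ} (h : FastEnd β fun t => x (z + t)) :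
    FastEnd β x := by
  obtain ⟨L, hL, h⟩ := h
  refine ⟨L * exp (β * z), mul_ne_zero hL (exp_ne_zero _), ?_⟩
  have := (h.comp (tendsto_atTop_add_const_right atTop (-z) tendsto_id)).mul_const (exp (β * z))
  refine this.congr fun t => ?_
  simp only [Function.comp, id]
  rw [mul_assoc, ← exp_add, show z + (t + -z) = t by ring, show β * (t + -z) + β * z = β * t by ring]

lemma SlowEnd_congr {x x' : ℝ → ℝ} (h : ∀ t, 0 ≤ t → x t = x' t) (hs : SlowEnd x') :
    SlowEnd x := by
  obtain ⟨T, c, C, hc, hs⟩ := hs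
  refine ⟨max T 0, c, C, hc, fun t ht => ?_⟩
  rw [h t ((le_max_right _ _).trans ht)]
  exact hs t ((le_max_left _ _).trans ht)

lemma FastEnd_congr {β : ℝ} {x x' : ℝ → ℝ} (h : ∀ t, 0 ≤ t → x t = x' t) (hs : FastEnd β x') :
    FastEnd β x := by
  obtain ⟨L, hL, hs⟩ := hs
  refine ⟨L, hL, hs.congr' ?_⟩
  filter_upwards [eventually_ge_atTop 0] with t ht
  rw [h t ht]

lemma SlowEnd_neg {x : ℝ → ℝ} (h : SlowEnd fun t => -x t) : SlowEnd x := by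
  simpa [SlowEnd] using h

lemma FastEnd_neg {β : ℝ} {x : ℝ → ℝ} (h : FastEnd β fun t => -x t) : FastEnd β x := by
  obtain ⟨L, hL, h⟩ := h
  exact ⟨-L, neg_ne_zero.2 hL, by simpa using h.neg⟩

/-- The lower end of the `k`-th gap of a sequence of positive levels. -/
def lo (η : ℕ → ℝ) : ℕ → ℝ
  | 0 => 0
  | k + 1 => η k

/-- Orbits starting on the `y`-axis at height `±η k` have `k` further zeros and decay fast;
those starting strictly between the heights `η (k-1)` and `η k` have `k` further zeros and
do not decay. -/
def Level (p : Par) (β : ℝ) (η : ℕ → ℝ) (k : ℕ) : Prop :=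
  ∀ x y, p.Sol x y → x 0 = 0 →
    (|y 0| = η k → Cnt k x ∧ FastEnd β x) ∧
    (lo η k < |y 0| → |y 0| < η k → Cnt k x ∧ SlowEnd x)

lemma Level.step {β : ℝ} {η : ℕ → ℝ} {k : ℕ} (hl : p.Level β η k) {x y : ℝ → ℝ} {P : ℝ}
    (h : p.Sol x y) (hP : 0 < P) (he : ExitAt x y P) :
    (P = η k → Cnt (k + 1) x ∧ FastEnd β x) ∧
    (lo η k < P → P < η k → Cnt (k + 1) x ∧ SlowEnd x) := by
  obtain ⟨z, hz, hz0, hp, hy⟩ := he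
  have h1 := hl _ _ (h.shift hz.le) (by simpa using hz0)
  simp only [add_zero, hy, abs_neg, abs_of_pos hP] at h1
  refine ⟨fun h2 => ?_, fun h2 h3 => ?_⟩
  · obtain ⟨a, b⟩ := h1.1 h2
    exact ⟨Cnt_succ hz hz0 hp a, FastEnd_shift b⟩
  · obtain ⟨a, b⟩ := h1.2 h2 h3
    exact ⟨Cnt_succ hz hz0 hp a, SlowEnd_shift b⟩

lemma Level.of_pos {β : ℝ} {η : ℕ → ℝ} {k : ℕ} (h0 : 0 ≤ lo η k) (h1 : 0 < η k)
    (h : ∀ x y, p.Sol x y → x 0 = 0 → 0 < y 0 → (y 0 = η k → Cnt k x ∧ FastEnd β x) ∧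
    (lo η k < y 0 → y 0 < η k → Cnt k x ∧ SlowEnd x)) : p.Level β η k := by
  intro x y hs hx
  rcases lt_trichotomy (y 0) 0 with hy | hy | hy
  · rw [abs_of_neg hy]
    have := h _ _ hs.neg (by simpa using hx) (by simpa using hy)
    exact ⟨fun e => (this.1 e).imp Cnt_neg FastEnd_neg,
      fun e e' => (this.2 e e').imp Cnt_neg SlowEnd_neg⟩
  · rw [hy, abs_zero]
    exact ⟨fun e => absurd h1 (by rw [← e]; exact lt_irrefl _),
      fun e => absurd h0 (not_le.2 e)⟩
  · rw [abs_of_pos hy]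
    exact h _ _ hs hx hy

lemma ST.slow {x y : ℝ → ℝ} (hs : p.ST x y) (h : p.Sol x y) : Cnt 0 x ∧ SlowEnd x := by
  obtain ⟨h1, t, ht, hE⟩ := hs
  exact ⟨Cnt_zero h1, h.slowEnd ht hE⟩

/-- The positive `y`-axis, parametrized by `s ↦ (0, e^s)`. -/
theorem exists_axis (p : Par) : ∃ c : p.Section, ∀ s, c.X s 0 = 0 ∧ c.Y s 0 = exp s := by
  have hex : ∀ s : ℝ, ∃ x y, p.Sol x y ∧ x 0 = 0 ∧ y 0 = exp s := fun s => p.exists_sol 0 (exp s)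
  choose X Y hs hX hY using hex
  obtain ⟨δ, hδ, hdrop⟩ := Sol.drop p
  refine ⟨⟨X, Y, hs, by simp only [hX]; fun_prop, by simp only [hY]; fun_prop, fun s => (hX s).ge,
    fun s => by rw [hY]; positivity, fun s s' _ h => exp_injective (by rw [← hY, ← hY, h]),
    fun s s' t ht hp hx _ => ?_, ⟨log δ - 1, fun s h => ?_⟩, ?_⟩, fun s => ⟨hX s, hY s⟩⟩
  · exact absurd (hp t ⟨ht, le_rfl⟩) (by rw [hx, hX]; exact lt_irrefl _)
  · refine hdrop _ _ (hs s) (hX s) (by rw [hY]; positivity) ?_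
    rw [hY, ← lt_log_iff_exp_lt hδ]; linarith
  · simp only [hX, hY, En_zero_left]
    exact ((tendsto_pow_atTop two_ne_zero).comp tendsto_exp_atTop).atTop_div_const two_pos

/-- The full ladder of heights on the `y`-axis. -/
theorem exists_ladder (p : Par) {α β : ℝ} (hα : 0 < α) (hβ : 0 < β)
    (hA : p.A = β - α) (hB : p.B = α * β) :
    ∃ η : ℕ → ℝ, StrictMono η ∧ (∀ k, 0 < η k) ∧ ∀ k, p.Level β η k := by
  obtain ⟨c, hc⟩ := exists_axis p
  obtain ⟨σ, P, hS, hF, hZ, hmono, hsurj⟩ := c.main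
  have hex : ∀ r : ℝ, ∃ s, 0 < r → σ < s ∧ P s = r := by
    intro r
    by_cases hr : 0 < r
    · obtain ⟨s, h⟩ := hsurj r hr
      exact ⟨s, fun _ => h⟩
    · exact ⟨0, fun h => absurd h hr⟩
  choose f hf using hex
  -- `f` inverts the exit map `P`: the next height is the one whose orbit first returns to the
  -- `y`-axis at the previous height
  set η : ℕ → ℝ := fun k => Nat.rec (exp σ) (fun _ r => exp (f r)) k with hη
  have η0 : η 0 = exp σ := rfl
  have ηs : ∀ k, η (k + 1) = exp (f (η k)) := fun k => rfl
  have ηpos : ∀ k, 0 < η k := by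
    intro k
    cases k with
    | zero => rw [η0]; positivity
    | succ k => rw [ηs]; positivity
  have hflt : ∀ {r s : ℝ}, 0 < r → σ < s → (P s < r ↔ s < f r) := by
    intro r s hr hs
    have := hmono.lt_iff_lt hs (hf r hr).1
    rwa [(hf r hr).2] at this
  have hflt' : ∀ {r s : ℝ}, 0 < r → σ < s → (r < P s ↔ f r < s) := by
    intro r s hr hs
    have := hmono.lt_iff_lt (hf r hr).1 hs
    rwa [(hf r hr).2] at this
  have ηlt : ∀ k, η k < η (k + 1) := by
    intro k
    induction k with
    | zero => rw [ηs, η0, exp_lt_exp]; exact (hf _ (exp_pos _)).1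
    | succ k ih =>
      rw [ηs (k + 1), ηs k, exp_lt_exp, ← ηs k, ← hflt (ηpos (k + 1)) (hf _ (ηpos k)).1,
        (hf _ (ηpos k)).2]
      exact ih
  have ηmono : StrictMono η := strictMono_nat_of_lt_succ ηlt
  have hagree : ∀ {x y : ℝ → ℝ}, p.Sol x y → x 0 = 0 → 0 < y 0 →
      ∀ t, 0 ≤ t → x t = c.X (log (y 0)) t := by
    intro x y h hx hy t ht
    exact (h.unique (c.sol _) (by rw [hx, (hc _).1]) (by rw [(hc _).2, exp_log hy]) t ht).1
  refine ⟨η, ηmono, ηpos, fun k => ?_⟩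
  induction k with
  | zero =>
    refine Level.of_pos le_rfl (ηpos 0) fun x y h hx hy => ?_
    have ha := hagree h hx hy
    refine ⟨fun e => ?_, fun _ e => ?_⟩
    · rw [e, η0, log_exp] at ha
      exact ⟨Cnt_congr ha (Cnt_zero hF.1), FastEnd_congr ha ((c.sol σ).F_fast hF hα hβ hA hB)⟩
    · rw [η0, ← log_lt_iff_lt_exp hy] at e
      exact ((hS _ e).slow (c.sol _)).imp (Cnt_congr ha) (SlowEnd_congr ha)
  | succ k ih =>
    refine Level.of_pos (ηpos k).le (ηpos (k + 1)) fun x y h hx hy => ?_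
    have ha := hagree h hx hy
    refine ⟨fun e => ?_, fun e e' => ?_⟩
    · rw [e, ηs, log_exp] at ha
      obtain ⟨h1, h2⟩ := hf (η k) (ηpos k)
      obtain ⟨h3, h4⟩ := hZ _ h1
      exact ((ih.step (c.sol _) h3 h4).1 h2).imp (Cnt_congr ha) (FastEnd_congr ha)
    · change η k < y 0 at e
      have hσ : σ < log (y 0) := by
        rw [lt_log_iff_exp_lt hy, ← η0]
        exact (ηmono.monotone (Nat.zero_le k)).trans_lt e
      rw [ηs, ← log_lt_iff_lt_exp hy, ← hflt (ηpos k) hσ] at e'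
      obtain ⟨h3, h4⟩ := hZ _ hσ
      refine ((ih.step (c.sol _) h3 h4).2 ?_ e').imp (Cnt_congr ha) (SlowEnd_congr ha)
      cases k with
      | zero => exact h3
      | succ j =>
        change η j < P _
        rwa [hflt' (ηpos j) hσ, lt_log_iff_exp_lt hy]

/-- The ladder of parameters on an arbitrary section. -/
theorem Section.ladder (c : p.Section) {α β : ℝ} (hα : 0 < α) (hβ : 0 < β)
    (hA : p.A = β - α) (hB : p.B = α * β) :
    ∃ s : ℕ → ℝ, StrictMono s ∧
      (∀ t > 0, 0 < c.X (s 0) t) ∧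
      (∀ k, Cnt k (c.X (s k)) ∧ FastEnd β (c.X (s k))) ∧
      (∀ r < s 0, (∀ t > 0, 0 < c.X r t) ∧ SlowEnd (c.X r)) ∧
      ∀ k, ∀ r ∈ Ioo (s k) (s (k + 1)), Cnt (k + 1) (c.X r) ∧ SlowEnd (c.X r) := by
  obtain ⟨η, ηmono, ηpos, hL⟩ := exists_ladder p hα hβ hA hB
  obtain ⟨σ, P, hS, hF, hZ, hmono, hsurj⟩ := c.main
  choose f hf using fun k => hsurj (η k) (ηpos k)
  set s : ℕ → ℝ := fun k => match k with
    | 0 => σ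
    | k + 1 => f k with hs
  have hσ : ∀ k, ∀ r > s k, r > σ := by
    intro k r hr
    cases k with
    | zero => exact hr
    | succ k => exact lt_trans (hf k).1 hr
  have hlo : ∀ k, ∀ r > s k, lo η k < P r := by
    intro k r hr
    cases k with
    | zero => exact (hZ _ hr).1
    | succ k =>
      have := hmono (hf k).1 (hσ (k + 1) r hr) hr
      rwa [(hf k).2] at this
  refine ⟨s, strictMono_nat_of_lt_succ fun k => ?_, hF.1, fun k => ?_, fun r hr => ?_,
    fun k r hr => ?_⟩
  · cases k with
    | zero => exact (hf 0).1
    | succ k =>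
      refine (hmono.lt_iff_lt (hf k).1 (hf (k + 1)).1).1 ?_
      rw [(hf k).2, (hf (k + 1)).2]
      exact ηmono (Nat.lt_succ_self k)
  · cases k with
    | zero => exact ⟨Cnt_zero hF.1, (c.sol σ).F_fast hF hα hβ hA hB⟩
    | succ k =>
      obtain ⟨h3, h4⟩ := hZ _ (hf k).1
      exact ((hL k).step (c.sol _) h3 h4).1 (hf k).2
  · exact ⟨(hS r hr).1, ((hS r hr).slow (c.sol r)).2⟩
  · obtain ⟨h3, h4⟩ := hZ _ (hσ k r hr.1)
    refine ((hL k).step (c.sol _) h3 h4).2 (hlo k r hr.1) ?_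
    have h5 : r < f k := hr.2
    have := hmono (hσ k r hr.1) (hf k).1 h5
    rwa [(hf k).2] at this

end Par

/-! ### Ancient solutions between barriers -/

/-- Continuous dependence, forwards in time, for a locally uniformly Lipschitz field. -/
lemma ode_dep_fwd (v : ℝ → ℝ → ℝ)
    (hl : ∀ T : ℝ, ∃ K : NNReal, ∀ t ∈ Icc (-T) T, LipschitzWith K (v t)) (T : ℝ) (hT : 0 ≤ T) :
    ∃ C, ∀ f g : ℝ → ℝ, (∀ t, HasDerivAt f (v t (f t)) t) → (∀ t, HasDerivAt g (v t (g t)) t) →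
      dist (f T) (g T) ≤ dist (f 0) (g 0) * C := by
  obtain ⟨K, hK⟩ := hl T
  refine ⟨exp (K * (T - 0)), fun f g hf hg => ?_⟩
  exact dist_le_of_trajectories_ODE_of_mem (v := v) (K := K) (s := fun _ => univ) (a := 0) (b := T)
    (fun t ht => (hK t ⟨by linarith [ht.1], ht.2.le⟩).lipschitzOnWith)
    (fun s _ => (hf s).continuousAt.continuousWithinAt)
    (fun s _ => (hf s).hasDerivWithinAt) (fun _ _ => trivial)
    (fun s _ => (hg s).continuousAt.continuousWithinAt)
    (fun s _ => (hg s).hasDerivWithinAt) (fun _ _ => trivial) le_rfl T ⟨hT, le_rfl⟩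

lemma ode_dep (v : ℝ → ℝ → ℝ)
    (hl : ∀ T : ℝ, ∃ K : NNReal, ∀ t ∈ Icc (-T) T, LipschitzWith K (v t)) (T : ℝ) :
    ∃ C, ∀ f g : ℝ → ℝ, (∀ t, HasDerivAt f (v t (f t)) t) → (∀ t, HasDerivAt g (v t (g t)) t) →
      dist (f T) (g T) ≤ dist (f 0) (g 0) * C := by
  rcases le_total 0 T with hT | hT
  · exact ode_dep_fwd v hl T hT
  · obtain ⟨C, hC⟩ := ode_dep_fwd (fun t x => -v (-t) x) (fun S => by
      obtain ⟨K, hK⟩ := hl S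
      refine ⟨K, fun t ht => ?_⟩
      exact (hK (-t) ⟨by linarith [ht.2], by linarith [ht.1]⟩).neg) (-T) (by linarith)
    refine ⟨C, fun f g hf hg => ?_⟩
    have key : ∀ f : ℝ → ℝ, (∀ t, HasDerivAt f (v t (f t)) t) →
        ∀ t, HasDerivAt (fun s => f (-s)) (-v (-t) (f (-t))) t := by
      intro f hf t
      simpa [Function.comp_def] using (hf (-t)).scomp t (hasDerivAt_neg t)
    simpa using hC _ _ (key f hf) (key g hg)

/-- A strict lower and a strict upper barrier on the whole line enclose a solution that exists on
the whole line: the values at time `0` of the solutions enclosed from time `-N` on form a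
decreasing sequence of nonempty compact sets. -/
lemma ancient (v : ℝ → ℝ → ℝ)
    (hl : ∀ T : ℝ, ∃ K : NNReal, ∀ t ∈ Icc (-T) T, LipschitzWith K (v t))
    (hc : ∀ x, Continuous (fun t => v t x))
    (hb : ∀ T : ℝ, ∃ L : NNReal, ∀ t ∈ Icc (-T) T, ∀ x, ‖v t x‖ ≤ L)
    {a b a' b' : ℝ → ℝ} (ha : ∀ t, HasDerivAt a (a' t) t) (hbd : ∀ t, HasDerivAt b (b' t) t)
    (hab : ∀ t, a t ≤ b t) (h1 : ∀ t, a' t < v t (a t)) (h2 : ∀ t, v t (b t) < b' t) :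
    ∃ f : ℝ → ℝ, (∀ t, HasDerivAt f (v t (f t)) t) ∧ ∀ t, a t < f t ∧ f t < b t := by
  have fwd : ∀ f : ℝ → ℝ, (∀ t, HasDerivAt f (v t (f t)) t) → ∀ s, a s ≤ f s → f s ≤ b s →
      ∀ t, s < t → a t < f t ∧ f t < b t := by
    intro f hf s hs hs' t ht
    have e1 := stay_neg (a := s) (b := t) (fun r _ => (ha r).sub (hf r))
      (by simp only [Pi.sub_apply]; linarith) (fun r _ h => by
        simp only [Pi.sub_apply] at h
        rw [← sub_eq_zero.1 h]
        linarith [h1 r]) t ⟨ht, le_rfl⟩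
    have e2 := stay_neg (a := s) (b := t) (fun r _ => (hf r).sub (hbd r))
      (by simp only [Pi.sub_apply]; linarith) (fun r _ h => by
        simp only [Pi.sub_apply] at h
        rw [sub_eq_zero.1 h]
        linarith [h2 r]) t ⟨ht, le_rfl⟩
    simp only [Pi.sub_apply] at e1 e2
    constructor <;> linarith
  have hex := fun x₀ => ode_global v hl hc hb x₀
  choose F hF0 hF using hex
  have hFc : ∀ t, Continuous fun x => F x t := by
    intro t
    obtain ⟨C, hC⟩ := ode_dep v hl t
    have : LipschitzWith (Real.toNNReal C) fun x => F x t := by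
      refine LipschitzWith.of_dist_le_mul fun x y => ?_
      have := hC _ _ (hF x) (hF y)
      rw [hF0, hF0] at this
      calc _ ≤ _ := this
        _ ≤ _ := by rw [mul_comm]; gcongr; exact Real.le_coe_toNNReal C
    exact this.continuous
  set S : ℕ → Set ℝ := fun N => {x | ∀ t ∈ Icc (-(N:ℝ)) 0, a t ≤ F x t ∧ F x t ≤ b t} with hS
  have hScl : ∀ N, IsClosed (S N) := by
    intro N
    have : S N = ⋂ t ∈ Icc (-(N:ℝ)) 0, {x | a t ≤ F x t} ∩ {x | F x t ≤ b t} := by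
      ext x; simp [hS]
    rw [this]
    exact isClosed_biInter fun t _ => (isClosed_le continuous_const (hFc t)).inter
      (isClosed_le (hFc t) continuous_const)
  have hne : ∀ N, (S N).Nonempty := by
    intro N
    obtain ⟨g, hg0, hg⟩ := ode_global (fun t x => v (t - N) x)
      (fun T => by
        obtain ⟨K, hK⟩ := hl (|T| + N)
        refine ⟨K, fun t ht => hK _ ?_⟩
        have := le_abs_self T
        exact ⟨by linarith [ht.1], by linarith [ht.2, Nat.cast_nonneg (α := ℝ) N]⟩)
      (fun x => (hc x).comp (continuous_id.sub continuous_const))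
      (fun T => by
        obtain ⟨K, hK⟩ := hb (|T| + N)
        refine ⟨K, fun t ht => hK _ ?_⟩
        have := le_abs_self T
        exact ⟨by linarith [ht.1], by linarith [ht.2, Nat.cast_nonneg (α := ℝ) N]⟩) (a (-N))
    set f : ℝ → ℝ := fun t => g (t + N) with hf
    have hfd : ∀ t, HasDerivAt f (v t (f t)) t := by
      intro t
      simpa using (hg (t + N)).comp_add_const t (N:ℝ)
    have hf0 : f (-N) = a (-N) := by simp [hf, hg0]
    have hfF : ∀ t, F (f 0) t = f t := by
      intro t
      obtain ⟨C, hC⟩ := ode_dep v hl t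
      have := hC _ _ (hF (f 0)) hfd
      rw [hF0, dist_self, zero_mul] at this
      exact dist_le_zero.1 this
    refine ⟨f 0, fun t ht => ?_⟩
    rw [hfF]
    rcases eq_or_lt_of_le ht.1 with h | h
    · rw [← h, hf0]; exact ⟨le_rfl, hab _⟩
    · have := fwd f hfd (-N) hf0.ge (hf0.le.trans (hab _)) t h
      exact ⟨this.1.le, this.2.le⟩
  have hanti : ∀ N, S (N + 1) ⊆ S N := by
    intro N x hx t ht
    exact hx t ⟨by push_cast; linarith [ht.1], ht.2⟩
  have hcpt : IsCompact (S 0) := by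
    refine (isCompact_Icc (a := a 0) (b := b 0)).of_isClosed_subset (hScl 0) fun x hx => ?_
    have := hx 0 (by simp)
    rwa [hF0] at this
  obtain ⟨x, hx⟩ := IsCompact.nonempty_iInter_of_sequence_nonempty_isCompact_isClosed S hanti hne
    hcpt hScl
  refine ⟨F x, hF x, fun t => ?_⟩
  obtain ⟨N, hN⟩ := exists_nat_gt (-t)
  have := (mem_iInter.1 hx N) (-N) ⟨le_rfl, by simp⟩
  exact fwd _ (hF x) (-N) this.1 this.2 t (by linarith)

namespace Par

/-- The orbits of the inner problem that are regular at the origin, in the form `y = x h(log x)`.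
The function `ψ` records the value of the solution at the origin: it is `exp (ψ ξ)` for the
orbit that is at `x = e^ξ` at time `0`. -/
theorem exists_slope (p : Par) {α β κ : ℝ} (hα : 0 < α) (hκ : 0 < κ)
    (hA : p.A = β - α) (hB : p.B = α * β) : ∃ h ψ : ℝ → ℝ,
    (∀ ξ, HasDerivAt h ((p.B + κ * exp ((p.q - 2) * ξ)) / h ξ - p.A - h ξ) ξ) ∧
    (∀ ξ, α < h ξ) ∧ (∃ C, ∀ ξ, h ξ < α + C * exp ((p.q - 2) * ξ)) ∧
    (∀ ξ, HasDerivAt ψ (α / h ξ) ξ) ∧ Tendsto (fun ξ => ξ - ψ ξ) atBot (𝓝 0) ∧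
    ∃ M, ∀ ξ, ψ ξ ≤ M := by
  have hpA := p.hA
  have hpB := p.hB
  obtain ⟨σ, hσ⟩ : ∃ σ, σ = p.q - 2 := ⟨_, rfl⟩
  have hσp : 0 < σ := by linarith [p.hq]
  rw [← hσ]
  set C := κ / (p.A + 2 * α) with hC
  have hCp : 0 < C := by positivity
  have hCe : C * (p.A + 2 * α) = κ := by rw [hC]; field_simp
  have hq : α ^ 2 + p.A * α = p.B := by rw [hA, hB]; ring
  have hE : ∀ ξ, HasDerivAt (fun ξ => exp (σ * ξ)) (σ * exp (σ * ξ)) ξ := fun ξ => by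
    simpa [mul_comm] using ((hasDerivAt_id ξ).const_mul σ).exp
  set E : ℝ → ℝ := fun ξ => exp (σ * ξ) with hEdef
  have hEp : ∀ ξ, 0 < E ξ := fun ξ => exp_pos _
  have hEc : Continuous E := by rw [hEdef]; fun_prop
  have hEm : ∀ {s t}, s ≤ t → E s ≤ E t := fun h => exp_le_exp.2 (by gcongr)
  -- the solution sought lies between the constant barrier `α` and the upper barrier `bb`;
  -- clamping the unknown to this region makes the equation globally Lipschitz
  set bb : ℝ → ℝ := fun ξ => α + C * E ξ with hbb
  set m : ℝ → ℝ → ℝ := fun ξ x => max α (min (bb ξ) x) with hm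
  have hmα : ∀ ξ x, α ≤ m ξ x := fun ξ x => le_max_left _ _
  have hbbα : ∀ ξ, α ≤ bb ξ := fun ξ => by
    have := mul_pos hCp (hEp ξ)
    simp only [hbb]; linarith
  have hmb : ∀ ξ x, m ξ x ≤ bb ξ := fun ξ x => max_le (hbbα ξ) (min_le_left _ _)
  have hml : ∀ ξ, LipschitzWith 1 (m ξ) := fun ξ =>
    (LipschitzWith.id.const_min (bb ξ)).const_max α
  have hmeq : ∀ ξ x, α ≤ x → x ≤ bb ξ → m ξ x = x := fun ξ x h1 h2 => by
    simp only [hm]; rw [min_eq_right h2, max_eq_right h1]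
  set v : ℝ → ℝ → ℝ := fun ξ x => (p.B + κ * E ξ) / m ξ x - p.A - m ξ x with hv
  have hvl : ∀ T : ℝ, ∃ K : NNReal, ∀ t ∈ Icc (-T) T, LipschitzWith K (v t) := by
    intro T
    refine ⟨Real.toNNReal ((p.B + κ * E T) / α ^ 2 + 1), fun t ht => ?_⟩
    refine LipschitzWith.of_dist_le_mul fun x y => ?_
    have hTp := hEp T
    have htp := hEp t
    rw [Real.coe_toNNReal _ (by positivity), Real.dist_eq]
    have e1 := (hml t).dist_le_mul x y
    rw [NNReal.coe_one, one_mul, Real.dist_eq] at e1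
    have hx := hmα t x
    have hy := hmα t y
    have e2 : v t x - v t y = -((p.B + κ * E t) / (m t x * m t y) + 1) * (m t x - m t y) := by
      simp only [hv]
      have : m t x ≠ 0 := by linarith
      have : m t y ≠ 0 := by linarith
      field_simp
      ring
    rw [e2, abs_mul, abs_neg, abs_of_nonneg (by
      have : 0 < m t x := by linarith
      have : 0 < m t y := by linarith
      positivity)]
    have e3 : (p.B + κ * E t) / (m t x * m t y) ≤ (p.B + κ * E T) / α ^ 2 := by
      have : E t ≤ E T := hEm ht.2
      rw [pow_two]
      gcongr
    gcongr
  have hvc : ∀ x, Continuous (fun t => v t x) := by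
    intro x
    have hmc : Continuous fun t => m t x := by simp only [hm, hbb]; fun_prop
    simp only [hv]
    refine ((continuous_const.add (continuous_const.mul hEc)).div hmc fun t => ?_).sub
      continuous_const |>.sub hmc
    linarith [hmα t x]
  have hvb : ∀ T : ℝ, ∃ L : NNReal, ∀ t ∈ Icc (-T) T, ∀ x, ‖v t x‖ ≤ L := by
    intro T
    refine ⟨Real.toNNReal ((p.B + κ * E T) / α + p.A + bb T), fun t ht x => ?_⟩
    have hTp := hEp T
    have htp := hEp t
    have h1 := hmα t x
    have h2 := hmb t x
    have h3 : E t ≤ E T := hEm ht.2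
    have h4 : bb t ≤ bb T := by simp only [hbb]; gcongr
    have h5 : (p.B + κ * E t) / m t x ≤ (p.B + κ * E T) / α := by gcongr
    have h6 : 0 ≤ (p.B + κ * E t) / m t x := by
      have : 0 < m t x := by linarith
      positivity
    have h7 := hbbα T
    rw [Real.coe_toNNReal _ (by positivity), Real.norm_eq_abs, abs_le]
    simp only [hv]
    constructor <;> linarith
  obtain ⟨h, hh, hbar⟩ := ancient v hvl hvc hvb (a := fun _ => α) (a' := fun _ => 0) (b := bb)
    (b' := fun ξ => C * (σ * E ξ)) (fun t => hasDerivAt_const t α)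
    (fun t => by simpa [hbb] using (((hE t).const_mul C).const_add α)) hbbα
    (fun t => by
      simp only [hv]
      rw [hmeq t α le_rfl (hbbα t)]
      have : (p.B + κ * E t) / α - p.A - α = κ * E t / α := by
        rw [← hq]; field_simp; ring
      rw [this]
      have := hEp t
      positivity)
    (fun t => by
      simp only [hv]
      have htp := hEp t
      have hbp : 0 < bb t := hα.trans_le (hbbα t)
      rw [hmeq t (bb t) (hbbα t) le_rfl]
      have e1 : (p.B + κ * E t) / bb t - p.A - bb t = -(C * E t) ^ 2 / bb t := by
        rw [← hq, ← hCe]; field_simp; simp only [hbb]; ring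
      rw [e1]
      have : 0 < (C * E t) ^ 2 / bb t := by positivity
      have : 0 < C * (σ * E t) := by positivity
      rw [neg_div]; linarith)
  have hαh : ∀ ξ, α < h ξ := fun ξ => (hbar ξ).1
  have hhp : ∀ ξ, 0 < h ξ := fun ξ => hα.trans (hαh ξ)
  have hhd : ∀ ξ, HasDerivAt h ((p.B + κ * E ξ) / h ξ - p.A - h ξ) ξ := by
    intro ξ
    have := hh ξ
    simp only [hv] at this
    rwa [hmeq ξ (h ξ) (hαh ξ).le (hbar ξ).2.le] at this
  have hhc : Continuous h := continuous_iff_continuousAt.2 fun ξ => (hhd ξ).continuousAt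
  -- growth of the slope from below, by a barrier for `h ^ 2`
  set w := p.A ^ 2 / (2 * p.B) + 2 + σ with hw
  have hwp : 0 < w := by positivity
  set μ := min (α ^ 2) (κ / w) with hμ
  have hμp : 0 < μ := lt_min (by positivity) (by positivity)
  have hlow : ∀ ξ, 0 ≤ ξ → μ * E ξ ≤ h ξ ^ 2 := by
    intro ξ hξ
    rcases hξ.eq_or_lt with rfl | hξ
    · have h0 : E 0 = 1 := by simp [hEdef]
      rw [h0, mul_one]
      exact (min_le_left _ _).trans (pow_le_pow_left₀ hα.le (hαh 0).le 2)
    · have := stay_neg (a := 0) (b := ξ) (fun r _ => ((hE r).const_mul μ).sub ((hhd r).pow 2))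
        (by
          have h0 : E 0 = 1 := by simp [hEdef]
          have : α ^ 2 ≤ h 0 ^ 2 := pow_le_pow_left₀ hα.le (hαh 0).le 2
          have : μ ≤ α ^ 2 := min_le_left _ _
          simp only [Pi.sub_apply, Pi.pow_apply]
          change μ * E 0 - h 0 ^ 2 ≤ 0
          rw [h0]; linarith)
        (fun r _ hr => by
          simp only [Pi.sub_apply, Pi.pow_apply] at hr
          change μ * E r - h r ^ 2 = 0 at hr
          have hr' : h r ^ 2 = μ * E r := by linarith
          have e1 : (↑(2:ℕ) * h r ^ (2 - 1) * ((p.B + κ * E r) / h r - p.A - h r))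
              = 2 * (p.B + κ * E r) - 2 * p.A * h r - 2 * (μ * E r) := by
            rw [← hr']
            have := (hhp r).ne'
            push_cast
            field_simp
          rw [e1]
          have e2 : 2 * p.A * h r ≤ 2 * p.B + p.A ^ 2 / (2 * p.B) * (μ * E r) := by
            rw [← hr']
            have : 0 ≤ (2 * p.B - p.A * h r) ^ 2 / (2 * p.B) := by positivity
            have e3 : (2 * p.B - p.A * h r) ^ 2 / (2 * p.B)
              = 2 * p.B - 2 * p.A * h r + p.A ^ 2 / (2 * p.B) * h r ^ 2 := by field_simp; ring
            linarith
          have e4 : μ * w ≤ κ := by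
            have := min_le_right (α ^ 2) (κ / w)
            rw [← hμ, le_div_iff₀ hwp] at this
            exact this
          have e5 := mul_le_mul_of_nonneg_right e4 (hEp r).le
          have e6 := mul_pos hκ (hEp r)
          have e7 : μ * w * E r = p.A ^ 2 / (2 * p.B) * (μ * E r) + 2 * (μ * E r)
            + μ * (σ * E r) := by rw [hw]; ring
          change μ * (σ * E r) - _ < 0
          linarith) ξ ⟨hξ, le_rfl⟩
      simp only [Pi.sub_apply, Pi.pow_apply] at this
      change μ * E ξ - h ξ ^ 2 < 0 at this
      linarith
  -- an antiderivative of `α / h`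
  have hdivc : Continuous fun ξ => α / h ξ := continuous_const.div hhc fun ξ => (hhp ξ).ne'
  set ψ₀ : ℝ → ℝ := fun ξ => ∫ s in (0:ℝ)..ξ, α / h s with hψ₀
  have hψd : ∀ ξ, HasDerivAt ψ₀ (α / h ξ) ξ := fun ξ =>
    intervalIntegral.integral_hasDerivAt_right (hdivc.intervalIntegrable _ _)
      (hdivc.stronglyMeasurableAtFilter _ _) hdivc.continuousAt
  have hJd : ∀ ξ, HasDerivAt (fun ξ => ξ - ψ₀ ξ) (1 - α / h ξ) ξ := fun ξ =>
    (hasDerivAt_id ξ).sub (hψd ξ)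
  have hJmono : MonotoneOn (fun ξ => ξ - ψ₀ ξ) univ :=
    mono_of_deriv convex_univ (fun t _ => hJd t) fun t _ => by
      rw [sub_nonneg, div_le_one (hhp t)]; exact (hαh t).le
  have hJanti : AntitoneOn (fun ξ => ξ - ψ₀ ξ - C / (α * σ) * E ξ) univ :=
    anti_of_deriv convex_univ (fun t _ => (hJd t).sub ((hE t).const_mul (C / (α * σ))))
      fun t _ => by
        have e1 : 1 - α / h t ≤ C * E t / α := by
          have e2 : 1 - α / h t = (h t - α) / h t := by
            have := (hhp t).ne'
            field_simp
          rw [e2]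
          have e3 : h t - α ≤ C * E t := by
            have := (hbar t).2
            simp only [hbb] at this
            linarith
          have := hαh t
          have := hEp t
          gcongr
        have e4 : C / (α * σ) * (σ * exp (σ * t)) = C * E t / α := by
          simp only [hEdef]; field_simp
        rw [e4]; linarith
  have hJb : BddBelow (range fun ξ => ξ - ψ₀ ξ) := by
    refine ⟨min 0 (-(C / (α * σ)) * E 0), ?_⟩
    rintro _ ⟨ξ, rfl⟩
    have h0 : ψ₀ 0 = 0 := by simp [hψ₀]
    rcases le_total 0 ξ with hξ | hξ
    · have := hJmono (mem_univ 0) (mem_univ ξ) hξ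
      simp only [h0, sub_zero] at this
      exact (min_le_left _ _).trans this
    · have := hJanti (mem_univ ξ) (mem_univ 0) hξ
      simp only [h0, sub_zero] at this
      have h2 : 0 < C / (α * σ) * E ξ := mul_pos (by positivity) (hEp ξ)
      refine (min_le_right _ _).trans ?_
      dsimp only
      linarith
  have hJlim := tendsto_atBot_ciInf (fun a b hab => hJmono (mem_univ a) (mem_univ b) hab) hJb
  set l := ⨅ ξ, (ξ - ψ₀ ξ) with hl
  -- `ψ` is bounded above since `1 / h` decays exponentially
  obtain ⟨ν, hν, hν2⟩ : ∃ ν, 0 < ν ∧ ν ^ 2 = μ := ⟨√μ, by positivity, Real.sq_sqrt hμp.le⟩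
  have hlow' : ∀ ξ, 0 ≤ ξ → ν * exp (σ / 2 * ξ) ≤ h ξ := by
    intro ξ hξ
    refine le_of_sq_le_sq ?_ (hhp ξ).le
    have : (ν * exp (σ / 2 * ξ)) ^ 2 = μ * E ξ := by
      rw [mul_pow, hν2, ← exp_nat_mul]; simp only [hEdef]; congr 2; push_cast; ring
    rw [this]; exact hlow ξ hξ
  have hup : AntitoneOn (fun ξ => ψ₀ ξ + 2 * α / (σ * ν) * exp (-(σ / 2) * ξ)) (Ici 0) := by
    have he : ∀ ξ, HasDerivAt (fun ξ => exp (-(σ / 2) * ξ)) (-(σ / 2) * exp (-(σ / 2) * ξ)) ξ :=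
      fun ξ => by simpa [mul_comm] using ((hasDerivAt_id ξ).const_mul (-(σ / 2))).exp
    refine anti_of_deriv (convex_Ici 0)
      (fun t _ => (hψd t).add ((he t).const_mul (2 * α / (σ * ν)))) fun t ht => ?_
    have e1 : α / h t ≤ α / (ν * exp (σ / 2 * t)) := by
      have := hlow' t ht
      gcongr
    have e2 : α / (ν * exp (σ / 2 * t)) = α / ν * exp (-(σ / 2) * t) := by
      rw [neg_mul, exp_neg]; field_simp
    have e3 : 2 * α / (σ * ν) * (-(σ / 2) * exp (-(σ / 2) * t)) = -(α / ν * exp (-(σ / 2) * t)) := by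
      field_simp
    rw [e3]; linarith
  refine ⟨h, fun ξ => ψ₀ ξ + l, hhd, hαh, ⟨C, fun ξ => (hbar ξ).2⟩, fun ξ => (hψd ξ).add_const l,
    ?_, 2 * α / (σ * ν) + |l|, fun ξ => ?_⟩
  · have := hJlim.sub_const l
    rw [sub_self] at this
    refine this.congr fun ξ => by ring
  · have h0 : ψ₀ 0 = 0 := by simp [hψ₀]
    have hl' := le_abs_self l
    have hc0 : 0 < 2 * α / (σ * ν) := by positivity
    rcases le_total 0 ξ with hξ | hξ
    · have := hup (mem_Ici.2 le_rfl) (mem_Ici.2 hξ) hξ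
      simp only [h0, mul_zero, exp_zero, mul_one, zero_add] at this
      have h2 : 0 < 2 * α / (σ * ν) * exp (-(σ / 2) * ξ) := by positivity
      linarith
    · have : ψ₀ ξ ≤ ψ₀ 0 := mono_of_deriv convex_univ (fun t _ => hψd t)
        (fun t _ => (div_pos hα (hhp t)).le) (mem_univ ξ) (mem_univ 0) hξ
      linarith

end Par

/-! ### The curve of inner regular orbits at the interface -/

namespace Par
variable {p : Par}

lemma En_pos_left (p : Par) (s h : ℝ) : p.En (exp s) (exp s * h) =
    exp (2 * s) * (h ^ 2 / 2 - p.B / 2 + p.K / p.q * exp ((p.q - 2) * s)) := by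
  have e1 : exp (2 * s) = exp s ^ 2 := by rw [← exp_nat_mul]; push_cast; rfl
  have e2 : exp s ^ p.q = exp (2 * s) * exp ((p.q - 2) * s) := by
    rw [← exp_mul, ← exp_add]; congr 1; ring
  rw [En, abs_of_pos (exp_pos s), e2, e1]; ring

/-- The curve `s ↦ (e^s, e^s h(s))` of values at the interface of the regular inner orbits is a
section. Orbits issued from it cross it only once since the quantity `y/x - h(log x)` can vanish
only while decreasing. -/
theorem exists_gamma (p : Par) {α β κ : ℝ} (hα : 0 < α) (hκ : 0 < κ)
    (hA : p.A = β - α) (hB : p.B = α * β) {h : ℝ → ℝ}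
    (hh : ∀ ξ, HasDerivAt h ((p.B + κ * exp ((p.q - 2) * ξ)) / h ξ - p.A - h ξ) ξ)
    (hαh : ∀ ξ, α < h ξ) (hup : ∃ C, ∀ ξ, h ξ < α + C * exp ((p.q - 2) * ξ)) :
    ∃ c : p.Section, ∀ s, c.X s 0 = exp s ∧ c.Y s 0 = exp s * h s := by
  have hex : ∀ s : ℝ, ∃ x y, p.Sol x y ∧ x 0 = exp s ∧ y 0 = exp s * h s := fun s =>
    p.exists_sol (exp s) (exp s * h s)
  choose X Y hs hX hY using hex
  have hhc : Continuous h := continuous_iff_continuousAt.2 fun ξ => (hh ξ).continuousAt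
  have hhp : ∀ ξ, 0 < h ξ := fun ξ => hα.trans (hαh ξ)
  have hσ : 0 < p.q - 2 := by linarith [p.hq]
  have hK := p.hK
  have hq : 0 < p.q := by linarith [p.hq]
  refine ⟨⟨X, Y, hs, by simp only [hX]; fun_prop, by simp only [hY]; fun_prop,
    fun s => by rw [hX]; positivity,
    fun s => by rw [hY]; exact mul_pos (exp_pos s) (hhp s),
    fun s s' e _ => exp_injective (by rw [← hX, ← hX, e]), ?_, ?_, ?_⟩, fun s => ⟨hX s, hY s⟩⟩
  -- no return to the curve
  · intro s s' t ht hpos hx hy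
    have hpos' : ∀ r ∈ Icc 0 t, 0 < X s r := by
      intro r hr
      rcases hr.1.eq_or_lt with e | e
      · rw [← e, hX]; positivity
      · exact hpos r ⟨e, hr.2⟩
    have hd : ∀ r ∈ Icc 0 t, HasDerivAt (fun r => Y s r / X s r - h (log (X s r)))
        (((p.B * X s r - p.A * Y s r - p.K * gq p.q (X s r)) * X s r - Y s r * Y s r) / X s r ^ 2
          - ((p.B + κ * exp ((p.q - 2) * log (X s r))) / h (log (X s r)) - p.A - h (log (X s r)))
            * (Y s r / X s r)) r := by
      intro r hr
      have h1 := ((hs s).dy hr.1).div ((hs s).dx hr.1) (hpos' r hr).ne'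
      have h2 := ((hs s).dx hr.1).log (hpos' r hr).ne'
      exact h1.sub ((hh (log (X s r))).comp r h2)
    have := stay_neg hd (by rw [hX, hY, log_exp]; field_simp; simp) (fun r hr e => by
      have hxr := hpos' r hr
      have e1 : Y s r = X s r * h (log (X s r)) := by
        rw [sub_eq_zero, div_eq_iff hxr.ne'] at e
        rw [e, mul_comm]
      have e2 : exp ((p.q - 2) * log (X s r)) = X s r ^ (p.q - 2) := by
        rw [rpow_def_of_pos hxr, mul_comm]
      have e3 : gq p.q (X s r) = X s r * X s r ^ (p.q - 2) := by rw [gq, abs_of_pos hxr]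
      have e4 := rpow_pos_of_pos hxr (p.q - 2)
      have e5 := hhp (log (X s r))
      rw [e2, e3, e1]
      generalize X s r ^ (p.q - 2) = E at *
      generalize h (log (X s r)) = g at *
      have e6 : ((p.B * X s r - p.A * (X s r * g) - p.K * (X s r * E)) * X s r
          - X s r * g * (X s r * g)) / X s r ^ 2
          - ((p.B + κ * E) / g - p.A - g) * (X s r * g / X s r) = -((p.K + κ) * E) := by
        field_simp
        ring
      rw [e6]
      have := mul_pos (add_pos hK hκ) e4
      linarith) t ⟨ht, le_rfl⟩
    rw [hx, hy, hX, hY, log_exp, mul_div_cancel_left₀ _ (exp_pos s').ne', sub_self] at this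
    exact lt_irrefl _ this
  -- the energy is negative for `s → -∞`, where `h → α` and `α ^ 2 < B`
  · obtain ⟨C, hC⟩ := hup
    have hlim : Tendsto (fun s => (α + C * exp ((p.q - 2) * s)) ^ 2 / 2 - p.B / 2
        + p.K / p.q * exp ((p.q - 2) * s)) atBot (𝓝 ((α + C * 0) ^ 2 / 2 - p.B / 2
        + p.K / p.q * 0)) := by
      have h1 : Tendsto (fun s => exp ((p.q - 2) * s)) atBot (𝓝 0) :=
        tendsto_exp_atBot.comp (tendsto_id.const_mul_atBot hσ)
      exact ((((h1.const_mul C).const_add α).pow 2).div_const 2).sub_const _ |>.add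
        (h1.const_mul _)
    have hneg : (α + C * 0) ^ 2 / 2 - p.B / 2 + p.K / p.q * 0 < 0 := by
      have := mul_pos hα p.hA
      rw [hA] at this
      rw [hB]; nlinarith
    obtain ⟨s0, hs0⟩ := eventually_atBot.1 (hlim.eventually (gt_mem_nhds hneg))
    refine ⟨s0, fun s hs' => ?_⟩
    have hE : p.En (X s 0) (Y s 0) < 0 := by
      rw [hX, hY, En_pos_left]
      refine mul_neg_of_pos_of_neg (exp_pos _) (lt_of_le_of_lt ?_ (hs0 s hs'))
      have := hC s
      have := hhp s
      gcongr
    refine ⟨fun t ht => ?_, 0, le_rfl, hE⟩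
    by_contra hc
    push Not at hc
    obtain ⟨z, hz, hz0, _⟩ := first_zero ((hs s).cx.mono fun r hr => hr.1)
      (by rw [hX]; positivity) ht.le hc
    exact (hs s).ne_zero_of_En_neg le_rfl hE z hz.1.le hz0
  · simp only [hX, hY, En_pos_left]
    have h1 : Tendsto (fun s => exp ((p.q - 2) * s)) atTop atTop :=
      tendsto_exp_atTop.comp (tendsto_id.const_mul_atTop hσ)
    have h2 : Tendsto (fun s => exp (2 * s)) atTop atTop :=
      tendsto_exp_atTop.comp (tendsto_id.const_mul_atTop two_pos)
    have h3 := h2.atTop_mul_atTop₀ (tendsto_atTop_add_const_left atTop (-(p.B / 2))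
      (h1.const_mul_atTop (div_pos hK hq)))
    refine tendsto_atTop_mono (fun s => ?_) h3
    have : 0 ≤ h s ^ 2 / 2 := by positivity
    have := exp_pos (2 * s)
    gcongr
    linarith

/-- The regular inner orbit through the point of the curve with parameter `s`, followed backwards
in time; `ξ` is the logarithm of its first coordinate. -/
theorem exists_back (p : Par) {α κ : ℝ} (hα : 0 < α) (hκ : 0 < κ) {h ψ : ℝ → ℝ}
    (hh : ∀ ξ, HasDerivAt h ((p.B + κ * exp ((p.q - 2) * ξ)) / h ξ - p.A - h ξ) ξ)
    (hαh : ∀ ξ, α < h ξ) (hup : ∃ C, ∀ ξ, h ξ < α + C * exp ((p.q - 2) * ξ))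
    (hψ : ∀ ξ, HasDerivAt ψ (α / h ξ) ξ) (s : ℝ) :
    ∃ ξ : ℝ → ℝ, ξ 0 = s ∧ (∀ t ≤ 0, HasDerivAt ξ (h (ξ t)) t) ∧
      ∀ t ≤ 0, ψ (ξ t) = ψ s + α * t := by
  obtain ⟨C, hC⟩ := hup
  have hA := p.hA
  have hB := p.hB
  have hhp : ∀ ξ, 0 < h ξ := fun ξ => hα.trans (hαh ξ)
  have hσ : 0 < p.q - 2 := by linarith [p.hq]
  have hE : ∀ {a}, a ≤ s → exp ((p.q - 2) * a) ≤ exp ((p.q - 2) * s) := fun h =>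
    exp_le_exp.2 (by gcongr)
  have hC0 : 0 < C := by
    have h1 := hC 0
    have h2 := hαh 0
    simp only [mul_zero, exp_zero, mul_one] at h1
    linarith
  set H := α + C * exp ((p.q - 2) * s) with hH
  have hHle : ∀ a ≤ s, h a ≤ H := fun a ha => (hC a).le.trans (by
    have := hE ha
    rw [hH]; gcongr)
  have hHp : 0 < H := by positivity
  set k := (p.B + κ * exp ((p.q - 2) * s)) / α + p.A + H with hk
  have hkp : 0 < k := by positivity
  have hlip : LipschitzOnWith (Real.toNNReal k) h (Iic s) := by
    refine (convex_Iic s).lipschitzOnWith_of_nnnorm_hasDerivWithin_le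
      (fun a _ => (hh a).hasDerivWithinAt) fun a ha => ?_
    rw [← NNReal.coe_le_coe, coe_nnnorm, Real.coe_toNNReal _ hkp.le, Real.norm_eq_abs, abs_le]
    have e1 : (p.B + κ * exp ((p.q - 2) * a)) / h a
        ≤ (p.B + κ * exp ((p.q - 2) * s)) / α := by
      have := hE ha
      have := (hαh a).le
      gcongr
    have e2 : 0 ≤ (p.B + κ * exp ((p.q - 2) * a)) / h a := by
      have := hhp a
      positivity
    have e3 : 0 ≤ (p.B + κ * exp ((p.q - 2) * s)) / α := by positivity
    have e4 := hHle a ha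
    have e5 := hhp a
    constructor <;> linarith
  have hl : LipschitzWith (Real.toNNReal k) fun x => h (min s x) := by
    refine LipschitzWith.of_dist_le_mul fun x y => ?_
    have h1 := hlip.dist_le_mul (min s x) (mem_Iic.2 (min_le_left _ _)) (min s y)
      (mem_Iic.2 (min_le_left _ _))
    have h2 := (LipschitzWith.id.const_min s).dist_le_mul x y
    rw [NNReal.coe_one, one_mul] at h2
    exact h1.trans (by
      have h2 : dist (min s x) (min s y) ≤ dist x y := h2
      gcongr)
  obtain ⟨f, hf0, hf⟩ := ode_global (fun _ x => h (min s x)) (fun T => ⟨_, fun _ _ => hl⟩)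
    (fun x => continuous_const) (fun T => ⟨Real.toNNReal H, fun t _ x => by
      rw [Real.coe_toNNReal _ hHp.le, Real.norm_eq_abs, abs_of_pos (hhp _)]
      exact hHle _ (min_le_left _ _)⟩) s
  have hle : ∀ t ≤ 0, f t ≤ s := by
    intro t ht
    rw [← hf0]
    exact mono_of_deriv convex_univ (fun t _ => hf t) (fun t _ => (hhp _).le)
      (mem_univ t) (mem_univ 0) ht
  have hf' : ∀ t ≤ 0, HasDerivAt f (h (f t)) t := fun t ht => by
    simpa [min_eq_right (hle t ht)] using hf t
  refine ⟨f, hf0, hf', fun t ht => ?_⟩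
  have hd : ∀ r ∈ Icc t 0, HasDerivAt (fun r => ψ (f r) - α * r) 0 r := fun r hr => by
    have h1 := ((hψ (f r)).comp r (hf' r hr.2)).sub ((hasDerivAt_id r).const_mul α)
    refine h1.congr_deriv ?_
    have := (hhp (f r)).ne'
    field_simp
    simp
  have h1 := mono_of_deriv (convex_Icc t 0) hd (fun _ _ => le_rfl) ⟨le_rfl, ht⟩ ⟨ht, le_rfl⟩ ht
  have h2 := anti_of_deriv (convex_Icc t 0) hd (fun _ _ => le_rfl) ⟨le_rfl, ht⟩ ⟨ht, le_rfl⟩ ht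
  simp only [hf0, mul_zero, sub_zero] at h1 h2
  linarith

end Par

/-! ### Uniqueness of the regular solution -/

lemma gq_lip {q M : ℝ} (hq : 2 < q) {a b : ℝ} (ha : |a| ≤ M) (hb : |b| ≤ M) :
    |gq q a - gq q b| ≤ (q - 1) * M ^ (q - 2) * |a - b| := by
  have := (convex_Icc (-M) M).norm_image_sub_le_of_norm_hasDerivWithin_le (f := gq q)
    (C := (q - 1) * M ^ (q - 2)) (fun x _ => (gq_hasDerivAt hq x).hasDerivWithinAt) (fun x hx => by
      have h1 : |x| ≤ M := abs_le.2 hx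
      have h2 : 0 ≤ |x| ^ (q - 2) := by positivity
      have h3 : 0 ≤ q - 1 := by linarith
      have h4 : 0 ≤ q - 2 := by linarith
      rw [Real.norm_eq_abs, abs_of_nonneg (by positivity)]
      gcongr) (abs_le.1 hb) (abs_le.1 ha)
  simpa [Real.norm_eq_abs] using this

/-- The coefficient `k(r)`. -/
def kc (K₁ K₂ r : ℝ) : ℝ := if r ≤ 1 then K₁ else K₂

lemma IsSolLr.facts {n : ℕ} {q K₁ K₂ : ℝ} {u : ℝ → ℝ} (h : IsSolLr n q K₁ K₂ u) :
    (∀ r > 0, HasDerivAt u (deriv u r) r) ∧ ContinuousOn (deriv u) (Ioi 0) ∧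
    ∀ r > 0, r ≠ 1 → HasDerivAt (deriv u)
      (-(((n:ℝ) - 1) / r * deriv u r) - kc K₁ K₂ r * gq q (u r)) r := by
  obtain ⟨h1, h2, h3, h4⟩ := h
  refine ⟨fun r hr => ?_, h1.continuousOn_deriv_of_isOpen isOpen_Ioi le_rfl, fun r hr hr1 => ?_⟩
  · exact ((h1.differentiableOn one_ne_zero).differentiableAt (Ioi_mem_nhds hr)).hasDerivAt
  · have hd : DifferentiableAt ℝ (deriv u) r := by
      rcases lt_or_gt_of_ne hr1 with h | h
      · have := ((contDiffOn_succ_iff_deriv_of_isOpen (n := 1) isOpen_Ioo).1 h2).2.2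
        exact (this.differentiableOn one_ne_zero).differentiableAt (Ioo_mem_nhds hr h)
      · have := ((contDiffOn_succ_iff_deriv_of_isOpen (n := 1) isOpen_Ioi).1 h3).2.2
        exact (this.differentiableOn one_ne_zero).differentiableAt (Ioi_mem_nhds h)
    refine hd.hasDerivAt.congr_deriv ?_
    have := h4 r hr hr1
    rw [kc, gq]
    linarith

lemma bdd_near {u : ℝ → ℝ} {d R : ℝ} (hc : ∀ r > 0, ContinuousAt u r)
    (h0 : Tendsto u (𝓝[>] 0) (𝓝 d)) : ∃ M, ∀ r ∈ Ioc 0 R, |u r| ≤ M := by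
  have h1 : ∀ᶠ r in 𝓝[>] 0, |u r| < |d| + 1 := h0.abs.eventually (gt_mem_nhds (by linarith))
  obtain ⟨ε, hε, h2⟩ := mem_nhdsGT_iff_exists_Ioo_subset.1 h1
  have hε : 0 < ε := hε
  obtain ⟨C, hC⟩ := (isCompact_Icc (a := ε / 2) (b := R)).exists_bound_of_continuousOn
    (f := u) fun r hr => (hc r (by linarith [hr.1])).continuousWithinAt
  refine ⟨max (|d| + 1) C, fun r hr => ?_⟩
  rcases lt_or_ge r (ε / 2) with h | h
  · exact (le_of_lt (h2 ⟨hr.1, by linarith⟩)).trans (le_max_left _ _)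
  · exact (hC r ⟨h, hr.2⟩).trans (le_max_right _ _)

/-- Two regular solutions with the same value at the origin coincide: for their difference `z`,
the quantity `z² + z'²` satisfies a Gronwall inequality because the singular term is a damping,
and it tends to zero at the origin. -/
theorem regSol_unique {n : ℕ} (hn : 2 < n) {q K₁ K₂ d : ℝ} (hq : 2 < q) {u v : ℝ → ℝ}
    (hu : IsRegSol n q K₁ K₂ d u) (hv : IsRegSol n q K₁ K₂ d v) : ∀ r > 0, u r = v r := by
  obtain ⟨hu1, hu2, hu3⟩ := hu.1.facts
  obtain ⟨hv1, hv2, hv3⟩ := hv.1.facts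
  intro R' hR'
  obtain ⟨R, hR1, hR2⟩ : ∃ R, 1 ≤ R ∧ R' ≤ R := ⟨max 1 R', le_max_left _ _, le_max_right _ _⟩
  obtain ⟨M1, hM1⟩ := bdd_near (R := R) (fun r hr => (hu1 r hr).continuousAt) hu.2.1
  obtain ⟨M2, hM2⟩ := bdd_near (R := R) (fun r hr => (hv1 r hr).continuousAt) hv.2.1
  set M := max M1 M2 with hM
  have hM0 : 0 ≤ M := (abs_nonneg _).trans ((hM1 1 ⟨one_pos, hR1⟩).trans (le_max_left _ _))
  set k := max |K₁| |K₂| with hk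
  have hkr : ∀ r, |kc K₁ K₂ r| ≤ k := by
    intro r
    rw [kc]
    split_ifs
    · exact le_max_left _ _
    · exact le_max_right _ _
  set L := (q - 1) * M ^ (q - 2) with hL
  have hL0 : 0 ≤ L := by
    have : 0 ≤ q - 1 := by linarith
    positivity
  have hk0 : 0 ≤ k := (abs_nonneg _).trans (hkr 0)
  set C := 1 + k * L with hC
  set z : ℝ → ℝ := fun r => u r - v r with hz
  set w : ℝ → ℝ := fun r => deriv u r - deriv v r with hw
  set G : ℝ → ℝ := fun r => (z r ^ 2 + w r ^ 2) * exp (-C * r) with hG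
  have hG0 : ∀ r, 0 ≤ G r := fun r => by positivity
  have hzd : ∀ r > 0, HasDerivAt z (w r) r := fun r hr => (hu1 r hr).sub (hv1 r hr)
  have hGc : ContinuousOn G (Ioi 0) := by
    have h1 : ContinuousOn z (Ioi 0) := fun r hr => (hzd r hr).continuousAt.continuousWithinAt
    have h2 : ContinuousOn w (Ioi 0) := hu2.sub hv2
    have h3 : Continuous fun r : ℝ => exp (-C * r) := by fun_prop
    exact ((h1.pow 2).add (h2.pow 2)).mul h3.continuousOn
  -- the equation fails to hold at `r = 1`, where `u''` may jump; the two sides are treated apart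
  have hGd : ∀ r > 0, r ≤ R → r ≠ 1 → ∃ g, HasDerivAt G g r ∧ g ≤ 0 := by
    intro r hr hrR hr1
    have hwd := (hu3 r hr hr1).sub (hv3 r hr hr1)
    have he : HasDerivAt (fun r => exp (-C * r)) (exp (-C * r) * (-C)) r := by
      simpa using ((hasDerivAt_id r).const_mul (-C)).exp
    refine ⟨_, (((hzd r hr).pow 2).add (hwd.pow 2)).mul he, ?_⟩
    have e1 : |gq q (u r) - gq q (v r)| ≤ L * |z r| :=
      gq_lip hq ((hM1 r ⟨hr, hrR⟩).trans (le_max_left _ _))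
        ((hM2 r ⟨hr, hrR⟩).trans (le_max_right _ _))
    have e2 : |w r * (kc K₁ K₂ r * (gq q (u r) - gq q (v r)))| ≤ |w r| * (k * (L * |z r|)) := by
      rw [abs_mul, abs_mul]
      have := hkr r
      gcongr
    have e3 := (abs_le.1 e2).1
    have e4 : 0 ≤ ((n:ℝ) - 1) / r * w r ^ 2 := by
      have : (2:ℝ) < n := by exact_mod_cast hn
      have : 0 ≤ (n:ℝ) - 1 := by linarith
      positivity
    have e5 : z r * w r ≤ |z r| * |w r| := by rw [← abs_mul]; exact le_abs_self _
    have e6 : 2 * (|z r| * |w r|) ≤ z r ^ 2 + w r ^ 2 := by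
      have := sq_nonneg (|z r| - |w r|)
      rw [sub_sq, sq_abs, sq_abs] at this
      linarith
    have e7 : k * L * (2 * (|z r| * |w r|)) ≤ k * L * (z r ^ 2 + w r ^ 2) := by gcongr
    have e8 : 2 * z r * w r + 2 * w r * ((-(((n:ℝ) - 1) / r * deriv u r) - kc K₁ K₂ r * gq q (u r))
        - (-(((n:ℝ) - 1) / r * deriv v r) - kc K₁ K₂ r * gq q (v r)))
        ≤ C * (z r ^ 2 + w r ^ 2) := by
      have : 2 * w r * ((-(((n:ℝ) - 1) / r * deriv u r) - kc K₁ K₂ r * gq q (u r))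
        - (-(((n:ℝ) - 1) / r * deriv v r) - kc K₁ K₂ r * gq q (v r)))
        = -2 * (((n:ℝ) - 1) / r * w r ^ 2)
          - 2 * (w r * (kc K₁ K₂ r * (gq q (u r) - gq q (v r)))) := by
        simp only [hw]; ring
      rw [this, hC]
      nlinarith
    have e9 := exp_pos (-C * r)
    simp only [Pi.add_apply, Pi.pow_apply, Pi.sub_apply]
    have e10 := mul_nonneg (sub_nonneg.2 e8) e9.le
    have e11 : ∀ X Y : ℝ, ((2:ℕ) * z r ^ (2 - 1) * X + (2:ℕ) * (deriv u r - deriv v r) ^ (2 - 1) * Y)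
      = 2 * z r * X + 2 * w r * Y := by intro X Y; simp [hw]
    rw [e11]
    change _ + (z r ^ 2 + w r ^ 2) * _ ≤ 0
    linarith
  have hanti : ∀ s : Set ℝ, Convex ℝ s → s ⊆ Ioc 0 R → 1 ∉ interior s → AntitoneOn G s := by
    intro s hs hsub hs1
    apply antitoneOn_of_deriv_nonpos hs (hGc.mono fun r hr => (hsub hr).1)
    · intro r hr
      have hm := hsub (interior_subset hr)
      obtain ⟨g, hg, _⟩ := hGd r hm.1 hm.2 (fun h => hs1 (h ▸ hr))
      exact hg.differentiableAt.differentiableWithinAt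
    · intro r hr
      have hm := hsub (interior_subset hr)
      obtain ⟨g, hg, hg'⟩ := hGd r hm.1 hm.2 (fun h => hs1 (h ▸ hr))
      rwa [hg.deriv]
  have hlim : Tendsto G (𝓝[>] 0) (𝓝 0) := by
    have h1 : Tendsto z (𝓝[>] 0) (𝓝 0) := by simpa using hu.2.1.sub hv.2.1
    have h2 : Tendsto w (𝓝[>] 0) (𝓝 0) := by simpa using hu.2.2.sub hv.2.2
    have h3 : Tendsto (fun r : ℝ => exp (-C * r)) (𝓝[>] 0) (𝓝 (exp (-C * 0))) :=
      (Continuous.tendsto (by fun_prop) 0).mono_left nhdsWithin_le_nhds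
    simpa [hG] using ((h1.pow 2).add (h2.pow 2)).mul h3
  have hA1 := hanti (Ioc 0 1) (convex_Ioc 0 1) (Ioc_subset_Ioc_right hR1) (by simp)
  have hA2 := hanti (Icc 1 R) (convex_Icc 1 R) (fun r hr => ⟨by linarith [hr.1], hr.2⟩) (by simp)
  have hle1 : ∀ r ∈ Ioc (0:ℝ) 1, G r ≤ 0 := by
    intro r hr
    refine ge_of_tendsto hlim ?_
    filter_upwards [Ioo_mem_nhdsGT hr.1] with s hs
    exact hA1 ⟨hs.1, hs.2.le.trans hr.2⟩ hr hs.2.le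
  have hle : G R' ≤ 0 := by
    rcases le_total R' 1 with h | h
    · exact hle1 R' ⟨hR', h⟩
    · exact (hA2 ⟨le_rfl, hR1⟩ ⟨h, hR2⟩ h).trans (hle1 1 ⟨one_pos, le_rfl⟩)
  have h1 : z R' ^ 2 + w R' ^ 2 ≤ 0 := by
    by_contra hc
    push Not at hc
    have := mul_pos hc (exp_pos (-C * R'))
    simp only [hG] at hle
    linarith
  have h2 : z R' ^ 2 = 0 := by nlinarith [sq_nonneg (z R'), sq_nonneg (w R')]
  have h3 : z R' = 0 := pow_eq_zero_iff two_ne_zero |>.1 h2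
  simp only [hz] at h3
  linarith

/-! ### Back from the Fowler plane to the radial equation -/

/-- The derivative of `r^a F(log r)`, again of this form. -/
lemma powlog {F : ℝ → ℝ} {F' a r : ℝ} (hr : 0 < r) (hF : HasDerivAt F F' (log r)) :
    HasDerivAt (fun r => r ^ a * F (log r)) (r ^ (a - 1) * (a * F (log r) + F')) r := by
  have h1 := (hasDerivAt_rpow_const (x := r) (p := a) (Or.inl hr.ne'))
  have h2 := hF.comp r (hasDerivAt_log hr.ne')
  refine (h1.mul h2).congr_deriv ?_
  simp only [Function.comp]
  rw [rpow_sub_one hr.ne']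
  field_simp

lemma powlog_cont {F : ℝ → ℝ} (a : ℝ) (hF : Continuous F) :
    ContinuousOn (fun r => r ^ a * F (log r)) (Ioi 0) := by
  intro r hr
  have hr : 0 < r := hr
  exact ((continuousAt_rpow_const r a (Or.inl hr.ne')).mul
    (hF.continuousAt.comp (continuousAt_log hr.ne'))).continuousWithinAt

lemma contDiffOn_one {f f' : ℝ → ℝ} {s : Set ℝ} (hs : IsOpen s)
    (hf : ∀ r ∈ s, HasDerivAt f (f' r) r) (hc : ContinuousOn f' s) : ContDiffOn ℝ 1 f s := by
  have := (contDiffOn_succ_iff_deriv_of_isOpen (𝕜 := ℝ) (f := f) (n := 0) hs).2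
    ⟨fun r hr => (hf r hr).differentiableAt.differentiableWithinAt, by simp,
      contDiffOn_zero.2 (hc.congr fun r hr => (hf r hr).deriv)⟩
  simpa using this

lemma contDiffOn_two {f f' f'' : ℝ → ℝ} {s : Set ℝ} (hs : IsOpen s)
    (hf : ∀ r ∈ s, HasDerivAt f (f' r) r) (hf' : ∀ r ∈ s, HasDerivAt f' (f'' r) r)
    (hc : ContinuousOn f'' s) : ContDiffOn ℝ 2 f s := by
  have := (contDiffOn_succ_iff_deriv_of_isOpen (𝕜 := ℝ) (f := f) (n := 1) hs).2
    ⟨fun r hr => (hf r hr).differentiableAt.differentiableWithinAt, by simp,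
      (contDiffOn_one hs hf' hc).congr fun r hr => (hf r hr).deriv⟩
  rwa [one_add_one_eq_two] at this

lemma glue_deriv {f g : ℝ → ℝ} {f' a : ℝ} (hf : HasDerivAt f f' a) (hg : HasDerivAt g f' a)
    (h : f a = g a) : HasDerivAt (fun t => if t ≤ a then f t else g t) f' a := by
  have h1 : HasDerivWithinAt (fun t => if t ≤ a then f t else g t) f' (Iic a) a :=
    hf.hasDerivWithinAt.congr (fun t ht => if_pos ht) (if_pos le_rfl)
  have h2 : HasDerivWithinAt (fun t => if t ≤ a then f t else g t) f' (Ici a) a :=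
    hg.hasDerivWithinAt.congr (fun t ht => by
      rcases eq_or_lt_of_le (mem_Ici.1 ht) with e | e
      · rw [← e, if_pos le_rfl, h]
      · exact if_neg (not_le.2 e)) (by rw [if_pos le_rfl, h])
  have := h1.union h2
  rwa [Iic_union_Ici, hasDerivWithinAt_univ] at this

lemma glue_cont {f g : ℝ → ℝ} {a : ℝ} (hf : ∀ t ≤ a, ContinuousAt f t)
    (hg : ∀ t, a ≤ t → ContinuousAt g t) (h : f a = g a) :
    Continuous (fun t => if t ≤ a then f t else g t) := by
  rw [continuous_iff_continuousAt]
  intro t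
  rcases lt_trichotomy t a with ht | rfl | ht
  · refine (hf t ht.le).congr ?_
    filter_upwards [Iio_mem_nhds ht] with s hs
    rw [if_pos (le_of_lt hs)]
  · have h1 : ContinuousWithinAt (fun s => if s ≤ t then f s else g s) (Iic t) t :=
      (hf t le_rfl).continuousWithinAt.congr (fun s hs => if_pos hs) (if_pos le_rfl)
    have h2 : ContinuousWithinAt (fun s => if s ≤ t then f s else g s) (Ici t) t :=
      (hg t le_rfl).continuousWithinAt.congr (fun s hs => by
        rcases eq_or_lt_of_le (mem_Ici.1 hs) with e | e
        · rw [← e, if_pos le_rfl, h]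
        · exact if_neg (not_le.2 e)) (by rw [if_pos le_rfl, h])
    have := h1.union h2
    rwa [Iic_union_Ici, continuousWithinAt_univ] at this
  · refine (hg t ht.le).congr ?_
    filter_upwards [Ioi_mem_nhds ht] with s hs
    rw [if_neg (not_le.2 hs)]

/-- The Fowler transformation `u(r) = r^{-α} W(log r)`, with `α (q - 2) = 2`, turns solutions of
the autonomous systems into solutions of the radial equation. -/
lemma fowler_sol {n : ℕ} {q K₁ K₂ α β : ℝ} (hq : 2 < q) (hα : α * (q - 2) = 2)
    (hβ : β = (n:ℝ) - 2 - α) {W V : ℝ → ℝ} (hV : Continuous V) (hW : ∀ t, HasDerivAt W (V t) t)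
    (h1 : ∀ t < 0, HasDerivAt V (α * β * W t - (β - α) * V t - K₁ * gq q (W t)) t)
    (h2 : ∀ t > 0, HasDerivAt V (α * β * W t - (β - α) * V t - K₂ * gq q (W t)) t) :
    IsSolLr n q K₁ K₂ (fun r => r ^ (-α) * W (log r)) ∧
    ∀ r > 0, deriv (fun r => r ^ (-α) * W (log r)) r
      = r ^ (-α - 1) * (-α * W (log r) + V (log r)) := by
  have hWc : Continuous W := continuous_iff_continuousAt.2 fun t => (hW t).continuousAt
  have hgc : Continuous (gq q) := (gq_contDiff hq).continuous
  set u : ℝ → ℝ := fun r => r ^ (-α) * W (log r) with hu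
  have hu1 : ∀ r > 0, HasDerivAt u (r ^ (-α - 1) * (-α * W (log r) + V (log r))) r := fun r hr =>
    powlog hr (hW (log r))
  set F : ℝ → ℝ → ℝ := fun K t => (-α - 1) * (-α * W t + V t)
    + (-α * V t + (α * β * W t - (β - α) * V t - K * gq q (W t))) with hF
  have hFc : ∀ K, Continuous (F K) := fun K => by
    have := hgc.comp hWc
    simp only [hF]; fun_prop
  have hu2 : ∀ K, ∀ r > 0,
      HasDerivAt V (α * β * W (log r) - (β - α) * V (log r) - K * gq q (W (log r))) (log r) →
      HasDerivAt (fun r => r ^ (-α - 1) * (-α * W (log r) + V (log r)))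
        (r ^ (-α - 1 - 1) * F K (log r)) r := fun K r hr hd =>
    powlog (F := fun t => -α * W t + V t) hr (((hW (log r)).const_mul (-α)).add hd)
  have hlt : ∀ r ∈ Ioo (0:ℝ) 1, _ := fun r hr => hu2 K₁ r hr.1 (h1 _ (log_neg hr.1 hr.2))
  have hgt : ∀ r ∈ Ioi (1:ℝ), _ := fun r hr =>
    hu2 K₂ r (one_pos.trans hr) (h2 _ (log_pos hr))
  refine ⟨⟨contDiffOn_one isOpen_Ioi hu1 (powlog_cont _ ((hWc.const_mul (-α)).add hV)),
    contDiffOn_two isOpen_Ioo (fun r hr => hu1 r hr.1) hlt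
      ((powlog_cont _ (hFc K₁)).mono fun r hr => hr.1),
    contDiffOn_two isOpen_Ioi (fun r hr => hu1 r (one_pos.trans hr)) hgt
      ((powlog_cont _ (hFc K₂)).mono fun r hr => mem_Ioi.2 (one_pos.trans (mem_Ioi.1 hr))), fun r hr hr1 => ?_⟩,
    fun r hr => (hu1 r hr).deriv⟩
  have hr : 0 < r := hr
  have hdd : HasDerivAt (deriv u) (r ^ (-α - 1 - 1) * F (kc K₁ K₂ r) (log r)) r := by
    have he : deriv u =ᶠ[𝓝 r] fun r => r ^ (-α - 1) * (-α * W (log r) + V (log r)) := by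
      filter_upwards [Ioi_mem_nhds hr] with s hs using (hu1 s hs).deriv
    refine HasDerivAt.congr_of_eventuallyEq ?_ he
    rcases lt_or_gt_of_ne hr1 with h | h
    · rw [kc, if_pos h.le]; exact hlt r ⟨hr, h⟩
    · rw [kc, if_neg (not_le.2 h)]; exact hgt r h
  rw [hdd.deriv, (hu1 r hr).deriv]
  change _ + _ + kc K₁ K₂ r * _ * _ = 0
  have e1 : |u r| ^ (q - 2) = |W (log r)| ^ (q - 2) / r ^ 2 := by
    simp only [hu]
    rw [abs_mul, mul_rpow (abs_nonneg _) (abs_nonneg _), abs_of_pos (rpow_pos_of_pos hr _),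
      ← rpow_mul hr.le, neg_mul, hα, rpow_neg hr.le, rpow_two]
    field_simp
  rw [e1, rpow_sub_one hr.ne', rpow_sub_one hr.ne']
  simp only [hu, hF, gq]
  generalize kc K₁ K₂ r = K
  generalize |W (log r)| ^ (q - 2) = S
  generalize r ^ (-α) = ρ
  rw [hβ]
  field_simp
  ring

namespace Par

/-- Every parameter of the curve at the interface is realized by a regular solution, whose value
at the origin is `exp (ψ s)`. -/
theorem exists_reg (p : Par) {n : ℕ} {α β κ : ℝ} (hα : 0 < α) (hκ : 0 < κ)
    (hαq : α * (p.q - 2) = 2) (hβ : β = (n:ℝ) - 2 - α)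
    (hA : p.A = β - α) (hB : p.B = α * β) {h ψ : ℝ → ℝ}
    (hh : ∀ ξ, HasDerivAt h ((p.B + κ * exp ((p.q - 2) * ξ)) / h ξ - p.A - h ξ) ξ)
    (hαh : ∀ ξ, α < h ξ) (hup : ∃ C, ∀ ξ, h ξ < α + C * exp ((p.q - 2) * ξ))
    (hψ : ∀ ξ, HasDerivAt ψ (α / h ξ) ξ) (hψ0 : Tendsto (fun ξ => ξ - ψ ξ) atBot (𝓝 0))
    {s : ℝ} {x y : ℝ → ℝ} (hs : p.Sol x y) (hx : x 0 = exp s) (hy : y 0 = exp s * h s) :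
    ∃ u, IsRegSol n p.q (-κ) p.K (exp (ψ s)) u ∧ (∀ r ∈ Ioc (0:ℝ) 1, 0 < u r) ∧
      ∀ r ≥ 1, u r = r ^ (-α) * x (log r) ∧
        deriv u r = r ^ (-α - 1) * (-α * x (log r) + y (log r)) := by
  obtain ⟨ξ, hξ0, hξ, hψξ⟩ := exists_back p hα hκ hh hαh hup hψ s
  obtain ⟨C, hC⟩ := hup
  have hhp : ∀ ξ, 0 < h ξ := fun ξ => hα.trans (hαh ξ)
  have hσ : 0 < p.q - 2 := by linarith [p.hq]
  have hd1 : ∀ t ≤ 0, HasDerivAt (fun t => exp (ξ t)) (exp (ξ t) * h (ξ t)) t := fun t ht =>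
    (hξ t ht).exp
  have hd2 : ∀ t ≤ 0, HasDerivAt (fun t => exp (ξ t) * h (ξ t))
      (α * β * exp (ξ t) - (β - α) * (exp (ξ t) * h (ξ t)) - -κ * gq p.q (exp (ξ t))) t := by
    intro t ht
    have h1 := (hd1 t ht).mul ((hh (ξ t)).comp t (hξ t ht))
    refine h1.congr_deriv ?_
    rw [gq, abs_of_pos (exp_pos _), ← exp_mul, mul_comm (ξ t) (p.q - 2), ← hB, ← hA]
    have := (hhp (ξ t)).ne'
    simp only [Function.comp]
    field_simp
    ring
  set W : ℝ → ℝ := fun t => if t ≤ 0 then exp (ξ t) else x t with hW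
  set V : ℝ → ℝ := fun t => if t ≤ 0 then exp (ξ t) * h (ξ t) else y t with hV
  have hWn : ∀ t ≤ 0, W t = exp (ξ t) := fun t ht => if_pos ht
  have hVn : ∀ t ≤ 0, V t = exp (ξ t) * h (ξ t) := fun t ht => if_pos ht
  have hWp : ∀ t, 0 ≤ t → W t = x t := fun t ht => by
    rcases ht.eq_or_lt with e | e
    · rw [← e, hWn 0 le_rfl, hξ0, hx]
    · exact if_neg (not_le.2 e)
  have hVp : ∀ t, 0 ≤ t → V t = y t := fun t ht => by
    rcases ht.eq_or_lt with e | e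
    · rw [← e, hVn 0 le_rfl, hξ0, hy]
    · exact if_neg (not_le.2 e)
  have hVc : Continuous V := glue_cont (fun t ht => (hd2 t ht).continuousAt)
    (fun t ht => (hs.dy ht).continuousAt) (by simp only [hξ0]; exact hy.symm)
  have hWd : ∀ t, HasDerivAt W (V t) t := by
    intro t
    rcases lt_trichotomy t 0 with ht | rfl | ht
    · rw [hVn t ht.le]
      refine (hd1 t ht.le).congr_of_eventuallyEq ?_
      filter_upwards [Iio_mem_nhds ht] with r hr using hWn r (le_of_lt hr)
    · rw [hVp 0 le_rfl]
      refine glue_deriv ((hd1 0 le_rfl).congr_deriv ?_) (hs.dx le_rfl) ?_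
      · rw [hξ0, hy]
      · rw [hξ0, hx]
    · rw [hVp t ht.le]
      refine (hs.dx ht.le).congr_of_eventuallyEq ?_
      filter_upwards [Ioi_mem_nhds ht] with r hr using hWp r (le_of_lt hr)
  obtain ⟨hsol, hder⟩ := fowler_sol (n := n) (K₁ := -κ) (K₂ := p.K) p.hq hαq hβ hVc hWd
    (fun t ht => by
      rw [hWn t ht.le, hVn t ht.le]
      refine (hd2 t ht.le).congr_of_eventuallyEq ?_
      filter_upwards [Iio_mem_nhds ht] with r hr using hVn r (le_of_lt hr))
    (fun t ht => by
      rw [hWp t (le_of_lt ht), hVp t (le_of_lt ht), ← hA, ← hB]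
      refine (hs.dy (le_of_lt ht)).congr_of_eventuallyEq ?_
      filter_upwards [Ioi_mem_nhds ht] with r hr using hVp r (le_of_lt hr))
  -- the behaviour at the origin
  have hψm : StrictMono ψ := fun a b hab => smono_of_deriv convex_univ (fun t _ => hψ t)
    (fun t _ => div_pos hα (hhp t)) (mem_univ a) (mem_univ b) hab
  have hξlim : Tendsto ξ atBot atBot := by
    rw [tendsto_atBot]
    intro b
    filter_upwards [eventually_le_atBot 0, eventually_le_atBot ((ψ b - ψ s) / α)] with t h0 h1
    rw [← hψm.le_iff_le, hψξ t h0]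
    rw [le_div_iff₀ hα] at h1
    linarith
  have hdiff : Tendsto (fun t => ξ t - α * t) atBot (𝓝 (ψ s)) := by
    have := (hψ0.comp hξlim).add_const (ψ s)
    rw [zero_add] at this
    refine this.congr' ?_
    filter_upwards [eventually_le_atBot 0] with t h0
    simp only [Function.comp]
    rw [hψξ t h0]; ring
  have hlog : Tendsto log (𝓝[>] 0) atBot := tendsto_log_nhdsGT_zero
  refine ⟨fun r => r ^ (-α) * W (log r), ⟨hsol, ?_, ?_⟩, fun r hr => ?_, fun r hr => ⟨?_, ?_⟩⟩
  · have := ((continuous_exp.tendsto _).comp hdiff).comp hlog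
    refine this.congr' ?_
    filter_upwards [Ioo_mem_nhdsGT one_pos] with r hr
    simp only [Function.comp]
    rw [hWn _ (log_neg hr.1 hr.2).le, rpow_def_of_pos hr.1, ← exp_add]
    congr 1; ring
  · have h0 : Tendsto (fun t => C * exp t * exp ((1 + (p.q - 2)) * (ξ t - α * t))) atBot (𝓝 0) := by
      have := (tendsto_exp_atBot.const_mul C).mul
        ((continuous_exp.tendsto _).comp (hdiff.const_mul (1 + (p.q - 2))))
      simpa [Function.comp_def] using this
    have h1 := h0.comp hlog
    refine squeeze_zero' ?_ ?_ h1
    · filter_upwards [Ioo_mem_nhdsGT one_pos] with r hr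
      rw [hder r hr.1, hWn _ (log_neg hr.1 hr.2).le, hVn _ (log_neg hr.1 hr.2).le]
      have e1 := hαh (ξ (log r))
      have e2 := rpow_pos_of_pos hr.1 (-α - 1)
      have e3 : -α * exp (ξ (log r)) + exp (ξ (log r)) * h (ξ (log r))
        = exp (ξ (log r)) * (h (ξ (log r)) - α) := by ring
      rw [e3]
      have := sub_pos.2 e1
      positivity
    · filter_upwards [Ioo_mem_nhdsGT one_pos] with r hr
      rw [hder r hr.1, hWn _ (log_neg hr.1 hr.2).le, hVn _ (log_neg hr.1 hr.2).le]
      simp only [Function.comp]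
      rw [rpow_def_of_pos hr.1]
      generalize log r = t
      have e3 : -α * exp (ξ t) + exp (ξ t) * h (ξ t) = exp (ξ t) * (h (ξ t) - α) := by ring
      have e4 : h (ξ t) - α ≤ C * exp ((p.q - 2) * ξ t) := by linarith [hC (ξ t)]
      rw [e3]
      calc exp (t * (-α - 1)) * (exp (ξ t) * (h (ξ t) - α))
          ≤ exp (t * (-α - 1)) * (exp (ξ t) * (C * exp ((p.q - 2) * ξ t))) := by gcongr
        _ = C * (exp (t * (-α - 1)) * exp (ξ t) * exp ((p.q - 2) * ξ t)) := by ring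
        _ = C * (exp t * exp ((1 + (p.q - 2)) * (ξ t - α * t))) := by
          rw [← exp_add, ← exp_add, ← exp_add]
          congr 2
          linear_combination t * hαq
        _ = _ := by ring
  · dsimp only
    have := rpow_pos_of_pos hr.1 (-α)
    rw [hWn _ (log_nonpos hr.1.le hr.2)]
    positivity
  · dsimp only
    rw [hWp _ (log_nonneg hr)]
  · rw [hder r (by linarith [hr.le]), hWp _ (log_nonneg hr), hVp _ (log_nonneg hr)]

end Par

/-! ### Decay rates, zeros and the final assembly -/

lemma fowler_rpow {n : ℕ} {α β r x : ℝ} (hβ : β = (n:ℝ) - 2 - α) (hr : 0 < r) :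
    r ^ (-α) * x * r ^ ((n:ℝ) - 2) = x * exp (β * log r) := by
  rw [mul_comm β, ← rpow_def_of_pos hr, hβ, mul_right_comm, ← rpow_add hr, mul_comm]
  congr 2; ring

/-- The relation between a function `u` on `(0, ∞)` and an orbit `(x, y)` of the Fowler system on
`[0, ∞)`: `u` is positive on `(0, 1]`, and for `r ≥ 1` both `u` and `u'` are read off from `x` and
`y` at time `log r`. -/
def Fow (α : ℝ) (u x y : ℝ → ℝ) : Prop :=
  (∀ r ∈ Ioc (0:ℝ) 1, 0 < u r) ∧ ∀ r ≥ 1, u r = r ^ (-α) * x (log r) ∧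
    deriv u r = r ^ (-α - 1) * (-α * x (log r) + y (log r))

namespace Fow

variable {α : ℝ} {u x y : ℝ → ℝ}

lemma congr (h : Fow α u x y) {v : ℝ → ℝ} (hv : ∀ r > 0, v r = u r) : Fow α v x y := by
  refine ⟨fun r hr => by rw [hv r hr.1]; exact h.1 r hr, fun r hr => ?_⟩
  have hr0 : 0 < r := by linarith [hr.le]
  have : v =ᶠ[𝓝 r] u := by filter_upwards [Ioi_mem_nhds hr0] with s hs using hv s hs
  rw [hv r hr0, this.deriv_eq]
  exact h.2 r hr

lemma pos (h : Fow α u x y) (hx : ∀ t > 0, 0 < x t) : ∀ r ∈ Ioi (0:ℝ), 0 < u r := by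
  intro r hr
  rcases le_or_gt r 1 with h1 | h1
  · exact h.1 r ⟨hr, h1⟩
  · rw [(h.2 r h1.le).1]
    exact mul_pos (rpow_pos_of_pos hr _) (hx _ (log_pos h1))

lemma zeros (h : Fow α u x y) {p : Par} (hs : p.Sol x y) (h0 : x 0 ≠ 0) {k : ℕ}
    (hk : Par.Cnt k x) : ExactZeros u k := by
  obtain ⟨Z, hZ, hZx⟩ := hk
  refine ⟨Z.image exp, ?_, ?_, ?_⟩
  · rw [Finset.card_image_of_injective _ exp_injective, hZ]
  · intro r hr
    obtain ⟨t, ht, rfl⟩ := Finset.mem_image.1 hr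
    obtain ⟨ht0, hxt⟩ := (hZx t).1 ht
    obtain ⟨e1, e2⟩ := h.2 (exp t) (one_le_exp ht0.le)
    rw [log_exp] at e1 e2
    refine ⟨exp_pos t, by rw [e1, hxt, mul_zero], ?_⟩
    rw [e2, hxt, mul_zero, zero_add]
    exact mul_ne_zero (rpow_pos_of_pos (exp_pos t) _).ne' (hs.ne_zero (Or.inl h0) ht0.le hxt)
  · intro r hr hur
    rcases le_or_gt r 1 with h1 | h1
    · exact absurd hur (h.1 r ⟨hr, h1⟩).ne'
    · rw [(h.2 r h1.le).1] at hur
      have := (mul_eq_zero.1 hur).resolve_left (rpow_pos_of_pos hr _).ne'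
      exact Finset.mem_image.2 ⟨log r, (hZx _).2 ⟨log_pos h1, this⟩, exp_log hr⟩

lemma fast (h : Fow α u x y) {n : ℕ} {β : ℝ} (hβ : β = (n:ℝ) - 2 - α) (hx : Par.FastEnd β x) :
    ∃ L : ℝ, L ≠ 0 ∧ Tendsto (fun r => u r * r ^ ((n:ℝ) - 2)) atTop (𝓝 L) := by
  obtain ⟨L, hL, hlim⟩ := hx
  refine ⟨L, hL, (hlim.comp tendsto_log_atTop).congr' ?_⟩
  filter_upwards [eventually_ge_atTop 1] with r hr
  rw [(h.2 r hr).1, fowler_rpow hβ (by linarith)]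
  rfl

lemma slow (h : Fow α u x y) {n : ℕ} {β : ℝ} (hβ : β = (n:ℝ) - 2 - α) (hβ0 : 0 < β)
    (hx : Par.SlowEnd x) : Tendsto (fun r => |u r| * r ^ ((n:ℝ) - 2)) atTop atTop := by
  obtain ⟨T, c, C, hc, hb⟩ := hx
  have h1 : Tendsto (fun r => c * exp (β * log r)) atTop atTop :=
    (tendsto_exp_atTop.comp (tendsto_log_atTop.const_mul_atTop hβ0)).const_mul_atTop hc
  refine tendsto_atTop_mono' _ ?_ h1
  filter_upwards [eventually_ge_atTop 1, tendsto_log_atTop.eventually_ge_atTop T] with r hr hT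
  have hr0 : 0 < r := by linarith
  rw [(h.2 r hr).1, abs_mul, abs_of_pos (rpow_pos_of_pos hr0 _), fowler_rpow hβ hr0]
  exact mul_le_mul_of_nonneg_right (hb _ hT).1 (exp_pos _).le

lemma tendsto_zero (h : Fow α u x y) (hα : 0 < α) (hx : Par.SlowEnd x) :
    Tendsto u atTop (𝓝 0) := by
  obtain ⟨T, c, C, hc, hb⟩ := hx
  have h1 : Tendsto (fun r : ℝ => r ^ (-α) * C) atTop (𝓝 0) := by
    simpa using (tendsto_rpow_neg_atTop hα).mul_const C
  refine squeeze_zero_norm' ?_ h1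
  filter_upwards [eventually_ge_atTop 1, tendsto_log_atTop.eventually_ge_atTop T] with r hr hT
  have hr0 : 0 < r := by linarith
  rw [(h.2 r hr).1, norm_eq_abs, abs_mul, abs_of_pos (rpow_pos_of_pos hr0 _)]
  exact mul_le_mul_of_nonneg_left (hb _ hT).2 (rpow_pos_of_pos hr0 _).le

end Fow

theorem stmt0 (n : ℕ) (hn : 2 < n) (q K₁ K₂ : ℝ)
    (hq : 2 * (n:ℝ) / ((n:ℝ) - 2) < q) (hK₁ : K₁ < 0) (hK₂ : 0 < K₂) :
    ∃ D : ℕ → ℝ, StrictMono D ∧ (∀ k, 0 < D k) ∧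
      (∃ Dinf : ℝ, Tendsto D atTop (𝓝 Dinf)) ∧
      -- (i) ground state with fast decay at D₀
      ((∃ u, IsRegSol n q K₁ K₂ (D 0) u) ∧
        ∀ u, IsRegSol n q K₁ K₂ (D 0) u →
          (∀ r ∈ Ioi (0:ℝ), 0 < u r) ∧
          ∃ L ∈ Ioi (0:ℝ), Tendsto (fun r => u r * r ^ ((n:ℝ) - 2)) atTop (𝓝 L)) ∧
      -- (ii) regular-fast decay with exactly k zeros at D_k
      (∀ k : ℕ, 1 ≤ k →
        (∃ u, IsRegSol n q K₁ K₂ (D k) u) ∧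
        ∀ u, IsRegSol n q K₁ K₂ (D k) u →
          ExactZeros u k ∧
          ∃ L : ℝ, L ≠ 0 ∧ Tendsto (fun r => u r * r ^ ((n:ℝ) - 2)) atTop (𝓝 L)) ∧
      -- (iii) ground states with slow decay for 0 < d < D₀
      (∀ d ∈ Ioo (0:ℝ) (D 0),
        (∃ u, IsRegSol n q K₁ K₂ d u) ∧
        ∀ u, IsRegSol n q K₁ K₂ d u →
          (∀ r ∈ Ioi (0:ℝ), 0 < u r) ∧ Tendsto u atTop (𝓝 0) ∧
          Tendsto (fun r => u r * r ^ ((n:ℝ) - 2)) atTop atTop) ∧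
      -- (iv) regular-slow decay with exactly k zeros for D_{k-1} < d < D_k
      (∀ k : ℕ, ∀ d ∈ Ioo (D k) (D (k+1)),
        (∃ u, IsRegSol n q K₁ K₂ d u) ∧
        ∀ u, IsRegSol n q K₁ K₂ d u →
          ExactZeros u (k+1) ∧
          Tendsto (fun r => |u r| * r ^ ((n:ℝ) - 2)) atTop atTop) := by
  have hn2 : (0:ℝ) < (n:ℝ) - 2 := by
    have : (2:ℝ) < n := by exact_mod_cast hn
    linarith
  have hqn : 2 * (n:ℝ) < q * ((n:ℝ) - 2) := (div_lt_iff₀ hn2).1 hq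
  have hq2 : 2 < q := by nlinarith
  have hσ : 0 < q - 2 := by linarith
  set α : ℝ := 2 / (q - 2) with hαdef
  have hα : 0 < α := by positivity
  have hαq : α * (q - 2) = 2 := div_mul_cancel₀ _ hσ.ne'
  set β : ℝ := (n:ℝ) - 2 - α with hβ
  -- the exponent is supercritical exactly when the friction coefficient `β - α` is positive
  have hA : 0 < β - α := by
    have : α < ((n:ℝ) - 2) / 2 := by
      rw [hαdef, div_lt_div_iff₀ hσ two_pos]; linarith
    rw [hβ]; linarith
  have hβ0 : 0 < β := by linarith
  let p : Par := ⟨β - α, α * β, K₂, q, hA, mul_pos hα hβ0, hK₂, hq2⟩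
  have hκ : 0 < -K₁ := by linarith
  obtain ⟨h, ψ, hh, hαh, hup, hψ, hψ0, M, hM⟩ :=
    p.exists_slope (α := α) (β := β) hα hκ rfl rfl
  obtain ⟨c, hc⟩ := p.exists_gamma (α := α) (β := β) hα hκ rfl rfl hh hαh hup
  obtain ⟨s, hsm, hs0, hsk, hsl, hsr⟩ := c.ladder hα hβ0 rfl rfl
  have hψm : StrictMono ψ := fun a b hab => smono_of_deriv convex_univ (fun t _ => hψ t)
    (fun t _ => div_pos hα (hα.trans (hαh t))) (mem_univ a) (mem_univ b) hab
  have hψc : Continuous ψ := continuous_iff_continuousAt.2 fun t => (hψ t).continuousAt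
  have key : ∀ σ, (∃ u, IsRegSol n q K₁ K₂ (exp (ψ σ)) u) ∧
      ∀ u, IsRegSol n q K₁ K₂ (exp (ψ σ)) u → Fow α u (c.X σ) (c.Y σ) := by
    intro σ
    obtain ⟨v, hv, hv1, hv2⟩ := p.exists_reg (n := n) (α := α) (β := β) hα hκ hαq hβ rfl rfl
      hh hαh hup hψ hψ0 (c.sol σ) (hc σ).1 (hc σ).2
    rw [neg_neg] at hv
    exact ⟨⟨v, hv⟩, fun u hu => Fow.congr ⟨hv1, hv2⟩ (regSol_unique hn hq2 hu hv)⟩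
  have hx0 : ∀ σ, c.X σ 0 ≠ 0 := fun σ => by rw [(hc σ).1]; exact (exp_pos σ).ne'
  have hD : StrictMono fun k => exp (ψ (s k)) := fun a b hab => exp_lt_exp.2 (hψm (hsm hab))
  refine ⟨fun k => exp (ψ (s k)), hD, fun k => exp_pos _, ?_, ⟨(key _).1, fun u hu => ?_⟩,
    fun k _ => ⟨(key _).1, fun u hu => ?_⟩, fun d hd => ?_, fun k d hd => ?_⟩
  · exact ⟨_, tendsto_atTop_ciSup hD.monotone
      ⟨exp M, by rintro _ ⟨k, rfl⟩; exact exp_le_exp.2 (hM _)⟩⟩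
  · have hf := (key _).2 u hu
    have hpos := hf.pos hs0
    obtain ⟨L, hL, hlim⟩ := hf.fast hβ (hsk 0).2
    refine ⟨hpos, L, lt_of_le_of_ne (ge_of_tendsto hlim ?_) hL.symm, hlim⟩
    filter_upwards [eventually_gt_atTop 0] with r hr
    exact mul_nonneg (hpos r hr).le (rpow_pos_of_pos hr _).le
  · have hf := (key _).2 u hu
    exact ⟨hf.zeros (c.sol _) (hx0 _) (hsk k).1, hf.fast hβ (hsk k).2⟩
  · -- `ψ` tends to `-∞` at `-∞`, so every small height is attained to the left of `s 0`
    have hlim : Tendsto ψ atBot atBot := by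
      have h1 : ∀ᶠ ξ in atBot, -1 < ξ - ψ ξ := hψ0.eventually (lt_mem_nhds (by norm_num))
      refine tendsto_atBot_mono' _ ?_ (tendsto_atBot_add_const_right _ 1 tendsto_id)
      filter_upwards [h1] with ξ hξ
      simp only [id]; linarith
    have hlog : log d < ψ (s 0) := (log_lt_iff_lt_exp hd.1).2 hd.2
    obtain ⟨a, ha1, ha2⟩ := ((hlim.eventually_lt_atBot (log d)).and
      (eventually_le_atBot (s 0))).exists
    obtain ⟨σ, hσ1, hσ2⟩ := intermediate_value_Ioo ha2 hψc.continuousOn ⟨ha1, hlog⟩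
    have hdσ : d = exp (ψ σ) := by rw [hσ2, exp_log hd.1]
    subst hdσ
    refine ⟨(key σ).1, fun u hu => ?_⟩
    have hf := (key σ).2 u hu
    obtain ⟨hp, hsl'⟩ := hsl σ hσ1.2
    have hpos := hf.pos hp
    refine ⟨hpos, hf.tendsto_zero hα hsl', (hf.slow hβ hβ0 hsl').congr' ?_⟩
    filter_upwards [eventually_gt_atTop 0] with r hr
    rw [abs_of_pos (hpos r hr)]
  · have hd0 : 0 < d := (exp_pos _).trans hd.1
    obtain ⟨σ, hσ1, hσ2⟩ := intermediate_value_Ioo (hsm k.lt_succ_self).le hψc.continuousOn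
      ⟨(lt_log_iff_exp_lt hd0).2 hd.1, (log_lt_iff_lt_exp hd0).2 hd.2⟩
    have hdσ : d = exp (ψ σ) := by rw [hσ2, exp_log hd0]
    subst hdσ
    refine ⟨(key σ).1, fun u hu => ?_⟩
    have hf := (key σ).2 u hu
    obtain ⟨h1, h2⟩ := hsr k σ hσ1
    exact ⟨hf.zeros (c.sol σ) (hx0 σ) h1, hf.slow hβ hβ0 h2⟩

end
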